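/- arXiv:2406.19350 — 3 statements merged into one kernel-verified Lean document; each statement's English description precedes it below -/
import Mathlib

section
/- Let U : ℝ² → ℝ² be a continuously differentiable vector field such that the divergence ∂U₁/∂x + ∂U₂/∂y is nonzero at every point of ℝ². Let x : ℝ → ℝ² be a solution of the autonomous system x'(t) = U(x(t)) whose forward orbit {x(t) : t ≥ 0} is bounded. Then there exists a point p ∈ ℝ² with U(p) = 0 such that x(t) → p as t → ∞ (i.e., the ω-limit set of the orbit is a single equilibrium). -/
open MeasureTheory Set Filter Topology

set_option linter.unusedSectionVars false

namespace PBR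

abbrev E := Fin 2 → ℝ

def dt (a b : E) : ℝ := a 0 * b 1 - a 1 * b 0

noncomputable def e0 : E := Pi.single 0 1
noncomputable def e1 : E := Pi.single 1 1

noncomputable def dv (V : E → E) (p : E) : ℝ :=
  fderiv ℝ V p (Pi.single 0 1) 0 + fderiv ℝ V p (Pi.single 1 1) 1

lemma decomp (a : E) : a = a 0 • e0 + a 1 • e1 := by
  ext i; fin_cases i <;> simp [e0, e1]

lemma abs_dt_le (a b : E) : |dt a b| ≤ 2 * ‖a‖ * ‖b‖ := by
  have h1 := norm_le_pi_norm a 0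
  have h2 := norm_le_pi_norm a 1
  have h3 := norm_le_pi_norm b 0
  have h4 := norm_le_pi_norm b 1
  simp only [Real.norm_eq_abs] at *
  unfold dt
  calc |a 0 * b 1 - a 1 * b 0| ≤ |a 0 * b 1| + |a 1 * b 0| := abs_sub _ _
    _ = |a 0| * |b 1| + |a 1| * |b 0| := by rw [abs_mul, abs_mul]
    _ ≤ ‖a‖ * ‖b‖ + ‖a‖ * ‖b‖ := by gcongr
    _ = _ := by ring

lemma trace_id (A : E →L[ℝ] E) (a b : E) :
    dt (A a) b + dt a (A b) = (A (Pi.single 0 1) 0 + A (Pi.single 1 1) 1) * dt a b := by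
  have ha : A a = a 0 • A e0 + a 1 • A e1 := by
    conv_lhs => rw [decomp a]
    simp
  have hb : A b = b 0 • A e0 + b 1 • A e1 := by
    conv_lhs => rw [decomp b]
    simp
  rw [ha, hb]
  change _ = (A e0 0 + A e1 1) * _
  simp only [dt, Pi.add_apply, Pi.smul_apply, smul_eq_mul]
  ring

lemma continuous_dt {X : Type*} [TopologicalSpace X] {f g : X → E} (hf : Continuous f)
    (hg : Continuous g) : Continuous fun x => dt (f x) (g x) := by
  unfold dt; fun_prop

lemma continuous_dv {V : E → E} (hV : ContDiff ℝ 1 V) : Continuous (dv V) := by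
  have := hV.continuous_fderiv one_ne_zero
  unfold dv; fun_prop

lemma hasDerivAt_dt {f g : ℝ → E} {f' g' : E} {t : ℝ} (hf : HasDerivAt f f' t)
    (hg : HasDerivAt g g' t) :
    HasDerivAt (fun s => dt (f s) (g s)) (dt f' (g t) + dt (f t) g') t := by
  rw [hasDerivAt_pi] at hf hg
  unfold dt
  refine (((hf 0).mul (hg 1)).sub ((hf 1).mul (hg 0))).congr_deriv ?_
  ring

lemma stokes (V : E → E) (hV : ContDiff ℝ 1 V) (x x' : ℝ → E)
    (hx : ∀ t, HasDerivAt x (x' t) t) (hx' : Continuous x') (T : ℝ) :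
    ∫ t in (0:ℝ)..T, ∫ r in (0:ℝ)..1, dv V (r • x t) * (r * dt (x t) (x' t))
     = (∫ t in (0:ℝ)..T, dt (V (x t)) (x' t)) +
       ∫ r in (0:ℝ)..1, (dt (x T) (V (r • x T)) - dt (x 0) (V (r • x 0))) := by
  have hxc : Continuous x := continuous_iff_continuousAt.2 fun t => (hx t).continuousAt
  have hVc := hV.continuous
  have hDc := hV.continuous_fderiv one_ne_zero
  have hVd : ∀ p, HasFDerivAt V (fderiv ℝ V p) p := fun p =>
    (hV.differentiable one_ne_zero p).hasFDerivAt
  -- G1, G2 and their derivatives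
  let P : ℝ → ℝ → ℝ := fun t r => dt (V (r • x t)) (x' t) + r * dt (fderiv ℝ V (r • x t) (x t)) (x' t)
  let Q : ℝ → ℝ → ℝ := fun t r => dt (x' t) (V (r • x t)) + dt (x t) (fderiv ℝ V (r • x t) (r • x' t))
  have hPc : Continuous (Function.uncurry P) := by
    simp only [P, Function.uncurry_def, dt]; fun_prop
  have hQc : Continuous (Function.uncurry Q) := by
    simp only [Q, Function.uncurry_def, dt]; fun_prop
  have hP : ∀ t r, HasDerivAt (fun r => r * dt (V (r • x t)) (x' t)) (P t r) r := by
    intro t r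
    have h1 : HasDerivAt (fun r : ℝ => r • x t) ((1:ℝ) • x t) r := (hasDerivAt_id r).smul_const _
    have h2 := (hVd (r • x t)).comp_hasDerivAt r h1
    have h3 := hasDerivAt_dt h2 (hasDerivAt_const r (x' t))
    refine ((hasDerivAt_id r).mul h3).congr_deriv ?_
    simp [P, dt]
  have hQ : ∀ t r, HasDerivAt (fun t => dt (x t) (V (r • x t))) (Q t r) t := by
    intro t r
    have h1 : HasDerivAt (fun t : ℝ => r • x t) (r • x' t) t := (hx t).const_smul r
    have h2 := (hVd (r • x t)).comp_hasDerivAt t h1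
    exact hasDerivAt_dt (hx t) h2
  have hsum : ∀ t r, dv V (r • x t) * (r * dt (x t) (x' t)) = P t r + Q t r := by
    intro t r
    have := trace_id (fderiv ℝ V (r • x t)) (x t) (x' t)
    have h2 : dv V (r • x t) * (r * dt (x t) (x' t)) = r * (dv V (r • x t) * dt (x t) (x' t)) := by ring
    rw [h2, dv, ← this]
    simp only [P, Q, map_smul, dt, Pi.smul_apply, smul_eq_mul]
    ring
  have hPt : ∀ t, Continuous (P t) := fun t => hPc.comp (by fun_prop : Continuous fun r => (t, r))
  have hQt : ∀ t, Continuous (Q t) := fun t => hQc.comp (by fun_prop : Continuous fun r => (t, r))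
  have hQr : ∀ r, Continuous (fun t => Q t r) :=
    fun r => hQc.comp (by fun_prop : Continuous fun t => (t, r))
  have step1 : ∀ t, ∫ r in (0:ℝ)..1, dv V (r • x t) * (r * dt (x t) (x' t))
      = dt (V (x t)) (x' t) + ∫ r in (0:ℝ)..1, Q t r := by
    intro t
    simp_rw [hsum]
    rw [intervalIntegral.integral_add ((hPt t).intervalIntegrable _ _)
      ((hQt t).intervalIntegrable _ _),
      intervalIntegral.integral_eq_sub_of_hasDerivAt (fun r _ => hP t r)
        ((hPt t).intervalIntegrable _ _)]
    simp
  simp_rw [step1]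
  have hIQ : Continuous fun t => ∫ r in (0:ℝ)..1, Q t r :=
    intervalIntegral.continuous_parametric_intervalIntegral_of_continuous' hQc 0 1
  rw [intervalIntegral.integral_add
    ((show Continuous fun t => dt (V (x t)) (x' t) from
      continuous_dt (hVc.comp hxc) hx').intervalIntegrable _ _) (hIQ.intervalIntegrable _ _)]
  congr 1
  rw [intervalIntegral_intervalIntegral_swap]
  · apply intervalIntegral.integral_congr
    intro r _
    simp only
    rw [intervalIntegral.integral_eq_sub_of_hasDerivAt (fun t _ => hQ t r)
        ((hQr r).intervalIntegrable _ _)]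
  · exact (hQc.continuousOn.integrableOn_compact
      (isCompact_uIcc.prod isCompact_uIcc)).mono_set (prod_mono uIoc_subset_uIcc uIoc_subset_uIcc)

section param

variable {Ω : Type*} [TopologicalSpace Ω] [SecondCountableTopology Ω] [T2Space Ω]
  [MeasurableSpace Ω] [BorelSpace Ω]
  (ν : Measure Ω) [IsFiniteMeasureOnCompacts ν] [SFinite ν] {K : Set Ω}

structure Moll (ρ : E → ℝ) (ε : ℝ) : Prop where
  smooth : ContDiff ℝ 1 ρ
  cs : HasCompactSupport ρ
  nonneg : ∀ z, 0 ≤ ρ z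
  int : ∫ z, ρ z = 1
  supp : ∀ z, ρ z ≠ 0 → ‖z‖ ≤ ε

lemma exists_moll {ε : ℝ} (hε : 0 < ε) : ∃ ρ, Moll ρ ε := by
  let f : ContDiffBump (0 : E) := ⟨ε / 2, ε, by linarith, by linarith⟩
  refine ⟨f.normed volume, f.contDiff_normed (n := 1), f.hasCompactSupport_normed, f.nonneg_normed,
    f.integral_normed, ?_⟩
  intro z hz
  have : z ∈ Function.support (f.normed volume) := hz
  rw [f.support_normed_eq] at this
  simpa using (mem_ball_zero_iff.1 this).le

lemma W_deriv (hK : IsCompact K) {ρ : E → ℝ} {ε : ℝ} (hρ : Moll ρ ε) {y : Ω → E} (hy : Continuous y) {k : Ω → ℝ}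
    (hk : Continuous k) (z : E) :
    HasFDerivAt (fun z => ∫ ω in K, ρ (z - y ω) * k ω ∂ν)
      (∫ ω in K, k ω • fderiv ℝ ρ (z - y ω) ∂ν) z := by
  have hρc := hρ.smooth.continuous
  have hDc := hρ.smooth.continuous_fderiv one_ne_zero
  obtain ⟨C, hC⟩ := (hρ.cs.fderiv ℝ).exists_bound_of_continuous hDc
  refine hasFDerivAt_integral_of_dominated_of_fderiv_le (s := univ) (bound := fun ω => |k ω| * C)
    (F := fun z ω => ρ (z - y ω) * k ω) (F' := fun z ω => k ω • fderiv ℝ ρ (z - y ω))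
    univ_mem ?_ ?_ ?_ ?_ ?_ ?_
  · refine Eventually.of_forall fun z => ?_
    exact Continuous.aestronglyMeasurable (by fun_prop)
  · exact Continuous.continuousOn (by fun_prop) |>.integrableOn_compact hK
  · exact Continuous.aestronglyMeasurable (by fun_prop)
  · refine Eventually.of_forall fun ω z _ => ?_
    rw [norm_smul, Real.norm_eq_abs]
    gcongr
    exact hC _
  · exact Continuous.continuousOn (by fun_prop) |>.integrableOn_compact hK
  · refine Eventually.of_forall fun ω z _ => ?_
    have h1 : HasFDerivAt (fun z => z - y ω) (ContinuousLinearMap.id ℝ E) z :=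
      (hasFDerivAt_id z).sub_const _
    have h2 := ((hρ.smooth.differentiable one_ne_zero (z - y ω)).hasFDerivAt).comp z h1
    have h3 := h2.mul_const (k ω)
    simpa using h3

lemma W_contDiff (hK : IsCompact K) {ρ : E → ℝ} {ε : ℝ} (hρ : Moll ρ ε) {y : Ω → E} (hy : Continuous y) {k : Ω → ℝ}
    (hk : Continuous k) :
    ContDiff ℝ 1 (fun z => ∫ ω in K, ρ (z - y ω) * k ω ∂ν) := by
  have hDc := hρ.smooth.continuous_fderiv one_ne_zero
  obtain ⟨C, hC⟩ := (hρ.cs.fderiv ℝ).exists_bound_of_continuous hDc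
  rw [contDiff_one_iff_fderiv]
  refine ⟨fun z => (W_deriv ν hK hρ hy hk z).differentiableAt, ?_⟩
  have : fderiv ℝ (fun z => ∫ ω in K, ρ (z - y ω) * k ω ∂ν) =
    fun z => ∫ ω in K, k ω • fderiv ℝ ρ (z - y ω) ∂ν := by
    ext1 z; exact (W_deriv ν hK hρ hy hk z).fderiv
  rw [this]
  refine continuous_of_dominated (bound := fun ω => |k ω| * C) ?_ ?_ ?_ ?_
  · exact fun z => Continuous.aestronglyMeasurable (by fun_prop)
  · refine fun z => Eventually.of_forall fun ω => ?_
    rw [norm_smul, Real.norm_eq_abs]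
    gcongr
    exact hC _
  · exact Continuous.continuousOn (by fun_prop) |>.integrableOn_compact hK
  · refine Eventually.of_forall fun ω => ?_
    fun_prop

lemma W_deriv_apply (hK : IsCompact K) {ρ : E → ℝ} {ε : ℝ} (hρ : Moll ρ ε) {y : Ω → E} (hy : Continuous y) {k : Ω → ℝ}
    (hk : Continuous k) (z a : E) :
    fderiv ℝ (fun z => ∫ ω in K, ρ (z - y ω) * k ω ∂ν) z a =
      ∫ ω in K, k ω * fderiv ℝ ρ (z - y ω) a ∂ν := by
  have hDc := hρ.smooth.continuous_fderiv one_ne_zero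
  rw [(W_deriv ν hK hρ hy hk z).fderiv, ContinuousLinearMap.integral_apply]
  · simp
  · exact Continuous.continuousOn (by fun_prop) |>.integrableOn_compact hK

lemma W_supp {ρ : E → ℝ} {ε R : ℝ} (hρ : Moll ρ ε) {y : Ω → E}
    {k : Ω → ℝ} (hyR : ∀ ω ∈ K, ‖y ω‖ ≤ R) {z : E} (hz : R + ε < ‖z‖) :
    ∫ ω in K, ρ (z - y ω) * k ω ∂ν = 0 := by
  apply setIntegral_eq_zero_of_forall_eq_zero
  intro ω hω
  have : ρ (z - y ω) = 0 := by
    by_contra h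
    have h1 := hρ.supp _ h
    have h2 := hyR ω hω
    have h3 := norm_sub_norm_le z (y ω)
    linarith
  rw [this, zero_mul]

lemma W_fubini (hK : IsCompact K) {ρ : E → ℝ} {ε : ℝ} (hρ : Moll ρ ε) {y : Ω → E} (hy : Continuous y) {k : Ω → ℝ}
    (hk : Continuous k) {f : E → ℝ} (hf : Continuous f) :
    ∫ z, (∫ ω in K, ρ (z - y ω) * k ω ∂ν) * f z = 
      ∫ ω in K, k ω * (∫ z, ρ (z - y ω) * f z) ∂ν := by
  have hρc := hρ.smooth.continuous
  simp_rw [← integral_mul_const, ← integral_const_mul]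
  obtain ⟨R, hR⟩ := (hK.image hy).isBounded.exists_norm_le
  rw [integral_integral_swap]
  · refine integral_congr_ae (Eventually.of_forall fun ω => ?_)
    refine integral_congr_ae (Eventually.of_forall fun z => ?_)
    simp only; ring
  · have hc : Continuous (Function.uncurry fun z ω => ρ (z - y ω) * k ω * f z) := by
      simp only [Function.uncurry_def]; fun_prop
    have h1 : IntegrableOn (Function.uncurry fun z ω => ρ (z - y ω) * k ω * f z)
        (Metric.closedBall 0 (R + ε) ×ˢ K) (volume.prod ν) :=
      hc.continuousOn.integrableOn_compact ((isCompact_closedBall _ _).prod hK)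
    have h2 : IntegrableOn (Function.uncurry fun z ω => ρ (z - y ω) * k ω * f z)
        (univ ×ˢ K) (volume.prod ν) := by
      refine h1.of_forall_sdiff_eq_zero (MeasurableSet.univ.prod hK.measurableSet) ?_
      rintro ⟨z, ω⟩ ⟨⟨_, h3⟩, h4⟩
      have h5 : ρ (z - y ω) = 0 := by
        by_contra h
        apply h4
        refine ⟨?_, h3⟩
        have h1 := hρ.supp _ h
        have h2 := hR (y ω) (mem_image_of_mem _ h3)
        have h3 := norm_sub_norm_le z (y ω)
        simp only [mem_closedBall_zero_iff]
        linarith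
      simp [h5]
    rw [IntegrableOn, ← Measure.prod_restrict, Measure.restrict_univ] at h2
    exact h2

lemma W_mass (hK : IsCompact K) {ρ : E → ℝ} {ε : ℝ} (hρ : Moll ρ ε) {y : Ω → E} (hy : Continuous y) :
    ∫ z, (∫ ω in K, ρ (z - y ω) ∂ν) = ν.real K := by
  have := W_fubini ν hK hρ hy (continuous_const (y := (1:ℝ))) (continuous_const (y := (1:ℝ)))
  simp only [mul_one, one_mul] at this
  rw [this]
  have h : ∀ ω, ∫ z, ρ (z - y ω) = 1 := fun ω => by
    rw [integral_sub_right_eq_self ρ (y ω), hρ.int]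
  simp [h]

end param

end PBR

namespace PBR

lemma fderiv_comp_apply {U : E → E} (hU : ContDiff ℝ 1 U) (i : Fin 2) (z a : E) :
    fderiv ℝ (fun z => U z i) z a = fderiv ℝ U z a i := by
  have h := (hU.differentiable one_ne_zero z).hasFDerivAt
  rw [hasFDerivAt_pi'] at h
  rw [(h i).fderiv]
  rfl

lemma ibp {U : E → E} (hU : ContDiff ℝ 1 U) {g : E → ℝ} (hg : ContDiff ℝ 1 g)
    (hgs : HasCompactSupport g) :
    ∫ z, g z * dv U z = - ∫ z, fderiv ℝ g z (U z) := by
  have hgc := hg.continuous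
  have hDg := hg.continuous_fderiv one_ne_zero
  have hUc := hU.continuous
  have hDU := hU.continuous_fderiv one_ne_zero
  have key : ∀ (i : Fin 2) (v : E), ∫ z, g z * fderiv ℝ U z v i = - ∫ z, fderiv ℝ g z v * U z i := by
    intro i v
    have hUi : ContDiff ℝ 1 fun z => U z i := contDiff_pi.1 hU i
    have := integral_mul_fderiv_eq_neg_fderiv_mul_of_integrable (μ := volume) (f := g)
      (g := fun z => U z i) (v := v) ?_ ?_ ?_ ?_ ?_
    · simpa only [fderiv_comp_apply hU] using this
    · refine Continuous.integrable_of_hasCompactSupport (by fun_prop) ?_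
      exact ((hgs.fderiv_apply ℝ v).mul_right)
    · simp only [fderiv_comp_apply hU]
      refine Continuous.integrable_of_hasCompactSupport (by fun_prop) ?_
      exact hgs.mul_right
    · refine Continuous.integrable_of_hasCompactSupport (by fun_prop) ?_
      exact hgs.mul_right
    · exact fun z _ => hg.differentiable one_ne_zero z
    · exact fun z _ => hUi.differentiable one_ne_zero z
  have i1 : ∀ (i : Fin 2) (v : E), Integrable (fun z => g z * fderiv ℝ U z v i) := fun i v => by
    refine Continuous.integrable_of_hasCompactSupport (by fun_prop) ?_
    exact hgs.mul_right
  have i2 : ∀ (i : Fin 2) (v : E), Integrable (fun z => fderiv ℝ g z v * U z i) := fun i v => by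
    refine Continuous.integrable_of_hasCompactSupport (by fun_prop) ?_
    exact ((hgs.fderiv_apply ℝ v).mul_right)
  have e1 : ∀ z, fderiv ℝ g z (U z) = fderiv ℝ g z e0 * U z 0 + fderiv ℝ g z e1 * U z 1 := by
    intro z
    conv_lhs => rw [decomp (U z)]
    simp; ring
  simp_rw [e1, dv, mul_add]
  rw [integral_add (i1 _ _) (i1 _ _), integral_add (i2 _ _) (i2 _ _), key, key]
  simp only [PBR.e0, PBR.e1]; ring

def KT (T : ℝ) : Set (ℝ × ℝ) := Icc 0 T ×ˢ Icc 0 1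

lemma KT_compact (T : ℝ) : IsCompact (KT T) := isCompact_Icc.prod isCompact_Icc

lemma KT_int {T : ℝ} (hT : 0 ≤ T) {g : ℝ × ℝ → ℝ} (hg : Continuous g) :
    ∫ ω in KT T, g ω = ∫ t in (0:ℝ)..T, ∫ r in (0:ℝ)..1, g (t, r) := by
  rw [KT, Measure.volume_eq_prod, setIntegral_prod]
  · rw [intervalIntegral.integral_of_le hT, integral_Icc_eq_integral_Ioc]
    simp_rw [intervalIntegral.integral_of_le zero_le_one, integral_Icc_eq_integral_Ioc]
  · exact hg.continuousOn.integrableOn_compact (KT_compact T)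

def yy (x : ℝ → E) (ω : ℝ × ℝ) : E := ω.2 • x ω.1
def kk (x x' : ℝ → E) (ω : ℝ × ℝ) : ℝ := ω.2 * dt (x ω.1) (x' ω.1)

lemma yy_cont {x : ℝ → E} (hx : Continuous x) : Continuous (yy x) := by
  unfold yy; fun_prop

lemma kk_cont {x x' : ℝ → E} (hx : Continuous x) (hx' : Continuous x') : Continuous (kk x x') := by
  unfold kk dt; fun_prop

noncomputable def Wf (ρ : E → ℝ) (x x' : ℝ → E) (T : ℝ) (z : E) : ℝ :=
  ∫ ω in KT T, ρ (z - yy x ω) * kk x x' ω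

lemma W_grad {ρ : E → ℝ} {ε : ℝ} (hρ : Moll ρ ε) (x x' : ℝ → E)
    (hx : ∀ t, HasDerivAt x (x' t) t) (hx' : Continuous x') {T : ℝ} (hT : 0 ≤ T) (z a : E) :
    fderiv ℝ (Wf ρ x x' T) z a = -((∫ t in (0:ℝ)..T, ρ (z - x t) * dt a (x' t)) +
      ∫ r in (0:ℝ)..1, (ρ (z - r • x T) * dt (x T) a - ρ (z - r • x 0) * dt (x 0) a)) := by
  have hxc : Continuous x := continuous_iff_continuousAt.2 fun t => (hx t).continuousAt
  have hDc := hρ.smooth.continuous_fderiv one_ne_zero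
  have hV : ContDiff ℝ 1 (fun y => ρ (z - y) • a) := by
    have := hρ.smooth
    fun_prop
  have hdv : ∀ y, dv (fun y => ρ (z - y) • a) y = - fderiv ℝ ρ (z - y) a := by
    intro y
    have h1 : HasFDerivAt (fun y => z - y) (-ContinuousLinearMap.id ℝ E) y :=
      (hasFDerivAt_id y).const_sub _
    have h2 := ((hρ.smooth.differentiable one_ne_zero (z - y)).hasFDerivAt).comp y h1
    have h3 := h2.smul_const a
    have h4 : fderiv ℝ (fun y => ρ (z - y) • a) y = _ := h3.fderiv
    rw [dv, h4]
    conv_rhs => rw [decomp a]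
    simp [e0, e1]; ring
  have hst := stokes _ hV x x' hx hx' T
  simp only [hdv] at hst
  have hyc := yy_cont hxc
  have hkc := kk_cont hxc hx'
  have h0 : fderiv ℝ (Wf ρ x x' T) z a = _ := W_deriv_apply volume (KT_compact T) hρ hyc hkc z a
  rw [h0, KT_int hT (by fun_prop)]
  have h5 : ∀ (c : ℝ) (u v : E), dt (c • u) v = c * dt u v := by
    intro c u v; simp [dt]; ring
  have h6 : ∀ (c : ℝ) (u v : E), dt u (c • v) = c * dt u v := by
    intro c u v; simp [dt]; ring
  simp only [h5, h6] at hst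
  rw [← hst, ← intervalIntegral.integral_neg]
  congr 1; ext t
  rw [← intervalIntegral.integral_neg]
  congr 1; ext r
  simp only [yy, kk]; ring

end PBR

namespace PBR

lemma line_mass {ρ : E → ℝ} {ε : ℝ} (hρ : Moll ρ ε) {y : ℝ → E} (hy : Continuous y) {a b : ℝ}
    (hab : a ≤ b) :
    Integrable (fun z => ∫ t in a..b, ρ (z - y t)) ∧ ∫ z, (∫ t in a..b, ρ (z - y t)) = b - a := by
  have h0 : ∀ z, ∫ t in a..b, ρ (z - y t) = ∫ t in Icc a b, ρ (z - y t) := fun z => by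
    rw [intervalIntegral.integral_of_le hab, integral_Icc_eq_integral_Ioc]
  simp_rw [h0]
  constructor
  · have h1 := (W_contDiff volume (isCompact_Icc (a := a) (b := b)) hρ hy
      (continuous_const (y := (1:ℝ)))).continuous
    simp only [mul_one] at h1
    obtain ⟨R, hR⟩ := ((isCompact_Icc (a := a) (b := b)).image hy).isBounded.exists_norm_le
    refine h1.integrable_of_hasCompactSupport ?_
    refine HasCompactSupport.intro (isCompact_closedBall 0 (R + ε)) fun z hz => ?_
    have := W_supp (volume : Measure ℝ) (K := Icc a b) (R := R) hρ (y := y) (k := fun _ => 1)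
      (fun ω hω => hR _ (mem_image_of_mem _ hω)) (z := z) (by simpa using hz)
    simpa using this
  · rw [W_mass volume isCompact_Icc hρ hy]
    simp [Measure.real, hab]

lemma dv_sign {U : E → E} (hU : ContDiff ℝ 1 U) (hdiv : ∀ p, dv U p ≠ 0) (R : ℝ) (hR : 0 ≤ R) :
    ∃ s c : ℝ, |s| = 1 ∧ 0 < c ∧ ∀ z, ‖z‖ ≤ R → c ≤ s * dv U z := by
  have hc := continuous_dv hU
  have : ∃ s : ℝ, |s| = 1 ∧ ∀ z, 0 < s * dv U z := by
    by_cases h : 0 < dv U 0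
    · refine ⟨1, by simp, fun z => ?_⟩
      by_contra h1
      have h2 : dv U z ≤ 0 := by linarith
      obtain ⟨p, hp⟩ := mem_range_of_exists_le_of_exists_ge hc ⟨z, h2⟩ ⟨0, h.le⟩
      exact hdiv p hp
    · refine ⟨-1, by simp, fun z => ?_⟩
      by_contra h1
      have h2 : 0 ≤ dv U z := by linarith
      obtain ⟨p, hp⟩ := mem_range_of_exists_le_of_exists_ge hc ⟨0, not_lt.1 h⟩ ⟨z, h2⟩
      exact hdiv p hp
  obtain ⟨s, hs, hpos⟩ := this
  obtain ⟨z0, _, hz0⟩ := (isCompact_closedBall (0:E) R).exists_isMinOn ⟨0, by simpa using hR⟩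
    (f := fun z => s * dv U z) (by fun_prop)
  refine ⟨s, s * dv U z0, hs, hpos z0, fun z hz => ?_⟩
  exact hz0 (by simpa using hz : z ∈ Metric.closedBall (0:E) R)

lemma bounds {U : E → E} (hU : ContDiff ℝ 1 U) (R : ℝ) :
    ∃ M L : ℝ, 0 ≤ M ∧ 0 ≤ L ∧ (∀ z, ‖z‖ ≤ R → ‖U z‖ ≤ M) ∧
      (∀ z, ‖z‖ ≤ R → ‖fderiv ℝ U z‖ ≤ L) ∧
      ∀ z w, ‖z‖ ≤ R → ‖w‖ ≤ R → ‖U z - U w‖ ≤ L * ‖z - w‖ := by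
  obtain ⟨M, hM⟩ := (isCompact_closedBall (0:E) R).exists_bound_of_continuousOn
    hU.continuous.continuousOn
  obtain ⟨L, hL⟩ := (isCompact_closedBall (0:E) R).exists_bound_of_continuousOn
    (hU.continuous_fderiv one_ne_zero).continuousOn
  refine ⟨max M 0, max L 0, le_max_right _ _, le_max_right _ _, ?_, ?_, ?_⟩
  · exact fun z hz => (hM z (by simpa using hz)).trans (le_max_left _ _)
  · exact fun z hz => (hL z (by simpa using hz)).trans (le_max_left _ _)
  · intro z w hz hw
    exact (convex_closedBall (0:E) R).norm_image_sub_le_of_norm_fderiv_le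
      (fun y _ => hU.differentiable one_ne_zero y)
      (fun y hy => (hL y hy).trans (le_max_left _ _)) (by simpa using hw) (by simpa using hz)

lemma W_flux {U : E → E} (hU : ContDiff ℝ 1 U) {x : ℝ → E}
    (hx : ∀ t, HasDerivAt x (U (x t)) t) {R : ℝ} (hR : ∀ t, 0 ≤ t → ‖x t‖ ≤ R)
    {M L : ℝ} (hL0 : 0 ≤ L) (hM : ∀ z, ‖z‖ ≤ R + 1 → ‖U z‖ ≤ M)
    (hL : ∀ z w, ‖z‖ ≤ R + 1 → ‖w‖ ≤ R + 1 → ‖U z - U w‖ ≤ L * ‖z - w‖)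
    {T : ℝ} (hT : 0 ≤ T) {ε : ℝ} (hε1 : ε ≤ 1) {ρ : E → ℝ} (hρ : Moll ρ ε) (z : E) :
    |fderiv ℝ (Wf ρ x (fun t => U (x t)) T) z (U z)| ≤
      2 * (L * ε) * M * (∫ t in (0:ℝ)..T, ρ (z - x t)) +
      (2 * R * M * (∫ r in (0:ℝ)..1, ρ (z - r • x T)) +
       2 * R * M * (∫ r in (0:ℝ)..1, ρ (z - r • x 0))) := by
  have hxc : Continuous x := continuous_iff_continuousAt.2 fun t => (hx t).continuousAt
  have hUc := hU.continuous
  have hρc := hρ.smooth.continuous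
  have hR0 : 0 ≤ R := (norm_nonneg _).trans (hR 0 le_rfl)
  rw [W_grad hρ x _ hx (hUc.comp hxc) hT, abs_neg]
  refine (abs_add_le _ _).trans (add_le_add ?_ ?_)
  · rw [← intervalIntegral.integral_const_mul, ← Real.norm_eq_abs]
    refine intervalIntegral.norm_integral_le_of_norm_le hT ?_
      (Continuous.intervalIntegrable (by fun_prop) _ _)
    refine Eventually.of_forall fun t ht => ?_
    rw [norm_mul, Real.norm_of_nonneg (hρ.nonneg _), mul_comm (2 * (L * ε) * M)]
    by_cases h : ρ (z - x t) = 0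
    · simp [h]
    have h1 := hρ.supp _ h
    have h2 := hR t ht.1.le
    have h3 : ‖z‖ ≤ R + 1 := by
      have := norm_sub_norm_le z (x t)
      linarith
    gcongr
    · exact hρ.nonneg _
    have h4 : dt (U z) (U (x t)) = dt (U z - U (x t)) (U (x t)) := by simp [dt]; ring
    rw [h4, Real.norm_eq_abs]
    refine (abs_dt_le _ _).trans ?_
    have h5 := hL z (x t) h3 (by linarith)
    have hε0 : 0 ≤ ε := (norm_nonneg _).trans h1
    have h6 := hM (x t) (by linarith)
    have h7 : ‖U z - U (x t)‖ ≤ L * ε := h5.trans (by gcongr)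
    gcongr
  · have hb : ∀ (s : ℝ), 0 ≤ s → ∀ r ∈ Ioc (0:ℝ) 1, |ρ (z - r • x s) * dt (x s) (U z)| ≤
        2 * R * M * ρ (z - r • x s) := by
      intro s hs r hr
      rw [abs_mul, abs_of_nonneg (hρ.nonneg _), mul_comm (2 * R * M)]
      by_cases h : ρ (z - r • x s) = 0
      · simp [h]
      have h1 := hρ.supp _ h
      have h2 := hR s hs
      have h2' : ‖r • x s‖ ≤ R := by
        rw [norm_smul, Real.norm_of_nonneg hr.1.le]
        calc r * ‖x s‖ ≤ 1 * R := by gcongr; exact hr.2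
          _ = R := one_mul R
      have h3 : ‖z‖ ≤ R + 1 := by
        have := norm_sub_norm_le z (r • x s)
        linarith
      gcongr
      · exact hρ.nonneg _
      refine (abs_dt_le _ _).trans ?_
      have := hM z h3
      gcongr
    rw [← intervalIntegral.integral_const_mul, ← intervalIntegral.integral_const_mul,
      ← intervalIntegral.integral_add (Continuous.intervalIntegrable (by fun_prop) _ _)
        (Continuous.intervalIntegrable (by fun_prop) _ _), ← Real.norm_eq_abs]
    refine intervalIntegral.norm_integral_le_of_norm_le zero_le_one ?_
      (Continuous.intervalIntegrable (by fun_prop) _ _)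
    refine Eventually.of_forall fun r hr => ?_
    exact (abs_sub _ _).trans (add_le_add (hb T hT r hr) (hb 0 le_rfl r hr))

lemma beta_deriv {W : E → ℝ} (hW : ContDiff ℝ 1 W) :
    ContDiff ℝ 1 (fun z => √(W z ^ 2 + 1) - 1) ∧
    ∀ z v, |fderiv ℝ (fun z => √(W z ^ 2 + 1) - 1) z v| ≤ |fderiv ℝ W z v| := by
  have hne : ∀ z, W z ^ 2 + 1 ≠ 0 := fun z => by positivity
  constructor
  · exact (((hW.pow 2).add contDiff_const).sqrt hne).sub contDiff_const
  · intro z v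
    have h1 := (hW.differentiable one_ne_zero z).hasFDerivAt
    have h2 := ((((h1.pow 2).add_const 1).sqrt (hne z)).sub_const 1).fderiv
    have h3 : fderiv ℝ (fun z => √(W z ^ 2 + 1) - 1) z v =
        (W z / √(W z ^ 2 + 1)) * fderiv ℝ W z v := by
      erw [h2]
      simp
      field_simp
    rw [h3, abs_mul]
    have h4 : |W z / √(W z ^ 2 + 1)| ≤ 1 := by
      rw [abs_div, div_le_one (by positivity), abs_of_nonneg (Real.sqrt_nonneg _)]
      exact Real.abs_le_sqrt (by linarith)
    exact mul_le_of_le_one_left (abs_nonneg _) h4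

lemma L1_bound {U : E → E} (hU : ContDiff ℝ 1 U) (hdiv : ∀ p, dv U p ≠ 0) {x : ℝ → E}
    (hx : ∀ t, HasDerivAt x (U (x t)) t) {R : ℝ} (hR : ∀ t, 0 ≤ t → ‖x t‖ ≤ R) :
    ∃ C : ℝ, ∀ T, 0 ≤ T → ∃ ε₀ > 0, ∀ ε, ε ≤ ε₀ → ∀ ρ, Moll ρ ε →
      ∫ z, |Wf ρ x (fun t => U (x t)) T z| ≤ C := by
  have hxc : Continuous x := continuous_iff_continuousAt.2 fun t => (hx t).continuousAt
  have hUc := hU.continuous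
  have hR0 : 0 ≤ R := (norm_nonneg _).trans (hR 0 le_rfl)
  obtain ⟨M, L, hM0, hL0, hM, -, hL⟩ := bounds hU (R + 1)
  obtain ⟨s, c, hs, hc, hsc⟩ := dv_sign hU hdiv (R + 1) (by linarith)
  let B : Set E := Metric.closedBall 0 (R + 1)
  have hBm : MeasurableSet B := Metric.isClosed_closedBall.measurableSet
  refine ⟨(1 + 4 * R * M) / c + volume.real B, fun T hT => ?_⟩
  have hD : 0 < 2 * L * M * T + 1 := by positivity
  refine ⟨min 1 (1 / (2 * L * M * T + 1)), by positivity, fun ε hε ρ hρ => ?_⟩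
  have hε1 : ε ≤ 1 := hε.trans (min_le_left _ _)
  have hε2 : ε * (2 * L * M * T + 1) ≤ 1 := by
    rw [← le_div_iff₀ hD]; exact hε.trans (min_le_right _ _)
  have hε0 : 0 ≤ ε := by
    by_contra h
    have : ρ = 0 := by
      ext z; by_contra h1
      have := hρ.supp z h1
      have := norm_nonneg z
      linarith
    have h2 := hρ.int
    simp [this] at h2
  set W := Wf ρ x (fun t => U (x t)) T with hWdef
  have hW : ContDiff ℝ 1 W := W_contDiff volume (KT_compact T) hρ (yy_cont hxc)
    (kk_cont hxc (hUc.comp hxc))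
  have hWs : ∀ z, z ∉ B → W z = 0 := by
    intro z hz
    refine W_supp volume (R := R) hρ ?_ ?_
    · rintro ⟨t, r⟩ ⟨ht, hr⟩
      have h2 := hR t ht.1
      simp only at hr
      simp only [yy, norm_smul, Real.norm_of_nonneg hr.1]
      calc r * ‖x t‖ ≤ 1 * R := by gcongr; exact hr.2
          _ = R := one_mul R
    · have : R + 1 < ‖z‖ := by simpa [B] using hz
      linarith
  obtain ⟨hg, hgd⟩ := beta_deriv hW
  set g : E → ℝ := fun z => √(W z ^ 2 + 1) - 1 with hgdef
  have hgs0 : ∀ z, z ∉ B → g z = 0 := fun z hz => by simp [hgdef, hWs z hz]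
  have hgs : HasCompactSupport g := HasCompactSupport.intro (isCompact_closedBall 0 (R + 1)) hgs0
  have hWcs : HasCompactSupport W := HasCompactSupport.intro (isCompact_closedBall 0 (R + 1)) hWs
  have hg0 : ∀ z, 0 ≤ g z := fun z => by
    have : (1:ℝ) ≤ √(W z ^ 2 + 1) := Real.one_le_sqrt.2 (by nlinarith [sq_nonneg (W z)])
    simp only [hgdef]; linarith
  have hdvc := continuous_dv hU
  have hgc := hg.continuous
  have hDg := hg.continuous_fderiv one_ne_zero
  have hgi : Integrable g := hgc.integrable_of_hasCompactSupport hgs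
  -- upper bound through integration by parts
  obtain ⟨i1, m1⟩ := line_mass hρ hxc hT
  obtain ⟨i2, m2⟩ := line_mass hρ (y := fun r => r • x T) (by fun_prop) zero_le_one
  obtain ⟨i3, m3⟩ := line_mass hρ (y := fun r => r • x 0) (by fun_prop) zero_le_one
  have i23 : Integrable (fun z => 2 * R * M * (∫ r in (0:ℝ)..1, ρ (z - r • x T)) +
       2 * R * M * (∫ r in (0:ℝ)..1, ρ (z - r • x 0))) := (i2.const_mul _).add (i3.const_mul _)
  have up : ∫ z, |fderiv ℝ g z (U z)| ≤ 1 + 4 * R * M := by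
    have hintg : Integrable (fun z => |fderiv ℝ g z (U z)|) := by
      refine (Continuous.integrable_of_hasCompactSupport (by fun_prop) ?_)
      refine (hgs.fderiv ℝ).mono ?_
      intro z hz h
      apply hz
      simp only [h]
      simp
    calc ∫ z, |fderiv ℝ g z (U z)| ≤ ∫ z, (2 * (L * ε) * M * (∫ t in (0:ℝ)..T, ρ (z - x t)) +
      (2 * R * M * (∫ r in (0:ℝ)..1, ρ (z - r • x T)) +
       2 * R * M * (∫ r in (0:ℝ)..1, ρ (z - r • x 0)))) := by
          refine integral_mono hintg ((i1.const_mul _).add ((i2.const_mul _).add (i3.const_mul _))) ?_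
          intro z
          exact (hgd z _).trans (W_flux hU hx hR hL0 hM hL hT hε1 hρ z)
      _ = 2 * (L * ε) * M * (T - 0) + (2 * R * M * (1 - 0) + 2 * R * M * (1 - 0)) := by
          rw [integral_add (i1.const_mul _) i23,
            integral_add (i2.const_mul _) (i3.const_mul _), integral_const_mul, integral_const_mul,
            integral_const_mul, m1, m2, m3]
      _ ≤ 1 + 4 * R * M := by nlinarith
  have low : c * ∫ z, g z ≤ ∫ z, |fderiv ℝ g z (U z)| := by
    calc c * ∫ z, g z = ∫ z, c * g z := (integral_const_mul _ _).symm
      _ ≤ ∫ z, s * (g z * dv U z) := by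
          refine integral_mono (hgi.const_mul c) ?_ ?_
          · refine Continuous.integrable_of_hasCompactSupport (by fun_prop) ?_
            exact (hgs.mul_right).mul_left
          · intro z
            simp only
            by_cases hz : z ∈ B
            · have := hsc z (by simpa [B] using hz)
              nlinarith [hg0 z]
            · simp [hgs0 z hz]
      _ = s * -(∫ z, fderiv ℝ g z (U z)) := by rw [integral_const_mul, ibp hU hg hgs]
      _ ≤ |s * -(∫ z, fderiv ℝ g z (U z))| := le_abs_self _
      _ = |∫ z, fderiv ℝ g z (U z)| := by rw [abs_mul, hs, one_mul, abs_neg]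
      _ ≤ _ := abs_integral_le_integral_abs
  have hgle : ∫ z, g z ≤ (1 + 4 * R * M) / c := by
    rw [le_div_iff₀ hc]; linarith
  have hWi : Integrable W := hW.continuous.integrable_of_hasCompactSupport hWcs
  have hBf : volume B ≠ ⊤ := (isCompact_closedBall (0:E) (R + 1)).measure_lt_top.ne
  have hIi : Integrable (B.indicator (fun _ => (1:ℝ))) :=
    (integrable_indicator_iff hBm).2 (integrableOn_const hBf)
  calc ∫ z, |W z| ≤ ∫ z, (g z + B.indicator (fun _ => (1:ℝ)) z) := by
        refine integral_mono hWi.abs (hgi.add hIi) fun z => ?_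
        simp only
        by_cases hz : z ∈ B
        · have : |W z| ≤ √(W z ^ 2 + 1) := Real.abs_le_sqrt (by linarith)
          simp [hgdef, hz, this]
        · simp [hWs z hz, hgs0 z hz, hz]
    _ = (∫ z, g z) + volume.real B := by
        rw [integral_add hgi hIi, integral_indicator hBm]; simp
    _ ≤ _ := by linarith

end PBR

namespace PBR

lemma moll_approx {ρ : E → ℝ} {ε : ℝ} (hρ : Moll ρ ε) {f : E → ℝ} (hf : Continuous f) {y : E}
    {δ : ℝ} (h : ∀ z, ‖z - y‖ ≤ ε → |f z - f y| ≤ δ) :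
    |(∫ z, ρ (z - y) * f z) - f y| ≤ δ := by
  have hρc := hρ.smooth.continuous
  have hcs : HasCompactSupport (fun z => ρ (z - y)) := by
    refine HasCompactSupport.intro (isCompact_closedBall y ε) fun z hz => ?_
    by_contra h1
    apply hz
    simpa [dist_eq_norm] using hρ.supp _ h1
  have i0 : Integrable (fun z => ρ (z - y)) :=
    Continuous.integrable_of_hasCompactSupport (by fun_prop) hcs
  have i1 : Integrable (fun z => ρ (z - y) * f z) :=
    Continuous.integrable_of_hasCompactSupport (by fun_prop) hcs.mul_right
  have m : ∫ z, ρ (z - y) = 1 := by rw [integral_sub_right_eq_self ρ y, hρ.int]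
  have e : (∫ z, ρ (z - y) * f z) - f y = ∫ z, (ρ (z - y) * f z - ρ (z - y) * f y) := by
    rw [integral_sub i1 (i0.mul_const _), integral_mul_const, m, one_mul]
  rw [e, ← Real.norm_eq_abs]
  calc _ ≤ ∫ z, ρ (z - y) * δ := by
        refine norm_integral_le_of_norm_le (i0.mul_const _) (Eventually.of_forall fun z => ?_)
        rw [← mul_sub, norm_mul, Real.norm_of_nonneg (hρ.nonneg _)]
        by_cases h0 : ρ (z - y) = 0
        · simp [h0]
        · have := h z (hρ.supp _ h0)
          have := hρ.nonneg (z - y)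
          gcongr
          simpa
    _ = δ := by rw [integral_mul_const, m, one_mul]

lemma energy {U : E → E} (hU : ContDiff ℝ 1 U) (hdiv : ∀ p, dv U p ≠ 0) {x : ℝ → E}
    (hx : ∀ t, HasDerivAt x (U (x t)) t) {R : ℝ} (hR : ∀ t, 0 ≤ t → ‖x t‖ ≤ R) :
    ∃ C : ℝ, ∀ T, 0 ≤ T → ∫ t in (0:ℝ)..T, (U (x t) 0 ^ 2 + U (x t) 1 ^ 2) ≤ C := by
  have hxc : Continuous x := continuous_iff_continuousAt.2 fun t => (hx t).continuousAt
  have hUc := hU.continuous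
  have hR0 : 0 ≤ R := (norm_nonneg _).trans (hR 0 le_rfl)
  let V : E → E := fun z => ![U z 1, -U z 0]
  have hV : ContDiff ℝ 1 V := by
    have h0 := contDiff_pi.1 hU
    refine contDiff_pi.2 fun i => ?_
    fin_cases i
    · exact h0 1
    · exact (h0 0).neg
  have hVc := hV.continuous
  set f := dv V with hfdef
  have hf : Continuous f := continuous_dv hV
  obtain ⟨M, -, hM0, -, hM, -, -⟩ := bounds hV R
  obtain ⟨F, hF⟩ := (isCompact_closedBall (0:E) (R + 1)).exists_bound_of_continuousOn
    hf.continuousOn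
  have hF0 : 0 ≤ F := (norm_nonneg _).trans (hF 0 (by simp; linarith))
  obtain ⟨C, hC⟩ := L1_bound hU hdiv hx hR
  refine ⟨1 + F * C + 4 * R * M, fun T hT => ?_⟩
  obtain ⟨ε₀, hε₀, hW⟩ := hC T hT
  have hkc := kk_cont hxc (hUc.comp hxc)
  have hyc := yy_cont hxc
  let k := kk x (fun t => U (x t))
  have hkc : Continuous k := hkc
  let A := ∫ ω in KT T, |k ω|
  have hA : 0 ≤ A := integral_nonneg fun _ => abs_nonneg _
  have hki : IntegrableOn (fun ω => |k ω|) (KT T) :=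
    hkc.abs.continuousOn.integrableOn_compact (KT_compact T)
  obtain ⟨η, hη, hη'⟩ := Metric.uniformContinuousOn_iff.1
    ((isCompact_closedBall (0:E) (R + 1)).uniformContinuousOn_of_continuous hf.continuousOn)
    (1 / (A + 1)) (by positivity)
  let ε := min (min ε₀ 1) (η / 2)
  have hε : 0 < ε := by positivity
  have hε1 : ε ≤ ε₀ := (min_le_left _ _).trans (min_le_left _ _)
  have hε2 : ε ≤ 1 := (min_le_left _ _).trans (min_le_right _ _)
  have hε3 : ε ≤ η / 2 := min_le_right _ _
  obtain ⟨ρ, hρ⟩ := exists_moll hε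
  have hWb := hW ε hε1 ρ hρ
  have hfub := W_fubini volume (KT_compact T) hρ hyc hkc hf
  have hyR : ∀ ω ∈ KT T, ‖yy x ω‖ ≤ R := by
    rintro ⟨t, r⟩ ⟨ht, hr⟩
    have h2 := hR t ht.1
    simp only at hr
    simp only [yy, norm_smul, Real.norm_of_nonneg hr.1]
    calc r * ‖x t‖ ≤ 1 * R := by gcongr; exact hr.2
        _ = R := one_mul R
  let W := Wf ρ x (fun t => U (x t)) T
  have hWc : Continuous W := (W_contDiff volume (KT_compact T) hρ hyc hkc).continuous
  have hWs : ∀ z, z ∉ Metric.closedBall (0:E) (R + 1) → W z = 0 := by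
    intro z hz
    refine W_supp volume (R := R) hρ hyR ?_
    have : R + 1 < ‖z‖ := by simpa using hz
    linarith
  have hWcs : HasCompactSupport W := HasCompactSupport.intro (isCompact_closedBall 0 (R + 1)) hWs
  -- bound on the pairing with `f`
  have b1 : |∫ z, W z * f z| ≤ F * C := by
    calc |∫ z, W z * f z| ≤ ∫ z, F * |W z| := by
          rw [← Real.norm_eq_abs]
          refine norm_integral_le_of_norm_le
            ((hWc.integrable_of_hasCompactSupport hWcs).abs.const_mul F)
            (Eventually.of_forall fun z => ?_)
          rw [norm_mul, mul_comm, Real.norm_eq_abs (W z)]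
          by_cases hz : z ∈ Metric.closedBall (0:E) (R + 1)
          · have := hF z hz
            gcongr
          · simp [hWs z hz]
      _ = F * ∫ z, |W z| := integral_const_mul _ _
      _ ≤ F * C := by gcongr
  have hconv : Continuous fun ω => ∫ z, ρ (z - yy x ω) * f z := by
    have h1 : ∀ ω, ∫ z, ρ (z - yy x ω) * f z = ∫ z, ρ z * f (z + yy x ω) := by
      intro ω
      rw [← integral_add_right_eq_self _ (yy x ω)]
      simp
    simp_rw [h1]
    have hρc := hρ.smooth.continuous
    have h2 : ∀ ω, ∫ z, ρ z * f (z + yy x ω) = ∫ z in Metric.closedBall (0:E) ε, ρ z * f (z + yy x ω) := by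
      intro ω
      symm
      apply setIntegral_eq_integral_of_forall_compl_eq_zero
      intro z hz
      have : ρ z = 0 := by
        by_contra h; exact hz (by simpa using hρ.supp z h)
      simp [this]
    simp_rw [h2]
    apply continuous_parametric_integral_of_continuous _ (isCompact_closedBall _ _)
    simp only [Function.uncurry_def]
    fun_prop
  have b2 : |(∫ z, W z * f z) - ∫ ω in KT T, k ω * f (yy x ω)| ≤ 1 := by
    have e1 : ∫ z, W z * f z = ∫ ω in KT T, k ω * ∫ z, ρ (z - yy x ω) * f z := hfub
    rw [e1, ← integral_sub, ← Real.norm_eq_abs]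
    · calc _ ≤ ∫ ω in KT T, |k ω| * (1 / (A + 1)) := by
            refine norm_integral_le_of_norm_le (hki.mul_const _) ?_
            refine (ae_restrict_iff' (KT_compact T).measurableSet).2 (Eventually.of_forall ?_)
            intro ω hω
            rw [← mul_sub, norm_mul, Real.norm_eq_abs, Real.norm_eq_abs]
            gcongr
            refine moll_approx hρ hf fun z hz => ?_
            have h1 := hyR ω hω
            refine (hη' z ?_ (yy x ω) ?_ ?_).le
            · have := norm_sub_norm_le z (yy x ω)
              simp only [mem_closedBall_zero_iff]; linarith
            · simp only [mem_closedBall_zero_iff]; linarith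
            · rw [dist_eq_norm]; linarith
        _ = A * (1 / (A + 1)) := integral_mul_const _ _
        _ ≤ 1 := by rw [mul_one_div, div_le_one (by linarith)]; linarith
    · exact (hkc.mul hconv).continuousOn.integrableOn_compact (KT_compact T)
    · exact (hkc.mul (hf.comp hyc)).continuousOn.integrableOn_compact (KT_compact T)
  have st := stokes V hV x _ hx (hUc.comp hxc) T
  have e2 : ∫ ω in KT T, k ω * f (yy x ω) =
      ∫ t in (0:ℝ)..T, ∫ r in (0:ℝ)..1, dv V (r • x t) * (r * dt (x t) (U (x t))) := by
    rw [KT_int hT (by fun_prop)]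
    congr 1; ext t; congr 1; ext r
    simp only [k, kk, yy, hfdef]; ring
  have e3 : ∀ t, dt (V (x t)) (U (x t)) = U (x t) 0 ^ 2 + U (x t) 1 ^ 2 := by
    intro t; simp [dt, V]; ring
  simp_rw [e3] at st
  have b3 : |∫ r in (0:ℝ)..1, (dt (x T) (V (r • x T)) - dt (x 0) (V (r • x 0)))| ≤ 4 * R * M := by
    have := intervalIntegral.norm_integral_le_of_norm_le_const (a := (0:ℝ)) (b := 1)
      (f := fun r => (dt (x T) (V (r • x T)) - dt (x 0) (V (r • x 0)))) (C := 4 * R * M) ?_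
    · simpa using this
    · intro r hr
      rw [uIoc_of_le zero_le_one] at hr
      have hb : ∀ s, 0 ≤ s → |dt (x s) (V (r • x s))| ≤ 2 * R * M := by
        intro s hs
        have h2 := hR s hs
        have h2' : ‖r • x s‖ ≤ R := by
          rw [norm_smul, Real.norm_of_nonneg hr.1.le]
          calc r * ‖x s‖ ≤ 1 * R := by gcongr; exact hr.2
            _ = R := one_mul R
        have := hM _ h2'
        refine (abs_dt_le _ _).trans ?_
        gcongr
      have := (abs_sub (dt (x T) (V (r • x T))) (dt (x 0) (V (r • x 0)))).trans
        (add_le_add (hb T hT) (hb 0 le_rfl))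
      rw [Real.norm_eq_abs]; linarith
  rw [e2, st] at b2
  rw [abs_le] at b1 b2 b3
  linarith [b1.2, b2.1, b3.1]

lemma U_tendsto_zero {U : E → E} (hU : ContDiff ℝ 1 U) (hdiv : ∀ p, dv U p ≠ 0) {x : ℝ → E}
    (hx : ∀ t, HasDerivAt x (U (x t)) t) {R : ℝ} (hR : ∀ t, 0 ≤ t → ‖x t‖ ≤ R) :
    Tendsto (fun t => U (x t)) atTop (𝓝 0) := by
  have hxc : Continuous x := continuous_iff_continuousAt.2 fun t => (hx t).continuousAt
  have hUc := hU.continuous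
  have hDU := hU.continuous_fderiv one_ne_zero
  obtain ⟨C, hC⟩ := energy hU hdiv hx hR
  obtain ⟨M, L, hM0, hL0, hM, hL, -⟩ := bounds hU R
  let V : ℝ → E := fun t => U (x t)
  let V' : ℝ → E := fun t => fderiv ℝ U (x t) (U (x t))
  have hV : ∀ t, HasDerivAt V (V' t) t := fun t =>
    ((hU.differentiable one_ne_zero (x t)).hasFDerivAt).comp_hasDerivAt t (hx t)
  let q : ℝ → ℝ := fun t => V t 0 ^ 2 + V t 1 ^ 2
  let q' : ℝ → ℝ := fun t => 2 * V t 0 * V' t 0 + 2 * V t 1 * V' t 1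
  have hq : ∀ t, HasDerivAt q (q' t) t := fun t => by
    have h := hasDerivAt_pi.1 (hV t)
    refine (((h 0).pow 2).add ((h 1).pow 2)).congr_deriv ?_
    simp [q']
  have hqc : Continuous q := by simp only [q, V]; fun_prop
  have hq'c : Continuous q' := by simp only [q', V', V]; fun_prop
  have hq0 : ∀ t, 0 ≤ q t := fun t => by simp only [q]; positivity
  have hqi : IntegrableOn q (Ioi 0) := by
    refine integrableOn_Ioi_of_intervalIntegral_norm_bounded (l := atTop) (b := fun T : ℝ => T) C 0
      (fun T => hqc.integrableOn_Ioc) tendsto_id ?_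
    filter_upwards [eventually_ge_atTop 0] with T hT
    simp_rw [Real.norm_of_nonneg (hq0 _)]
    exact hC T hT
  have hnq : ∀ t, ‖V t‖ ^ 2 ≤ q t := by
    intro t
    have h : ‖V t‖ ≤ √(q t) := by
      rw [pi_norm_le_iff_of_nonneg (Real.sqrt_nonneg _)]
      intro i
      rw [Real.norm_eq_abs]
      refine Real.abs_le_sqrt ?_
      fin_cases i
      · simp [q]; positivity
      · simp [q]; positivity
    calc ‖V t‖ ^ 2 ≤ √(q t) ^ 2 := by gcongr
      _ = q t := Real.sq_sqrt (hq0 t)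
  have hq'i : IntegrableOn q' (Ioi 0) := by
    refine Integrable.mono' (hqi.const_mul (4 * L)) hq'c.aestronglyMeasurable ?_
    refine (ae_restrict_iff' measurableSet_Ioi).2 (Eventually.of_forall fun t ht => ?_)
    have h1 : ‖V' t‖ ≤ L * ‖V t‖ :=
      (ContinuousLinearMap.le_opNorm _ _).trans (by gcongr; exact hL _ (hR t (le_of_lt ht)))
    have a0 := norm_le_pi_norm (V t) 0
    have a1 := norm_le_pi_norm (V t) 1
    have c0 := (norm_le_pi_norm (V' t) 0).trans h1
    have c1 := (norm_le_pi_norm (V' t) 1).trans h1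
    calc ‖q' t‖ ≤ ‖2 * V t 0 * V' t 0‖ + ‖2 * V t 1 * V' t 1‖ := norm_add_le _ _
      _ = 2 * ‖V t 0‖ * ‖V' t 0‖ + 2 * ‖V t 1‖ * ‖V' t 1‖ := by simp [norm_mul]
      _ ≤ 2 * ‖V t‖ * (L * ‖V t‖) + 2 * ‖V t‖ * (L * ‖V t‖) := by gcongr
      _ = 4 * L * ‖V t‖ ^ 2 := by ring
      _ ≤ 4 * L * q t := by gcongr; exact hnq t
  have hlim := tendsto_zero_of_hasDerivAt_of_integrableOn_Ioi (fun t _ => hq t) hq'i hqi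
  have h2 : Tendsto (fun t => ‖V t‖ ^ 2) atTop (𝓝 0) :=
    squeeze_zero (fun t => by positivity) hnq hlim
  rw [tendsto_zero_iff_norm_tendsto_zero]
  have h3 := h2.sqrt
  simpa [Real.sqrt_sq (norm_nonneg _)] using h3

end PBR

namespace PBR

def ip (a b : E) : ℝ := a 0 * b 0 + a 1 * b 1

lemma norm_sq_le_ip (a : E) : ‖a‖ ^ 2 ≤ ip a a := by
  have h0 : 0 ≤ ip a a := add_nonneg (mul_self_nonneg _) (mul_self_nonneg _)
  have h : ‖a‖ ≤ √(ip a a) := by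
    rw [pi_norm_le_iff_of_nonneg (Real.sqrt_nonneg _)]
    intro i
    rw [Real.norm_eq_abs]
    refine Real.abs_le_sqrt ?_
    unfold ip
    fin_cases i
    · simp; nlinarith [sq_nonneg (a 1)]
    · simp; nlinarith [sq_nonneg (a 0)]
  calc ‖a‖ ^ 2 ≤ √(ip a a) ^ 2 := by gcongr
      _ = ip a a := Real.sq_sqrt h0

lemma ip_pos {a : E} (ha : a ≠ 0) : 0 < ip a a :=
  lt_of_lt_of_le (pow_pos (norm_pos_iff.2 ha) 2) (norm_sq_le_ip a)

lemma cross {x : ℝ → E} (hxc : Continuous x) {R : ℝ} (hR : ∀ t, 0 ≤ t → ‖x t‖ ≤ R)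
    {g : E → ℝ} (hg : Continuous g) {c : ℝ} {p : E} (hp : MapClusterPt p atTop x) (hpc : g p < c)
    (hf : ∃ᶠ t in atTop, c ≤ g (x t)) : ∃ k, MapClusterPt k atTop x ∧ g k = c := by
  have h1 : ∃ᶠ t in atTop, g (x t) < c :=
    hp.frequently (hg.continuousAt.eventually (gt_mem_nhds hpc))
  have h2 : ∃ᶠ t in atTop, x t ∈ Metric.closedBall (0:E) R ∩ g ⁻¹' {c} := by
    rw [frequently_atTop] at *
    intro a
    obtain ⟨t1, ht1, h3⟩ := h1 (max a 0)
    obtain ⟨t2, ht2, h4⟩ := hf t1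
    obtain ⟨t, ht, h5⟩ := intermediate_value_Icc ht2 ((hg.comp hxc).continuousOn) ⟨h3.le, h4⟩
    refine ⟨t, (le_max_left _ _).trans (ht1.trans ht.1), ?_, h5⟩
    simpa using hR t ((le_max_right _ _).trans (ht1.trans ht.1))
  obtain ⟨k, hk, hk'⟩ := ((isCompact_closedBall (0:E) R).inter_right
    (isClosed_singleton.preimage hg)).exists_mapClusterPt_of_frequently h2
  exact ⟨k, hk', hk.2⟩

lemma cluster_eq {U : E → E} (hU : Continuous U) {x : ℝ → E}
    (h0 : Tendsto (fun t => U (x t)) atTop (𝓝 0)) {k : E} (hk : MapClusterPt k atTop x) :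
    U k = 0 := by
  have h1 : MapClusterPt (U k) atTop (U ∘ x) := hk.continuousAt_comp hU.continuousAt
  by_contra h
  obtain ⟨u, v, hu, hv, huv⟩ := t2_separation_nhds h
  have h2 := h1.frequently hu
  have h3 := h0.eventually hv
  obtain ⟨t, ht1, ht2⟩ := (h2.and_eventually h3).exists
  exact Set.disjoint_left.1 huv ht1 ht2

lemma sign_nhds (A : E →L[ℝ] E) (b : E) (hb : b ≠ 0) (τ : ℝ) (hτ : τ ≠ 0) (hAb : A b = τ • b) :
    ∃ σ δ : ℝ, |σ| = 1 ∧ 0 < δ ∧ ∀ (g : E) (B : E →L[ℝ] E), ‖g‖ ≤ δ → ‖B - A‖ ≤ δ →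
      |τ| / 2 * ip (b + g) (b + g) ≤ σ * ip (b + g) (B (b + g)) := by
  obtain ⟨σ, hσ, hστ⟩ : ∃ σ : ℝ, |σ| = 1 ∧ σ * τ = |τ| := by
    rcases lt_or_gt_of_ne hτ with h | h
    · exact ⟨-1, by simp, by rw [abs_of_neg h]; ring⟩
    · exact ⟨1, by simp, by rw [abs_of_pos h]; ring⟩
  let Ψ : E × (E →L[ℝ] E) → ℝ := fun w =>
    σ * ip (b + w.1) (w.2 (b + w.1)) - |τ| / 2 * ip (b + w.1) (b + w.1)
  have hΨ : Continuous Ψ := by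
    simp only [Ψ, ip]; fun_prop
  have h0 : 0 < Ψ (0, A) := by
    have : Ψ (0, A) = |τ| / 2 * ip b b := by
      simp only [Ψ, add_zero, hAb, ← hστ, ip, Pi.smul_apply, smul_eq_mul]
      ring
    rw [this]
    have := ip_pos hb
    have := abs_pos.2 hτ
    positivity
  obtain ⟨δ, hδ, hball⟩ := Metric.eventually_nhds_iff.1 (hΨ.continuousAt.eventually (lt_mem_nhds h0))
  refine ⟨σ, δ / 2, hσ, by positivity, fun g B hg hB => ?_⟩
  have := hball (y := (g, B)) (by
    rw [Prod.dist_eq]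
    simp only [dist_zero_right, dist_eq_norm, sub_zero]
    exact max_lt (by linarith) (by linarith))
  simp only [Ψ] at this
  linarith

/-- The trapping argument near a limit point where the speed is monotone. -/
lemma trap {U : E → E} (hU : ContDiff ℝ 1 U) {x : ℝ → E}
    (hx : ∀ t, HasDerivAt x (U (x t)) t)
    (h0 : Tendsto (fun t => U (x t)) atTop (𝓝 0)) (hne : ∀ t, 0 ≤ t → U (x t) ≠ 0)
    {p : E} (hp : MapClusterPt p atTop x) {σ c r : ℝ} (hσ : |σ| = 1) (hc : 0 < c) (hr : 0 < r)
    (hs : ∀ z, ‖z - p‖ < r → c * ip (U z) (U z) ≤ σ * ip (U z) (fderiv ℝ U z (U z))) :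
    Tendsto x atTop (𝓝 p) := by
  have hxc : Continuous x := continuous_iff_continuousAt.2 fun t => (hx t).continuousAt
  let n : ℝ → ℝ := fun t => √(ip (U (x t)) (U (x t)))
  have hV : ∀ t, HasDerivAt (fun t => U (x t)) (fderiv ℝ U (x t) (U (x t))) t := fun t =>
    ((hU.differentiable one_ne_zero (x t)).hasFDerivAt).comp_hasDerivAt t (hx t)
  have hn : ∀ t, 0 ≤ t → HasDerivAt n (ip (U (x t)) (fderiv ℝ U (x t) (U (x t))) / n t) t := by
    intro t ht
    have h := hasDerivAt_pi.1 (hV t)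
    have h2 : HasDerivAt (fun t => ip (U (x t)) (U (x t)))
        (2 * ip (U (x t)) (fderiv ℝ U (x t) (U (x t)))) t := by
      unfold ip
      refine (((h 0).mul (h 0)).add ((h 1).mul (h 1))).congr_deriv ?_
      ring
    have hpos := ip_pos (hne t ht)
    refine (h2.sqrt hpos.ne').congr_deriv ?_
    simp only [n]
    have := Real.sqrt_pos.2 hpos
    field_simp
  have hn0 : Tendsto n atTop (𝓝 0) := by
    have hc : Continuous fun a : E => √(ip a a) := by unfold ip; fun_prop
    have := (hc.tendsto 0).comp h0
    simpa [ip, Function.comp_def, n] using this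
  rw [Metric.tendsto_atTop]
  intro ε' hε'
  set ε := min ε' (r / 2) with hεdef
  have hε : 0 < ε := by positivity
  have hεr : ε < r := (min_le_right _ _).trans_lt (by linarith)
  obtain ⟨T, hT⟩ := eventually_atTop.1 (hn0.eventually (gt_mem_nhds (show 0 < c * ε / 4 by positivity)))
  obtain ⟨t0, ht0, hxt0⟩ := frequently_atTop.1
    (hp.frequently (Metric.ball_mem_nhds p (show 0 < ε / 2 by positivity))) (max T 0)
  rw [dist_eq_norm] at hxt0
  have ht0T : T ≤ t0 := (le_max_left _ _).trans ht0
  have ht00 : 0 ≤ t0 := (le_max_right _ _).trans ht0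
  refine ⟨t0, fun t1 ht1 => ?_⟩
  by_contra hcon
  have hcon' : ε ≤ ‖x t1 - p‖ := by
    rw [← dist_eq_norm]; exact (min_le_left _ _).trans (not_lt.1 hcon)
  have hScl : IsClosed {t | ε ≤ ‖x t - p‖} := isClosed_le continuous_const (by fun_prop)
  obtain ⟨t2, ht2, hmin⟩ := ((isCompact_Icc (a := t0) (b := t1)).inter_right hScl).exists_isLeast
    ⟨t1, ⟨ht1, le_rfl⟩, hcon'⟩
  have hin : ∀ t ∈ Ico t0 t2, ‖x t - p‖ < r := by
    intro t ht
    by_contra h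
    have : t2 ≤ t := hmin ⟨⟨ht.1, ht.2.le.trans ht2.1.2⟩, by
      simp only [mem_setOf_eq]; linarith⟩
    exact absurd ht.2 (not_lt.2 this)
  have hfence := image_norm_le_of_norm_deriv_right_le_deriv_boundary' (a := t0) (b := t2)
    (f := fun t => x t - x t0) (f' := fun t => U (x t))
    (B := fun t => σ / c * (n t - n t0))
    (B' := fun t => σ / c * (ip (U (x t)) (fderiv ℝ U (x t) (U (x t))) / n t))
    (by fun_prop) (fun t _ => ((hx t).sub_const _).hasDerivWithinAt) (by simp)
    (fun t ht => ((((hn t (ht00.trans ht.1)).sub_const _).const_mul _).continuousAt).continuousWithinAt)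
    (fun t ht => (((hn t (ht00.trans ht.1)).sub_const _).const_mul _).hasDerivWithinAt)
    (by
      intro t ht
      have hpos := ip_pos (hne t (ht00.trans ht.1))
      have hnpos : 0 < n t := Real.sqrt_pos.2 hpos
      have h1 := hs _ (hin t ht)
      have h2 : ‖U (x t)‖ ≤ n t := Real.le_sqrt_of_sq_le (norm_sq_le_ip _)
      have h3 : n t * n t = ip (U (x t)) (U (x t)) := Real.mul_self_sqrt hpos.le
      refine h2.trans ?_
      rw [div_mul_div_comm, le_div_iff₀ (by positivity)]
      nlinarith)
    (x := t2) ⟨ht2.1.1, le_rfl⟩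
  have hn2 := hT t2 (ht0T.trans ht2.1.1)
  have hn1 := hT t0 ht0T
  have hp2 : 0 ≤ n t2 := Real.sqrt_nonneg _
  have hp1 : 0 ≤ n t0 := Real.sqrt_nonneg _
  have hb : σ / c * (n t2 - n t0) ≤ ε / 2 := by
    rw [div_mul_eq_mul_div, div_le_iff₀ hc]
    calc σ * (n t2 - n t0) ≤ |σ * (n t2 - n t0)| := le_abs_self _
      _ = |n t2 - n t0| := by rw [abs_mul, hσ, one_mul]
      _ ≤ _ := by rw [abs_le]; constructor <;> nlinarith
  have h2 : ε ≤ ‖x t2 - p‖ := ht2.2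
  have h4 : ‖x t2 - p‖ ≤ ‖x t2 - x t0‖ + ‖x t0 - p‖ := by
    calc ‖x t2 - p‖ = ‖(x t2 - x t0) + (x t0 - p)‖ := by congr 1; abel
      _ ≤ _ := norm_add_le _ _
  linarith

lemma local_sign {U : E → E} (hU : ContDiff ℝ 1 U) (hdiv : ∀ p, dv U p ≠ 0) {x : ℝ → E}
    (hxc : Continuous x) {R : ℝ} (hR : ∀ t, 0 ≤ t → ‖x t‖ ≤ R)
    (h0 : Tendsto (fun t => U (x t)) atTop (𝓝 0)) {p0 : E} (hp0 : MapClusterPt p0 atTop x)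
    (hnt : ¬ Tendsto x atTop (𝓝 p0)) :
    ∃ (p : E) (σ c r : ℝ), MapClusterPt p atTop x ∧ |σ| = 1 ∧ 0 < c ∧ 0 < r ∧
      ∀ z, ‖z - p‖ < r → c * ip (U z) (U z) ≤ σ * ip (U z) (fderiv ℝ U z (U z)) := by
  have hUc := hU.continuous
  have hcl : ∀ {k}, MapClusterPt k atTop x → U k = 0 := fun hk => cluster_eq hUc h0 hk
  obtain ⟨r0, hr0, hfar⟩ : ∃ r0 > 0, ∃ᶠ t in atTop, r0 ≤ ‖x t - p0‖ := by
    rw [Metric.tendsto_nhds] at hnt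
    push Not at hnt
    obtain ⟨r0, hr0, h⟩ := hnt
    exact ⟨r0, hr0, h.mono fun t ht => by rw [← dist_eq_norm]; simpa using ht⟩
  set A := fderiv ℝ U p0 with hA
  have hstrict : HasStrictFDerivAt U A p0 := hU.contDiffAt.hasStrictFDerivAt one_ne_zero
  -- the derivative at p0 has a kernel
  obtain ⟨e, heq, hAe⟩ : ∃ e : E, ip e e = 1 ∧ A e = 0 := by
    suffices h : ∃ e : E, e ≠ 0 ∧ A e = 0 by
      obtain ⟨e, he, hAe⟩ := h
      have hpos := ip_pos he
      have hs := Real.sqrt_pos.2 hpos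
      refine ⟨(√(ip e e))⁻¹ • e, ?_, by simp [hAe]⟩
      have h2 := Real.mul_self_sqrt hpos.le
      have h3 : ip ((√(ip e e))⁻¹ • e) ((√(ip e e))⁻¹ • e)
          = (√(ip e e) * √(ip e e))⁻¹ * ip e e := by
        rw [mul_inv]
        generalize (√(ip e e))⁻¹ = a
        simp only [ip, Pi.smul_apply, smul_eq_mul]; ring
      rw [h3, h2]
      exact inv_mul_cancel₀ hpos.ne'
    by_contra hcon
    push Not at hcon
    have hker : LinearMap.ker (A : E →ₗ[ℝ] E) = ⊥ := by
      rw [LinearMap.ker_eq_bot']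
      intro m hm
      by_contra h
      exact hcon m h hm
    obtain ⟨K, -, hK⟩ := LinearMap.exists_antilipschitzWith (A : E →ₗ[ℝ] E) hker
    have h1 := hstrict.hasFDerivAt.eventually_ne ⟨K, hK⟩ (c := U p0)
    rw [eventually_nhdsWithin_iff, Metric.eventually_nhds_iff] at h1
    obtain ⟨η, hη, h1⟩ := h1
    obtain ⟨k, hk, hk2⟩ := cross hxc hR (g := fun z => ‖z - p0‖) (by fun_prop)
      (c := min r0 (η / 2)) hp0 (show ‖p0 - p0‖ < min r0 (η / 2) by rw [sub_self, norm_zero]; positivity)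
      (hfar.mono fun t ht => (min_le_left _ _).trans ht)
    have h3 : k ≠ p0 := by
      rintro rfl
      have : 0 < min r0 (η / 2) := by positivity
      simp at hk2
      linarith
    refine h1 (y := k) ?_ h3 ?_
    · rw [dist_eq_norm, hk2]
      exact (min_le_right _ _).trans_lt (by linarith)
    · rw [hcl hk, hcl hp0]
  -- adapted coordinates
  let f : E := ![-e 1, e 0]
  have hf0 : f 0 = -e 1 := rfl
  have hf1 : f 1 = e 0 := rfl
  have heq' : e 0 * e 0 + e 1 * e 1 = 1 := heq
  have hdec : ∀ z, z = ip e z • e + dt e z • f := by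
    intro z
    ext i
    fin_cases i
    · simp only [ip, dt, Pi.add_apply, Pi.smul_apply, smul_eq_mul, Fin.zero_eta, hf0]
      linear_combination (- z 0) * heq'
    · simp only [ip, dt, Pi.add_apply, Pi.smul_apply, smul_eq_mul, Fin.mk_one, hf1]
      linear_combination (- z 1) * heq'
  have hne : ‖e‖ ≤ 1 := by
    have := norm_sq_le_ip e
    rw [heq] at this
    nlinarith [norm_nonneg e]
  have hnf : ‖f‖ ≤ 1 := by
    have := norm_sq_le_ip f
    have h2 : ip f f = 1 := by simp only [ip, hf0, hf1]; linarith
    rw [h2] at this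
    nlinarith [norm_nonneg f]
  have hnorm : ∀ z, ‖z‖ ≤ |ip e z| + |dt e z| := by
    intro z
    calc ‖z‖ = ‖ip e z • e + dt e z • f‖ := by rw [← hdec z]
      _ ≤ ‖ip e z • e‖ + ‖dt e z • f‖ := norm_add_le _ _
      _ = |ip e z| * ‖e‖ + |dt e z| * ‖f‖ := by rw [norm_smul, norm_smul]; rfl
      _ ≤ |ip e z| * 1 + |dt e z| * 1 := by gcongr
      _ = _ := by ring
  let b := A f
  have hAz : ∀ z, A z = dt e z • b := by
    intro z
    conv_lhs => rw [hdec z]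
    simp [hAe, b]
  set τ := dv U p0 with hτ
  have hτ0 : τ ≠ 0 := hdiv p0
  have hdtb : dt e b = τ := by
    have h := trace_id A e f
    have h2 : dt e f = 1 := by simp only [dt, hf0, hf1]; linarith
    have h3 : dt (A e) f = 0 := by simp [hAe, dt]
    rw [h2, h3, zero_add, mul_one] at h
    exact h
  have hb : b ≠ 0 := by
    intro h
    apply hτ0
    rw [← hdtb, h]; simp [dt]
  have hAb : A b = τ • b := by rw [hAz, hdtb]
  obtain ⟨σ, δ1, hσ, hδ1, hsign⟩ := sign_nhds A b hb τ hτ0 hAb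
  have hbn : 0 < ‖b‖ := norm_pos_iff.2 hb
  set δ := min δ1 (‖b‖ / 4) with hδdef
  have hδ : 0 < δ := by positivity
  have hδle1 : δ ≤ δ1 := min_le_left _ _
  have hδle2 : δ ≤ ‖b‖ / 4 := min_le_right _ _
  -- neighbourhood
  obtain ⟨η, hη, hlin, hcont⟩ : ∃ η > 0, (∀ z w, ‖z - p0‖ < η → ‖w - p0‖ < η →
      ‖U z - U w - A (z - w)‖ ≤ δ * ‖z - w‖) ∧
      (∀ z, ‖z - p0‖ < η → ‖fderiv ℝ U z - A‖ ≤ δ) := by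
    have h1 := hstrict.isLittleO.def hδ
    rw [nhds_prod_eq] at h1
    obtain ⟨η1, hη1, h1⟩ := Metric.eventually_nhds_iff.1 (by rw [← nhds_prod_eq] at h1; exact h1)
    obtain ⟨η2, hη2, h2⟩ := Metric.continuous_iff.1 (hU.continuous_fderiv one_ne_zero) p0 δ hδ
    refine ⟨min η1 η2, by positivity, fun z w hz hw => ?_, fun z hz => ?_⟩
    · refine h1 (y := (z, w)) ?_
      rw [Prod.dist_eq, dist_eq_norm, dist_eq_norm]
      exact max_lt (hz.trans_le (min_le_left _ _)) (hw.trans_le (min_le_left _ _))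
    · have := h2 z (by rw [dist_eq_norm]; exact hz.trans_le (min_le_right _ _))
      rw [dist_eq_norm] at this
      exact this.le
  -- cone condition
  have hcone : ∀ k, U k = 0 → ‖k - p0‖ < η → |dt e (k - p0)| ≤ |ip e (k - p0)| / 3 := by
    intro k hk hkη
    have h1 := hlin k p0 hkη (by simpa using hη)
    rw [hk, hcl hp0, sub_zero, zero_sub, norm_neg, hAz, norm_smul, Real.norm_eq_abs] at h1
    have h2 := hnorm (k - p0)
    have h3 : |dt e (k - p0)| * ‖b‖ ≤ ‖b‖ / 4 * (|ip e (k - p0)| + |dt e (k - p0)|) :=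
      h1.trans (by gcongr)
    have h4 : ‖b‖ * |dt e (k - p0)| ≤ ‖b‖ * ((|ip e (k - p0)| + |dt e (k - p0)|) / 4) := by linarith
    have h5 := le_of_mul_le_mul_left h4 hbn
    linarith
  set m := min η r0 / 2 with hm
  have hm0 : 0 < m := by positivity
  have h2m : 2 * m ≤ η := by rw [hm]; linarith [min_le_left η r0]
  have h2m' : 2 * m ≤ r0 := by rw [hm]; linarith [min_le_right η r0]
  -- boxes
  have hbox : ∀ s1 s2, 0 < s1 → s1 < m → 0 < s2 → s2 < m → ∃ k, MapClusterPt k atTop x ∧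
      ‖k - p0‖ < η ∧ (ip e (k - p0) = s2 ∨ ip e (k - p0) = -s1) := by
    intro s1 s2 h1 h1m h2 h2m''
    let g : E → ℝ := fun z => max (max (ip e (z - p0) / s2) (-ip e (z - p0) / s1)) (|dt e (z - p0)| / m)
    have hg : Continuous g := by
      simp only [g, ip, dt]; fun_prop
    have hgb : ∀ z, g z ≤ 1 → ip e (z - p0) ≤ s2 ∧ -ip e (z - p0) ≤ s1 ∧ |dt e (z - p0)| ≤ m := by
      intro z hz
      simp only [g, max_le_iff, div_le_one h1, div_le_one h2, div_le_one hm0] at hz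
      exact ⟨hz.1.1, hz.1.2, hz.2⟩
    have hgn : ∀ z, g z ≤ 1 → ‖z - p0‖ < 2 * m := by
      intro z hz
      obtain ⟨a1, a2, a3⟩ := hgb z hz
      have : |ip e (z - p0)| < m := abs_lt.2 ⟨by linarith, by linarith⟩
      linarith [hnorm (z - p0)]
    obtain ⟨k, hk, hk1⟩ := cross hxc hR hg (c := 1) hp0 (by simp [g, ip, dt]) (by
      refine hfar.mono fun t ht => ?_
      by_contra h
      have := hgn (x t) (not_le.1 h).le
      linarith)
    have hkη : ‖k - p0‖ < η := (hgn k hk1.le).trans_le h2m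
    refine ⟨k, hk, hkη, ?_⟩
    obtain ⟨a1, a2, a3⟩ := hgb k hk1.le
    have a4 : |ip e (k - p0)| < m := abs_lt.2 ⟨by linarith, by linarith⟩
    have a5 := hcone k (hcl hk) hkη
    have a6 : |dt e (k - p0)| / m < 1 := by rw [div_lt_one hm0]; linarith [abs_nonneg (ip e (k - p0))]
    by_contra hcon
    push Not at hcon
    have a7 : ip e (k - p0) / s2 < 1 := by rw [div_lt_one h2]; exact lt_of_le_of_ne a1 hcon.1
    have a8 : -ip e (k - p0) / s1 < 1 := by
      rw [div_lt_one h1]; exact lt_of_le_of_ne a2 (fun h => hcon.2 (by linarith))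
    have : g k < 1 := max_lt (max_lt a7 a8) a6
    linarith
  -- one side is filled with equilibria
  obtain ⟨s0, hs0⟩ : ∃ s0 : ℝ, ∀ s, |s - s0| < m / 2 → ∃ k, MapClusterPt k atTop x ∧
      ‖k - p0‖ < η ∧ ip e (k - p0) = s := by
    by_contra hcon
    push Not at hcon
    obtain ⟨s2, hs2, hn2⟩ := hcon (m / 2)
    obtain ⟨s1, hs1, hn1⟩ := hcon (-(m / 2))
    rw [abs_lt] at hs1 hs2
    obtain ⟨k, hk, hkη, h⟩ := hbox (-s1) s2 (by linarith) (by linarith) (by linarith) (by linarith)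
    rcases h with h | h
    · exact hn2 k hk hkη h
    · exact hn1 k hk hkη (by linarith)
  obtain ⟨p, hp, hpη, hps⟩ := hs0 s0 (by simpa using hm0)
  -- neighbourhood of p
  have hev : ∀ᶠ z in 𝓝 p, ‖z - p0‖ < η ∧ |ip e (z - p0) - s0| < m / 2 := by
    have c1 : Continuous fun z => ‖z - p0‖ := by fun_prop
    have c2 : Continuous fun z => |ip e (z - p0) - s0| := by simp only [ip]; fun_prop
    exact (c1.continuousAt.eventually (gt_mem_nhds hpη)).and
      (c2.continuousAt.eventually (gt_mem_nhds (show |ip e (p - p0) - s0| < m / 2 by rw [hps]; simpa using hm0)))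
  obtain ⟨r, hr, hball⟩ := Metric.eventually_nhds_iff.1 hev
  refine ⟨p, σ, |τ| / 2, r, hp, hσ, by have := abs_pos.2 hτ0; positivity, hr, fun z hz => ?_⟩
  obtain ⟨hzη, hzs⟩ := hball (y := z) (by rw [dist_eq_norm]; exact hz)
  obtain ⟨k, hk, hkη, hks⟩ := hs0 _ hzs
  set v := dt e (z - k) with hv
  have hzk : z - k = v • f := by
    have h1 := hdec (z - k)
    have h2 : ip e (z - k) = 0 := by
      simp only [ip, Pi.sub_apply] at hks ⊢
      linarith
    rw [h2, zero_smul, zero_add] at h1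
    exact h1
  have h1 := hlin z k hzη hkη
  rw [hcl hk, sub_zero, hAz, ← hv] at h1
  have h2 : ‖z - k‖ ≤ |v| := by
    rw [hzk, norm_smul, Real.norm_eq_abs]
    exact mul_le_of_le_one_right (abs_nonneg _) hnf
  have h3 : ‖U z - v • b‖ ≤ δ * |v| := h1.trans (by gcongr)
  by_cases hv0 : v = 0
  · have : U z = 0 := by
      rw [hv0] at h3
      simpa using h3
    simp [this, ip]
  · let g := v⁻¹ • (U z - v • b)
    have hg : ‖g‖ ≤ δ1 := by
      simp only [g]
      rw [norm_smul, norm_inv, Real.norm_eq_abs, inv_mul_le_iff₀ (abs_pos.2 hv0)]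
      calc _ ≤ δ * |v| := h3
        _ ≤ |v| * δ1 := by rw [mul_comm]; gcongr
    have hUz : U z = v • (b + g) := by
      simp only [g]
      rw [smul_add, smul_inv_smul₀ hv0]; abel
    have h4 := hsign g (fderiv ℝ U z) hg ((hcont z hzη).trans hδle1)
    rw [hUz, map_smul]
    have h5 : ∀ u w : E, ip (v • u) (v • w) = v ^ 2 * ip u w := by
      intro u w; simp only [ip, Pi.smul_apply, smul_eq_mul]; ring
    rw [h5, h5]
    nlinarith [sq_nonneg v]

lemma stays {U : E → E} (hU : ContDiff ℝ 1 U) {x : ℝ → E}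
    (hx : ∀ t, HasDerivAt x (U (x t)) t) {R : ℝ} (hR : ∀ t, 0 ≤ t → ‖x t‖ ≤ R)
    {t0 : ℝ} (ht0 : 0 ≤ t0) (h0 : U (x t0) = 0) {t : ℝ} (ht : t0 ≤ t) : x t = x t0 := by
  have hxc : Continuous x := continuous_iff_continuousAt.2 fun t => (hx t).continuousAt
  obtain ⟨M, L, -, hL0, -, -, hL⟩ := bounds hU R
  have hlip : LipschitzOnWith ⟨L, hL0⟩ U (Metric.closedBall 0 R) := by
    refine LipschitzOnWith.of_dist_le_mul fun z hz w hw => ?_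
    rw [dist_eq_norm, dist_eq_norm]
    exact hL z w (by simpa using hz) (by simpa using hw)
  have := ODE_solution_unique_of_mem_Icc_right (v := fun _ => U) (s := fun _ => Metric.closedBall 0 R)
    (a := t0) (b := t) (f := x) (g := fun _ => x t0) (fun _ _ => hlip) hxc.continuousOn
    (fun s _ => (hx s).hasDerivWithinAt) (fun s hs => by simpa using hR s (ht0.trans hs.1))
    continuousOn_const (fun s _ => by rw [h0]; exact hasDerivWithinAt_const _ _ _)
    (fun s hs => by simpa using hR t0 ht0) rfl
  exact this ⟨ht, le_rfl⟩

end PBR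

/-- Poincaré–Bendixson refinement under the Bendixson criterion:
if a C¹ planar vector field has nowhere-vanishing divergence, then every
solution of `x' = U x` with bounded forward orbit converges to an
equilibrium point of `U`. -/
theorem poincare_bendixson_refinement
    (U : (Fin 2 → ℝ) → (Fin 2 → ℝ))
    (hU : ContDiff ℝ 1 U)
    (hdiv : ∀ p : Fin 2 → ℝ,
      fderiv ℝ U p (Pi.single 0 1) 0 + fderiv ℝ U p (Pi.single 1 1) 1 ≠ 0)
    (x : ℝ → (Fin 2 → ℝ))
    (hx : ∀ t : ℝ, HasDerivAt x (U (x t)) t)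
    (hbdd : Bornology.IsBounded (x '' Set.Ici (0 : ℝ))) :
    ∃ p : Fin 2 → ℝ, U p = 0 ∧
      Filter.Tendsto x Filter.atTop (nhds p) := by
  have hxc : Continuous x := continuous_iff_continuousAt.2 fun t => (hx t).continuousAt
  obtain ⟨R, hR'⟩ := hbdd.exists_norm_le
  have hR : ∀ t, 0 ≤ t → ‖x t‖ ≤ R := fun t ht => hR' _ (Set.mem_image_of_mem _ ht)
  have h0 := PBR.U_tendsto_zero hU hdiv hx hR
  suffices h : ∃ p, Tendsto x atTop (𝓝 p) by
    obtain ⟨p, hp⟩ := h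
    exact ⟨p, tendsto_nhds_unique ((hU.continuous.tendsto p).comp hp) h0, hp⟩
  by_cases hne : ∀ t, 0 ≤ t → U (x t) ≠ 0
  · obtain ⟨p0, -, hp0⟩ := (isCompact_closedBall (0 : Fin 2 → ℝ) R).exists_mapClusterPt_of_frequently
      (f := x) (l := atTop) (Eventually.frequently (by
        filter_upwards [eventually_ge_atTop 0] with t ht
        simpa using hR t ht))
    by_cases ht : Tendsto x atTop (𝓝 p0)
    · exact ⟨p0, ht⟩
    · obtain ⟨p, σ, c, r, hp, hσ, hc, hr, hs⟩ := PBR.local_sign hU hdiv hxc hR h0 hp0 ht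
      exact ⟨p, PBR.trap hU hx h0 hne hp hσ hc hr hs⟩
  · push Not at hne
    obtain ⟨t0, ht0, hz⟩ := hne
    refine ⟨x t0, tendsto_const_nhds.congr' ?_⟩
    filter_upwards [eventually_ge_atTop t0] with t ht
    exact (PBR.stays hU hx hR ht0 hz ht).symm
end

section
/- Let U : ℝ² → ℝ² be a continuously differentiable vector field such that (i) for each i ∈ {1,2} and every m ∈ ℝ² with mᵢ > 1, the partial derivative ∂Uᵢ/∂mᵢ(m) < 0, and (ii) Uᵢ(m) ≥ 0 whenever mᵢ = 1. Let m : [0,∞) → ℝ² be a solution of m'(t) = U(m(t)) with m(0) ∈ (1,∞)² and with bounded forward orbit. Then m(t) converges as t → ∞ to a point p ∈ [1,∞)² with U(p) = 0. -/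
section RosHelpers

open MeasureTheory Set Filter Topology

lemma rosDivZero (f S : ℝ × ℝ → ℝ) (hf : ContDiff ℝ 1 f) (hS : ContDiff ℝ 1 S)
    (hc : HasCompactSupport S) (v : ℝ × ℝ) :
    ∫ p, f p * fderiv ℝ S p v = - ∫ p, fderiv ℝ f p v * S p := by
  have cS : Continuous fun p => fderiv ℝ S p v := by
    exact (hS.continuous_fderiv (by norm_num)).clm_apply continuous_const
  have cf : Continuous fun p => fderiv ℝ f p v := by
    exact (hf.continuous_fderiv (by norm_num)).clm_apply continuous_const
  have hc' : HasCompactSupport fun p => fderiv ℝ S p v := hc.fderiv_apply ℝ v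
  refine integral_mul_fderiv_eq_neg_fderiv_mul_of_integrable ?_ ?_ ?_ ?_ ?_
  · exact (cf.mul hS.continuous).integrable_of_hasCompactSupport hc.mul_left
  · exact (hf.continuous.mul cS).integrable_of_hasCompactSupport hc'.mul_left
  · exact (hf.continuous.mul hS.continuous).integrable_of_hasCompactSupport hc.mul_left
  · intro x _; exact hf.differentiable (by norm_num) x
  · intro x _; exact hS.differentiable (by norm_num) x

lemma rosArea (f g χ : ℝ × ℝ → ℝ) (hf : ContDiff ℝ 1 f) (hg : ContDiff ℝ 1 g)
    (hχ : ContDiff ℝ 1 χ) (hc : HasCompactSupport χ)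
    (hdiv : ∀ p ∈ tsupport χ, fderiv ℝ f p (1, 0) + fderiv ℝ g p (0, 1) ≤ 0) :
    ∫ p, |χ p| * (-(fderiv ℝ f p (1, 0) + fderiv ℝ g p (0, 1))) ≤
      ∫ p, |f p * fderiv ℝ χ p (1, 0) + g p * fderiv ℝ χ p (0, 1)| := by
  have cχ (v : ℝ × ℝ) : Continuous fun p => fderiv ℝ χ p v :=
    (hχ.continuous_fderiv (by norm_num)).clm_apply continuous_const
  have cf : Continuous fun p => fderiv ℝ f p (1, 0) :=
    (hf.continuous_fderiv (by norm_num)).clm_apply continuous_const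
  have cg : Continuous fun p => fderiv ℝ g p (0, 1) :=
    (hg.continuous_fderiv (by norm_num)).clm_apply continuous_const
  have hc' (v : ℝ × ℝ) : HasCompactSupport fun p => fderiv ℝ χ p v := hc.fderiv_apply ℝ v
  set D : ℝ × ℝ → ℝ := fun p => -(fderiv ℝ f p (1, 0) + fderiv ℝ g p (0, 1)) with hD
  have cD : Continuous D := (cf.add cg).neg
  have hDI : IntegrableOn (fun p => D p) (tsupport χ) :=
    cD.continuousOn.integrableOn_compact hc
  have ms : MeasurableSet (tsupport χ) := (isClosed_tsupport χ).measurableSet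
  have intR : Integrable fun p => |f p * fderiv ℝ χ p (1, 0) + g p * fderiv ℝ χ p (0, 1)| := by
    apply Integrable.abs
    refine Integrable.add ?_ ?_
    · exact (hf.continuous.mul (cχ _)).integrable_of_hasCompactSupport (hc' _).mul_left
    · exact (hg.continuous.mul (cχ _)).integrable_of_hasCompactSupport (hc' _).mul_left
  have key : ∀ δ > 0, ∫ p, |χ p| * D p ≤
      (∫ p, |f p * fderiv ℝ χ p (1, 0) + g p * fderiv ℝ χ p (0, 1)|) +
        δ * ∫ p in tsupport χ, D p := by
    intro δ hδ
    have pos : ∀ p, 0 < χ p ^ 2 + δ ^ 2 := fun p => by positivity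
    set S : ℝ × ℝ → ℝ := fun p => √(χ p ^ 2 + δ ^ 2) - δ with hSdef
    have hS : ContDiff ℝ 1 S :=
      ContDiff.sub (ContDiff.sqrt (by fun_prop) (fun p => (pos p).ne')) contDiff_const
    have hSc : HasCompactSupport S := by
      have : S = (fun r : ℝ => √(r ^ 2 + δ ^ 2) - δ) ∘ χ := rfl
      rw [this]
      apply hc.comp_left
      simp [Real.sqrt_sq hδ.le]
    have hSd : ∀ p v, fderiv ℝ S p v = χ p / √(χ p ^ 2 + δ ^ 2) * fderiv ℝ χ p v := by
      intro p v
      have h1 : HasFDerivAt χ (fderiv ℝ χ p) p :=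
        (hχ.differentiable (by norm_num) p).hasFDerivAt
      have h2 := (((h1.pow 2).add_const (δ ^ 2)).sqrt (pos p).ne').sub_const δ
      rw [HasFDerivAt.fderiv h2]
      simp
      field_simp
    have e1 := rosDivZero f S hf hS hSc (1, 0)
    have e2 := rosDivZero g S hg hS hSc (0, 1)
    have cS (v : ℝ × ℝ) : Continuous fun p => fderiv ℝ S p v :=
      (hS.continuous_fderiv (by norm_num)).clm_apply continuous_const
    have hSc' (v : ℝ × ℝ) : HasCompactSupport fun p => fderiv ℝ S p v := hSc.fderiv_apply ℝ v
    have i1 : Integrable fun p => f p * fderiv ℝ S p (1, 0) :=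
      (hf.continuous.mul (cS _)).integrable_of_hasCompactSupport (hSc' _).mul_left
    have i2 : Integrable fun p => g p * fderiv ℝ S p (0, 1) :=
      (hg.continuous.mul (cS _)).integrable_of_hasCompactSupport (hSc' _).mul_left
    have i3 : Integrable fun p => fderiv ℝ f p (1, 0) * S p :=
      (cf.mul hS.continuous).integrable_of_hasCompactSupport hSc.mul_left
    have i4 : Integrable fun p => fderiv ℝ g p (0, 1) * S p :=
      (cg.mul hS.continuous).integrable_of_hasCompactSupport hSc.mul_left
    have e3 : ∫ p, S p * D p = ∫ p, (f p * fderiv ℝ S p (1, 0) + g p * fderiv ℝ S p (0, 1)) := by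
      rw [integral_add i1 i2, e1, e2, ← neg_add, ← integral_add i3 i4, ← integral_neg]
      congr 1; ext p; simp only [hD]; ring
    have e4 : ∫ p, S p * D p ≤
        ∫ p, |f p * fderiv ℝ χ p (1, 0) + g p * fderiv ℝ χ p (0, 1)| := by
      rw [e3]
      refine integral_mono (i1.add i2) intR ?_
      intro p
      simp only [hSd]
      have : f p * (χ p / √(χ p ^ 2 + δ ^ 2) * fderiv ℝ χ p (1, 0)) +
          g p * (χ p / √(χ p ^ 2 + δ ^ 2) * fderiv ℝ χ p (0, 1)) =
          (χ p / √(χ p ^ 2 + δ ^ 2)) *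
          (f p * fderiv ℝ χ p (1, 0) + g p * fderiv ℝ χ p (0, 1)) := by ring
      rw [this]
      refine (le_abs_self _).trans ?_
      rw [abs_mul]
      refine mul_le_of_le_one_left (abs_nonneg _) ?_
      rw [abs_div, abs_of_nonneg (Real.sqrt_nonneg _)]
      refine div_le_one_of_le₀ ?_ (Real.sqrt_nonneg _)
      apply Real.abs_le_sqrt
      nlinarith [sq_nonneg δ]
    have iS : Integrable fun p => S p * D p :=
      (hS.continuous.mul cD).integrable_of_hasCompactSupport hSc.mul_right
    have iχ : Integrable fun p => |χ p| * D p := by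
      have : HasCompactSupport fun p => |χ p| := by
        have := hc.comp_left (g := fun r : ℝ => |r|) (by simp)
        exact this
      exact (hχ.continuous.abs.mul cD).integrable_of_hasCompactSupport this.mul_right
    have hδD : IntegrableOn (fun p => δ * D p) (tsupport χ) := hDI.const_mul δ
    have e5 : ∫ p, |χ p| * D p ≤ ∫ p, (S p * D p + (tsupport χ).indicator (fun p => δ * D p) p) := by
      refine integral_mono iχ (iS.add (hδD.integrable_indicator ms)) ?_
      intro p
      by_cases hp : p ∈ tsupport χ
      · simp only [indicator_of_mem hp]
        have hDp : 0 ≤ D p := by have := hdiv p hp; simp only [hD]; linarith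
        have : |χ p| ≤ √(χ p ^ 2 + δ ^ 2) := Real.abs_le_sqrt (by nlinarith [sq_nonneg δ])
        simp only [hSdef]
        nlinarith
      · have h0 : χ p = 0 := image_eq_zero_of_notMem_tsupport hp
        simp [indicator_of_notMem hp, hSdef, h0, Real.sqrt_sq hδ.le]
    rw [integral_add iS (hδD.integrable_indicator ms), integral_indicator ms,
      integral_const_mul] at e5
    linarith
  refine le_of_forall_pos_le_add fun ε hε => ?_
  set I := ∫ p in tsupport χ, D p
  have := key (ε / (|I| + 1)) (by positivity)
  have h2 : ε / (|I| + 1) * I ≤ ε := by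
    rw [div_mul_eq_mul_div, div_le_iff₀ (by positivity)]
    nlinarith [le_abs_self I]
  linarith

structure RosKer (ε : ℝ) (K k k' : ℝ → ℝ) (C : ℝ) : Prop where
  hK : ∀ y, HasDerivAt K (k y) y
  hk : ∀ y, HasDerivAt k (k' y) y
  ck' : Continuous k'
  nn : ∀ y, 0 ≤ k y
  k0 : ∀ y, ε ≤ |y| → k y = 0
  Kl : ∀ y, y ≤ -ε → K y = 0
  Kr : ∀ y, ε ≤ y → K y = 1
  ik : ∫ y, k y = 1
  bK : ∀ y, |K y| ≤ C
  bk : ∀ y, |k y| ≤ C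
  bk' : ∀ y, |k' y| ≤ C

lemma RosKer.cK {ε : ℝ} {K k k' : ℝ → ℝ} {C : ℝ} (h : RosKer ε K k k' C) : Continuous K :=
  continuous_iff_continuousAt.2 fun y => (h.hK y).continuousAt

lemma RosKer.ck {ε : ℝ} {K k k' : ℝ → ℝ} {C : ℝ} (h : RosKer ε K k k' C) : Continuous k :=
  continuous_iff_continuousAt.2 fun y => (h.hk y).continuousAt

lemma rosKer_exists (ε : ℝ) (hε : 0 < ε) : ∃ K k k' C, RosKer ε K k k' C := by
  let b : ContDiffBump (0 : ℝ) := ⟨ε / 2, ε, by positivity, by linarith⟩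
  set k : ℝ → ℝ := b.normed volume with hkdef
  have hkc : ContDiff ℝ 1 k := b.contDiff_normed
  have ck : Continuous k := hkc.continuous
  have k0 : ∀ y, ε ≤ |y| → k y = 0 := by
    intro y hy
    by_contra hne
    have : y ∈ Function.support k := hne
    rw [hkdef, b.support_normed_eq] at this
    simp only [Metric.mem_ball, dist_zero_right, Real.norm_eq_abs] at this
    exact absurd this (not_lt.2 hy)
  have hcs : HasCompactSupport k := b.hasCompactSupport_normed
  have cdk : Continuous (deriv k) := hkc.continuous_deriv (by norm_num)
  have nn : ∀ y, 0 ≤ k y := b.nonneg_normed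
  have ik : ∫ y, k y = 1 := b.integral_normed
  set K : ℝ → ℝ := fun y => ∫ t in (-ε)..y, k t with hKdef
  have Kl : ∀ y, y ≤ -ε → K y = 0 := by
    intro y hy
    rw [hKdef]
    refine intervalIntegral.integral_zero_ae (Eventually.of_forall fun t ht => k0 t ?_)
    rw [uIoc_of_ge hy] at ht
    rw [abs_of_nonpos (by linarith [ht.2])]; linarith [ht.2]
  have Kr : ∀ y, ε ≤ y → K y = 1 := by
    intro y hy
    rw [← ik]
    refine intervalIntegral.integral_eq_integral_of_support_subset ?_
    intro t ht
    by_contra hcon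
    apply ht
    apply k0
    by_contra hlt
    push Not at hlt
    rw [abs_lt] at hlt
    exact hcon ⟨hlt.1, by linarith [hlt.2]⟩
  have hK : ∀ y, HasDerivAt K (k y) y := fun y =>
    intervalIntegral.integral_hasDerivAt_right (ck.intervalIntegrable _ _)
      (ck.stronglyMeasurableAtFilter _ _) ck.continuousAt
  have cK : Continuous K := continuous_iff_continuousAt.2 fun y => (hK y).continuousAt
  obtain ⟨C1, h1⟩ := hcs.exists_bound_of_continuous ck
  obtain ⟨C2, h2⟩ := hcs.deriv.exists_bound_of_continuous cdk
  obtain ⟨C3, h3⟩ := (isCompact_Icc (a := -ε) (b := ε)).exists_bound_of_continuousOn cK.continuousOn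
  refine ⟨K, k, deriv k, max (max C1 C2) (max C3 1), hK, fun y =>
    (hkc.differentiable (by norm_num) y).hasDerivAt, cdk, nn, k0, Kl, Kr, ik, ?_, ?_, ?_⟩
  · intro y
    rcases le_total y (-ε) with h | h
    · rw [Kl y h]; simp
    · rcases le_total ε y with h' | h'
      · rw [Kr y h']; simp
      · exact (h3 y ⟨h, h'⟩).trans (by simp)
  · intro y; exact (h1 y).trans (by simp)
  · intro y; exact (h2 y).trans (by simp)

structure RosPath (X Y V W : ℝ → ℝ) (a b c B x0 x1 y0 y1 : ℝ) : Prop where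
  hab : a ≤ b
  cX : Continuous X
  cY : Continuous Y
  mV : Measurable V
  mW : Measurable W
  bV : ∀ s, |V s| ≤ B
  bW : ∀ s, |W s| ≤ B
  dX : ∀ s ∈ Ioo a b, s ≠ c → HasDerivAt X (V s) s
  dY : ∀ s ∈ Ioo a b, s ≠ c → HasDerivAt Y (W s) s
  eX : X a = X b
  eY : Y a = Y b
  rX : ∀ s, X s ∈ Icc x0 x1
  rY : ∀ s, Y s ∈ Icc y0 y1

lemma rosIntBdd {a b M : ℝ} {F : ℝ → ℝ} (hF : Measurable F) (hb : ∀ s, |F s| ≤ M) :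
    Integrable F (volume.restrict (Ioc a b)) :=
  Integrable.of_bound hF.aestronglyMeasurable M (Eventually.of_forall hb)

lemma rosFub {X Y v : ℝ → ℝ} {a b B x0 x1 y0 y1 ε C : ℝ} {K k k' : ℝ → ℝ}
    (hk : RosKer ε K k k' C) (cX : Continuous X) (cY : Continuous Y)
    (rX : ∀ s, X s ∈ Icc x0 x1) (rY : ∀ s, Y s ∈ Icc y0 y1)
    (mv : Measurable v) (bv : ∀ s, |v s| ≤ B) (G : ℝ × ℝ → ℝ) (cG : Continuous G) :
    Integrable (Function.uncurry fun (p : ℝ × ℝ) (s : ℝ) =>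
      G p * (k (p.1 - X s) * k (p.2 - Y s)) * v s)
      ((volume : Measure (ℝ × ℝ)).prod (volume.restrict (Ioc a b))) := by
  have ck := hk.ck
  set R : Set (ℝ × ℝ) := Icc (x0 - ε) (x1 + ε) ×ˢ Icc (y0 - ε) (y1 + ε) with hR
  have cR : IsCompact R := isCompact_Icc.prod isCompact_Icc
  obtain ⟨CG, hG⟩ := cR.exists_bound_of_continuousOn cG.continuousOn
  have iR : Integrable (R.indicator fun _ => CG * (C * C)) (volume : Measure (ℝ × ℝ)) := by
    apply IntegrableOn.integrable_indicator _ cR.measurableSet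
    exact continuous_const.continuousOn.integrableOn_compact cR
  have iB : Integrable (fun _ : ℝ => B) (volume.restrict (Ioc a b)) :=
    rosIntBdd measurable_const (fun _ => le_rfl)
  refine (iR.mul_prod iB).mono' ?_ (Eventually.of_forall ?_)
  · refine AEStronglyMeasurable.mul ?_ ?_
    · apply Continuous.aestronglyMeasurable
      fun_prop
    · exact (mv.comp measurable_snd).aestronglyMeasurable
  · rintro ⟨p, s⟩
    simp only [Function.uncurry]
    by_cases hp : p ∈ R
    · rw [indicator_of_mem hp, norm_mul, norm_mul, norm_mul]
      have h1 := hG p hp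
      have h2 := hk.bk (p.1 - X s)
      have h3 := hk.bk (p.2 - Y s)
      have h4 := bv s
      have hC : 0 ≤ C := (abs_nonneg _).trans h2
      have hCG : 0 ≤ CG := (norm_nonneg _).trans h1
      simp only [Real.norm_eq_abs] at *
      gcongr
    · have : k (p.1 - X s) * k (p.2 - Y s) = 0 := by
        by_contra hne
        apply hp
        have hx : |p.1 - X s| < ε := by
          by_contra h; exact hne (by rw [hk.k0 _ (not_lt.1 h)]; simp)
        have hy : |p.2 - Y s| < ε := by
          by_contra h; exact hne (by rw [hk.k0 _ (not_lt.1 h)]; simp)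
        rw [abs_lt] at hx hy
        have := rX s; have := rY s
        simp only [mem_Icc] at *
        refine ⟨⟨?_, ?_⟩, ⟨?_, ?_⟩⟩ <;> linarith
      rw [this, indicator_of_notMem hp]; simp

lemma rosKer_int {ε C : ℝ} {K k k' : ℝ → ℝ} (hk : RosKer ε K k k' C) (x y : ℝ) :
    ∫ p : ℝ × ℝ, k (p.1 - x) * k (p.2 - y) = 1 := by
  have h := integral_prod_mul (μ := (volume : Measure ℝ)) (ν := (volume : Measure ℝ))
    (fun t => k (t - x)) (fun t => k (t - y))
  rw [← Measure.volume_eq_prod] at h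
  rw [h, integral_sub_right_eq_self k, integral_sub_right_eq_self k, hk.ik]; simp

noncomputable def rosChi (K k X Y V : ℝ → ℝ) (a b : ℝ) (p : ℝ × ℝ) : ℝ :=
  ∫ s in Ioc a b, -(k (p.1 - X s) * K (p.2 - Y s) * V s)

lemma rosFTC {F F' : ℝ → ℝ} {a b c M : ℝ} (hab : a ≤ b) (cF : Continuous F)
    (mF' : Measurable F') (bF' : ∀ s, |F' s| ≤ M)
    (d : ∀ s ∈ Ioo a b, s ≠ c → HasDerivAt F (F' s) s) :
    ∫ s in Ioc a b, F' s = F b - F a := by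
  rw [← intervalIntegral.integral_of_le hab]
  refine integral_eq_of_hasDerivAt_off_countable_of_le F F' hab (countable_singleton c)
    cF.continuousOn (fun x hx => d x hx.1 (by simpa using hx.2)) ?_
  rw [intervalIntegrable_iff_integrableOn_Ioc_of_le hab]
  exact rosIntBdd mF' bF'

lemma rosChi_deriv {X Y V W : ℝ → ℝ} {a b c B x0 x1 y0 y1 ε C : ℝ} {K k k' : ℝ → ℝ}
    (hk : RosKer ε K k k' C) (hp : RosPath X Y V W a b c B x0 x1 y0 y1) :
    ContDiff ℝ 1 (rosChi K k X Y V a b) ∧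
    (∀ p, fderiv ℝ (rosChi K k X Y V a b) p (1, 0) =
      ∫ s in Ioc a b, k (p.1 - X s) * k (p.2 - Y s) * W s) ∧
    (∀ p, fderiv ℝ (rosChi K k X Y V a b) p (0, 1) =
      - ∫ s in Ioc a b, k (p.1 - X s) * k (p.2 - Y s) * V s) := by
  have ck := hk.ck
  have cK := hk.cK
  have ck' := hk.ck'
  have cX := hp.cX
  have cY := hp.cY
  have mX := cX.measurable
  have mY := cY.measurable
  have mk := ck.measurable
  have mK := cK.measurable
  have mk' := ck'.measurable
  have mV := hp.mV
  have mW := hp.mW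
  have hC : 0 ≤ C := (abs_nonneg _).trans (hk.bk 0)
  have hB : 0 ≤ B := (abs_nonneg _).trans (hp.bV 0)
  let A : ℝ × ℝ → ℝ → ℝ := fun p s => -(k' (p.1 - X s) * K (p.2 - Y s) * V s)
  let D : ℝ × ℝ → ℝ → ℝ := fun p s => -(k (p.1 - X s) * k (p.2 - Y s) * V s)
  let F' : ℝ × ℝ → ℝ → (ℝ × ℝ →L[ℝ] ℝ) := fun p s =>
    A p s • ContinuousLinearMap.fst ℝ ℝ ℝ + D p s • ContinuousLinearMap.snd ℝ ℝ ℝ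
  have mA : ∀ p, Measurable (A p) := fun p => by fun_prop
  have mD : ∀ p, Measurable (D p) := fun p => by fun_prop
  have bA : ∀ p s, |A p s| ≤ C * C * B := by
    intro p s
    simp only [A, abs_neg, abs_mul]
    have h1 := hk.bk' (p.1 - X s)
    have h2 := hk.bK (p.2 - Y s)
    have h3 := hp.bV s
    gcongr
  have bD : ∀ p s, |D p s| ≤ C * C * B := by
    intro p s
    simp only [D, abs_neg, abs_mul]
    have h1 := hk.bk (p.1 - X s)
    have h2 := hk.bk (p.2 - Y s)
    have h3 := hp.bV s
    gcongr
  have mF' : ∀ p, AEStronglyMeasurable (F' p) (volume.restrict (Ioc a b)) := by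
    intro p
    refine AEStronglyMeasurable.add ?_ ?_
    · exact (mA p).aestronglyMeasurable.smul_const _
    · exact (mD p).aestronglyMeasurable.smul_const _
  have bF' : ∀ p s, ‖F' p s‖ ≤ C * C * B + C * C * B := by
    intro p s
    refine (norm_add_le _ _).trans (add_le_add ?_ ?_)
    · rw [norm_smul]
      exact (mul_le_of_le_one_right (norm_nonneg _) (ContinuousLinearMap.norm_fst_le ..)).trans (bA p s)
    · rw [norm_smul]
      exact (mul_le_of_le_one_right (norm_nonneg _) (ContinuousLinearMap.norm_snd_le ..)).trans (bD p s)
  have iF' : ∀ p, Integrable (F' p) (volume.restrict (Ioc a b)) := fun p =>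
    Integrable.of_bound (mF' p) _ (Eventually.of_forall (bF' p))
  have hd : ∀ p, HasFDerivAt (rosChi K k X Y V a b) (∫ s in Ioc a b, F' p s) p := by
    intro p
    refine hasFDerivAt_integral_of_dominated_of_fderiv_le (s := univ)
      (bound := fun _ => C * C * B + C * C * B) univ_mem
      (Eventually.of_forall fun q => ?_) ?_ (mF' p)
      (Eventually.of_forall fun s q _ => bF' q s) ?_ (Eventually.of_forall fun s q _ => ?_)
    · apply Measurable.aestronglyMeasurable; fun_prop
    · refine rosIntBdd (M := C * C * B) (by fun_prop) fun s => ?_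
      simp only [abs_neg, abs_mul]
      have h1 := hk.bk (p.1 - X s)
      have h2 := hk.bK (p.2 - Y s)
      have h3 := hp.bV s
      gcongr
    · exact integrable_const _
    · have h1 : HasFDerivAt (fun q : ℝ × ℝ => k (q.1 - X s))
          (k' (q.1 - X s) • ContinuousLinearMap.fst ℝ ℝ ℝ) q :=
        (hk.hk (q.1 - X s)).comp_hasFDerivAt q (hasFDerivAt_fst.sub_const (X s))
      have h2 : HasFDerivAt (fun q : ℝ × ℝ => K (q.2 - Y s))
          (k (q.2 - Y s) • ContinuousLinearMap.snd ℝ ℝ ℝ) q :=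
        (hk.hK (q.2 - Y s)).comp_hasFDerivAt q (hasFDerivAt_snd.sub_const (Y s))
      have h3 := ((h1.mul h2).mul_const (V s)).neg
      refine h3.congr_fderiv ?_
      ext <;> simp [F', A, D] <;> ring
  have hf : ∀ p, fderiv ℝ (rosChi K k X Y V a b) p = ∫ s in Ioc a b, F' p s :=
    fun p => (hd p).fderiv
  refine ⟨?_, ?_, ?_⟩
  · rw [contDiff_one_iff_hasFDerivAt]
    refine ⟨_, ?_, hd⟩
    refine continuous_of_dominated mF' (fun p => Eventually.of_forall (bF' p))
      (integrable_const _) (Eventually.of_forall fun s => ?_)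
    simp only [F', A, D]
    fun_prop
  · intro p
    rw [hf, ContinuousLinearMap.integral_apply (iF' p)]
    have e : ∀ s, F' p s (1, 0) = A p s := by intro s; simp [F']
    simp only [e]
    have h0 : ∫ s in Ioc a b, (A p s - k (p.1 - X s) * k (p.2 - Y s) * W s) =
        k (p.1 - X b) * K (p.2 - Y b) - k (p.1 - X a) * K (p.2 - Y a) := by
      refine rosFTC (F := fun s => k (p.1 - X s) * K (p.2 - Y s)) (c := c)
        (M := C * C * B + C * C * B) hp.hab (by fun_prop) (by fun_prop) ?_ ?_
      · intro s
        refine (abs_sub _ _).trans (add_le_add (bA p s) ?_)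
        simp only [abs_mul]
        have h1 := hk.bk (p.1 - X s)
        have h2 := hk.bk (p.2 - Y s)
        have h3 := hp.bW s
        gcongr
      · intro s hs hc
        have h1 := (hk.hk (p.1 - X s)).comp s ((hp.dX s hs hc).const_sub p.1)
        have h2 := (hk.hK (p.2 - Y s)).comp s ((hp.dY s hs hc).const_sub p.2)
        refine (h1.mul h2).congr_deriv ?_
        simp only [Function.comp, A]; ring
    rw [hp.eX, hp.eY, sub_self, integral_sub (rosIntBdd (mA p) (bA p))] at h0
    · linarith
    · refine rosIntBdd (M := C * C * B) (by fun_prop) fun s => ?_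
      simp only [abs_mul]
      have h1 := hk.bk (p.1 - X s)
      have h2 := hk.bk (p.2 - Y s)
      have h3 := hp.bW s
      gcongr
  · intro p
    rw [hf, ContinuousLinearMap.integral_apply (iF' p), ← integral_neg]
    simp [F', D]

lemma rosChi_supp {X Y V W : ℝ → ℝ} {a b c B x0 x1 y0 y1 ε C : ℝ} {K k k' : ℝ → ℝ}
    (hk : RosKer ε K k k' C) (hp : RosPath X Y V W a b c B x0 x1 y0 y1) (p : ℝ × ℝ)
    (hpR : p ∉ Icc (x0 - ε) (x1 + ε) ×ˢ Icc (y0 - ε) (y1 + ε)) :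
    rosChi K k X Y V a b p = 0 := by
  have ck := hk.ck
  have cK := hk.cK
  have cX := hp.cX
  have mX := cX.measurable
  have mk := ck.measurable
  have mV := hp.mV
  have hC : 0 ≤ C := (abs_nonneg _).trans (hk.bk 0)
  unfold rosChi
  by_cases h1 : p.1 ∈ Icc (x0 - ε) (x1 + ε)
  · by_cases h2 : p.2 < y0 - ε
    · have : ∀ s, -(k (p.1 - X s) * K (p.2 - Y s) * V s) = 0 := by
        intro s
        rw [hk.Kl _ (by linarith [(hp.rY s).1])]; simp
      simp [this]
    · have h3 : y1 + ε < p.2 := by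
        by_contra h; exact hpR ⟨h1, not_lt.1 h2, not_lt.1 h⟩
      have e : ∀ s, -(k (p.1 - X s) * K (p.2 - Y s) * V s) = -(k (p.1 - X s) * V s) := by
        intro s
        rw [hk.Kr _ (by linarith [(hp.rY s).2])]; simp
      simp only [e]
      rw [rosFTC (F := fun s => K (p.1 - X s)) (c := c) (M := C * B) hp.hab (by fun_prop)
        (by fun_prop) ?_ ?_, hp.eX, sub_self]
      · intro s
        simp only [abs_neg, abs_mul]
        have h1 := hk.bk (p.1 - X s)
        have h3 := hp.bV s
        gcongr
      · intro s hs hc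
        have h1 := (hk.hK (p.1 - X s)).comp s ((hp.dX s hs hc).const_sub p.1)
        refine h1.congr_deriv ?_
        ring
  · have : ∀ s, -(k (p.1 - X s) * K (p.2 - Y s) * V s) = 0 := by
      intro s
      rw [hk.k0]
      · simp
      · by_contra h
        rw [not_le, abs_lt] at h
        exact h1 ⟨by linarith [(hp.rX s).1], by linarith [(hp.rX s).2]⟩
    simp [this]

lemma rosLoop {X Y V W : ℝ → ℝ} {a b c B x0 x1 y0 y1 ε C η : ℝ}
    (hp : RosPath X Y V W a b c B x0 x1 y0 y1) (hε : 0 < ε) (hC : 0 ≤ C)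
    (f g H : ℝ × ℝ → ℝ) (hf : ContDiff ℝ 1 f) (hg : ContDiff ℝ 1 g) (hH : ContDiff ℝ 1 H)
    (hdiv : ∀ p ∈ Icc (x0 - ε) (x1 + ε) ×ˢ Icc (y0 - ε) (y1 + ε),
      fderiv ℝ f p (1, 0) + fderiv ℝ g p (0, 1) ≤ 0 ∧
      |fderiv ℝ H p (1, 0)| ≤ C * (-(fderiv ℝ f p (1, 0) + fderiv ℝ g p (0, 1))))
    (hη : ∀ s, ∀ p : ℝ × ℝ, |p.1 - X s| < ε → |p.2 - Y s| < ε →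
      |H p - H (X s, Y s)| ≤ η ∧ |f p - f (X s, Y s)| ≤ η ∧ |g p - g (X s, Y s)| ≤ η) :
    |∫ s in Ioc a b, H (X s, Y s) * W s| ≤
      C * (∫ s in Ioc a b, |f (X s, Y s) * W s - g (X s, Y s) * V s|) +
        η * ((1 + 2 * C) * B * (b - a)) := by
  obtain ⟨K, k, k', C', hk⟩ := rosKer_exists ε hε
  obtain ⟨hχ, hχx, hχy⟩ := rosChi_deriv hk hp
  set χ := rosChi K k X Y V a b
  set R : Set (ℝ × ℝ) := Icc (x0 - ε) (x1 + ε) ×ˢ Icc (y0 - ε) (y1 + ε) with hR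
  have cR : IsCompact R := isCompact_Icc.prod isCompact_Icc
  have hc : HasCompactSupport χ := HasCompactSupport.intro cR (rosChi_supp hk hp)
  have hts : tsupport χ ⊆ R := by
    refine closure_minimal ?_ cR.isClosed
    intro p hpp
    by_contra hcon
    exact hpp (rosChi_supp hk hp p hcon)
  have hη0 : 0 ≤ η := (abs_nonneg _).trans (hη 0 (X 0, Y 0) (by simpa) (by simpa)).1
  have hB : 0 ≤ B := (abs_nonneg _).trans (hp.bV 0)
  have cX := hp.cX
  have cY := hp.cY
  have ck := hk.ck
  have cf := hf.continuous
  have cg := hg.continuous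
  have cH := hH.continuous
  have mf := cf.measurable
  have mg := cg.measurable
  have mH := cH.measurable
  have mX := cX.measurable
  have mY := cY.measurable
  have mV := hp.mV
  have mW := hp.mW
  let r : ℝ × ℝ → ℝ → ℝ := fun p s => k (p.1 - X s) * k (p.2 - Y s)
  have r0 : ∀ p s, 0 ≤ r p s := fun p s => mul_nonneg (hk.nn _) (hk.nn _)
  have rne : ∀ p s, r p s ≠ 0 → |p.1 - X s| < ε ∧ |p.2 - Y s| < ε := by
    intro p s hne
    constructor
    · by_contra h; exact hne (by simp only [r]; rw [hk.k0 _ (not_lt.1 h)]; simp)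
    · by_contra h; exact hne (by simp only [r]; rw [hk.k0 _ (not_lt.1 h)]; simp)
  have rint : ∀ s, ∫ p, r p s = 1 := fun s => rosKer_int hk (X s) (Y s)
  have cr : ∀ s, Continuous fun p => r p s := fun s => by simp only [r]; fun_prop
  have rcs : ∀ s, HasCompactSupport fun p => r p s := by
    intro s
    refine HasCompactSupport.intro cR ?_
    intro p hpp
    by_contra hne
    obtain ⟨h1, h2⟩ := rne p s hne
    rw [abs_lt] at h1 h2
    have := hp.rX s
    have := hp.rY s
    apply hpp
    simp only [mem_Icc] at *
    refine ⟨⟨?_, ?_⟩, ⟨?_, ?_⟩⟩ <;> linarith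
  have ri : ∀ s, Integrable fun p => r p s := fun s =>
    (cr s).integrable_of_hasCompactSupport (rcs s)
  -- bounded composites
  have hcomp : ∀ G : ℝ × ℝ → ℝ, Continuous G → ∃ M, ∀ s, |G (X s, Y s)| ≤ M := by
    intro G cG
    obtain ⟨M, hM⟩ := (isCompact_Icc (a := x0) (b := x1)).prod (isCompact_Icc (a := y0) (b := y1))
      |>.exists_bound_of_continuousOn cG.continuousOn
    exact ⟨M, fun s => hM _ ⟨hp.rX s, hp.rY s⟩⟩
  have icomp : ∀ (G : ℝ × ℝ → ℝ) (v : ℝ → ℝ), Continuous G → Measurable v → (∀ s, |v s| ≤ B) →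
      Integrable (fun s => G (X s, Y s) * v s) (volume.restrict (Ioc a b)) := by
    intro G v cG mv bv
    obtain ⟨M, hM⟩ := hcomp G cG
    have mG := cG.measurable
    refine rosIntBdd (M := M * B) (by fun_prop) fun s => ?_
    rw [abs_mul]
    have h1 := hM s
    have h2 := bv s
    have : 0 ≤ M := (abs_nonneg _).trans h1
    gcongr
  have volI : (volume.restrict (Ioc a b)).real univ = b - a := by
    simp [measureReal_def, hp.hab]
  -- first identity
  have T1 : ∫ p, H p * fderiv ℝ χ p (1, 0) = - ∫ p, fderiv ℝ H p (1, 0) * χ p :=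
    rosDivZero H χ hH hχ hc (1, 0)
  have FH := rosFub (a := a) (b := b) hk cX cY hp.rX hp.rY mW hp.bW H cH
  have T2 : ∫ p, H p * fderiv ℝ χ p (1, 0) =
      ∫ s in Ioc a b, (∫ p, H p * r p s) * W s := by
    have : ∀ p, H p * fderiv ℝ χ p (1, 0) = ∫ s in Ioc a b, H p * r p s * W s := by
      intro p
      rw [hχx, ← integral_const_mul]
      congr 1; ext s; simp only [r]; ring
    simp only [this]
    rw [integral_integral_swap FH]
    congr 1; ext s
    rw [← integral_mul_const]
  have T3 : |(∫ s in Ioc a b, H (X s, Y s) * W s) - ∫ p, H p * fderiv ℝ χ p (1, 0)| ≤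
      η * B * (b - a) := by
    have i2 : Integrable (fun s => (∫ p, H p * r p s) * W s) (volume.restrict (Ioc a b)) := by
      have := FH.integral_prod_right
      refine this.congr (Eventually.of_forall fun s => ?_)
      simp only [Function.uncurry, r]
      rw [← integral_mul_const]
    rw [T2, ← integral_sub (icomp H W cH mW hp.bW) i2, ← Real.norm_eq_abs, ← volI]
    refine norm_integral_le_of_norm_le_const (Eventually.of_forall fun s => ?_)
    have e : H (X s, Y s) * W s - (∫ p, H p * r p s) * W s =
        (∫ p, (H (X s, Y s) - H p) * r p s) * W s := by
      have : ∀ p, (H (X s, Y s) - H p) * r p s = H (X s, Y s) * r p s - H p * r p s := by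
        intro p; ring
      simp only [this]
      have iHr : Integrable fun p => H p * r p s :=
        (cH.mul (cr s)).integrable_of_hasCompactSupport (rcs s).mul_left
      rw [integral_sub ((ri s).const_mul _) iHr, integral_const_mul, rint s]; ring
    rw [e, norm_mul]
    refine mul_le_mul ?_ (hp.bW s) (norm_nonneg _) hη0
    calc ‖∫ p, (H (X s, Y s) - H p) * r p s‖ ≤ ∫ p, η * r p s := by
          refine norm_integral_le_of_norm_le ((ri s).const_mul η) (Eventually.of_forall fun p => ?_)
          rw [norm_mul, Real.norm_of_nonneg (r0 p s)]
          by_cases hne : r p s = 0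
          · simp [hne]
          · obtain ⟨h1, h2⟩ := rne p s hne
            have := (hη s p h1 h2).1
            rw [Real.norm_eq_abs, abs_sub_comm]
            exact mul_le_mul_of_nonneg_right this (r0 p s)
      _ = η := by rw [integral_const_mul, rint s, mul_one]
  -- second estimate
  have cHx : Continuous fun p => fderiv ℝ H p (1, 0) :=
    (hH.continuous_fderiv (by norm_num)).clm_apply continuous_const
  have cfx : Continuous fun p => fderiv ℝ f p (1, 0) :=
    (hf.continuous_fderiv (by norm_num)).clm_apply continuous_const
  have cgy : Continuous fun p => fderiv ℝ g p (0, 1) :=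
    (hg.continuous_fderiv (by norm_num)).clm_apply continuous_const
  have hcabs : HasCompactSupport fun p => |χ p| := hc.comp_left (g := fun r : ℝ => |r|) (by simp)
  have T4 : |∫ p, H p * fderiv ℝ χ p (1, 0)| ≤
      C * ∫ p, |χ p| * (-(fderiv ℝ f p (1, 0) + fderiv ℝ g p (0, 1))) := by
    rw [T1, abs_neg, ← integral_const_mul, ← Real.norm_eq_abs]
    refine norm_integral_le_of_norm_le ?_ (Eventually.of_forall fun p => ?_)
    · apply Integrable.const_mul
      exact (hχ.continuous.abs.mul (cfx.add cgy).neg).integrable_of_hasCompactSupport hcabs.mul_right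
    · rw [norm_mul, Real.norm_eq_abs, Real.norm_eq_abs]
      by_cases hpR : p ∈ R
      · have := (hdiv p hpR).2
        nlinarith [abs_nonneg (χ p)]
      · have h0 : χ p = 0 := rosChi_supp hk hp p hpR
        rw [h0]; simp
  have T5 := rosArea f g χ hf hg hχ hc (fun p hpp => (hdiv p (hts hpp)).1)
  have Ff := rosFub (a := a) (b := b) hk cX cY hp.rX hp.rY mW hp.bW f cf
  have Fg := rosFub (a := a) (b := b) hk cX cY hp.rX hp.rY mV hp.bV g cg
  have Fd : Integrable (Function.uncurry fun (p : ℝ × ℝ) (s : ℝ) =>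
      r p s * |f p * W s - g p * V s|)
      ((volume : Measure (ℝ × ℝ)).prod (volume.restrict (Ioc a b))) := by
    refine (Ff.sub Fg).abs.congr (Eventually.of_forall ?_)
    rintro ⟨p, s⟩
    simp only [Function.uncurry, Pi.sub_apply]
    rw [← abs_of_nonneg (r0 p s), ← abs_mul]
    congr 1; simp only [r]
    ring
  have T6 : ∫ p, |f p * fderiv ℝ χ p (1, 0) + g p * fderiv ℝ χ p (0, 1)| ≤
      ∫ p, ∫ s in Ioc a b, r p s * |f p * W s - g p * V s| := by
    refine integral_mono_of_nonneg (Eventually.of_forall fun p => abs_nonneg _)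
      Fd.integral_prod_left (Eventually.of_forall fun p => ?_)
    simp only
    have irW : ∀ v : ℝ → ℝ, Measurable v → (∀ s, |v s| ≤ B) →
        Integrable (fun s => r p s * v s) (volume.restrict (Ioc a b)) := by
      intro v mv bv
      have mk := ck.measurable
      refine rosIntBdd (M := C' * C' * B) (by simp only [r]; fun_prop) fun s => ?_
      simp only [r, abs_mul]
      have h1 := hk.bk (p.1 - X s)
      have h2 := hk.bk (p.2 - Y s)
      have h3 := bv s
      have : 0 ≤ C' := (abs_nonneg _).trans h1
      gcongr
    have e : f p * fderiv ℝ χ p (1, 0) + g p * fderiv ℝ χ p (0, 1) =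
        ∫ s in Ioc a b, r p s * (f p * W s - g p * V s) := by
      have : ∀ s, r p s * (f p * W s - g p * V s) = f p * (r p s * W s) - g p * (r p s * V s) := by
        intro s; ring
      simp only [this]
      rw [integral_sub ((irW W mW hp.bW).const_mul _) ((irW V mV hp.bV).const_mul _),
        integral_const_mul, integral_const_mul, hχx, hχy]
      ring
    rw [e]
    refine (abs_integral_le_integral_abs).trans (le_of_eq ?_)
    congr 1; ext s
    rw [abs_mul, abs_of_nonneg (r0 p s)]
  have T7 : ∫ p, ∫ s in Ioc a b, r p s * |f p * W s - g p * V s| ≤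
      (∫ s in Ioc a b, |f (X s, Y s) * W s - g (X s, Y s) * V s|) + 2 * η * B * (b - a) := by
    rw [integral_integral_swap Fd]
    have i1 : Integrable (fun s => |f (X s, Y s) * W s - g (X s, Y s) * V s|)
        (volume.restrict (Ioc a b)) :=
      ((icomp f W cf mW hp.bW).sub (icomp g V cg mV hp.bV)).abs
    have e : (∫ s in Ioc a b, |f (X s, Y s) * W s - g (X s, Y s) * V s|) + 2 * η * B * (b - a) =
        ∫ s in Ioc a b, (|f (X s, Y s) * W s - g (X s, Y s) * V s| + 2 * η * B) := by
      rw [integral_add i1 (integrable_const _), integral_const, volI, smul_eq_mul]; ring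
    rw [e]
    refine integral_mono Fd.integral_prod_right (i1.add (integrable_const _)) fun s => ?_
    simp only
    set A := |f (X s, Y s) * W s - g (X s, Y s) * V s|
    calc ∫ p, r p s * |f p * W s - g p * V s| ≤ ∫ p, r p s * (A + 2 * η * B) := by
          refine integral_mono_of_nonneg (Eventually.of_forall fun p =>
            mul_nonneg (r0 p s) (abs_nonneg _)) ((ri s).mul_const _)
            (Eventually.of_forall fun p => ?_)
          simp only
          by_cases hne : r p s = 0
          · simp [hne]
          · obtain ⟨h1, h2⟩ := rne p s hne
            obtain ⟨-, h3, h4⟩ := hη s p h1 h2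
            refine mul_le_mul_of_nonneg_left ?_ (r0 p s)
            have e2 : f p * W s - g p * V s = (f (X s, Y s) * W s - g (X s, Y s) * V s) +
              ((f p - f (X s, Y s)) * W s - (g p - g (X s, Y s)) * V s) := by ring
            rw [e2]
            refine (abs_add_le _ _).trans ?_
            have h5 : |(f p - f (X s, Y s)) * W s - (g p - g (X s, Y s)) * V s| ≤
                η * B + η * B := by
              refine (abs_sub _ _).trans ?_
              rw [abs_mul, abs_mul]
              exact add_le_add (mul_le_mul h3 (hp.bW s) (abs_nonneg _) hη0)
                (mul_le_mul h4 (hp.bV s) (abs_nonneg _) hη0)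
            linarith
      _ = A + 2 * η * B := by rw [integral_mul_const, rint s, one_mul]
  have T8 : |∫ p, H p * fderiv ℝ χ p (1, 0)| ≤
      C * ((∫ s in Ioc a b, |f (X s, Y s) * W s - g (X s, Y s) * V s|) + 2 * η * B * (b - a)) :=
    T4.trans (mul_le_mul_of_nonneg_left (T5.trans (T6.trans T7)) hC)
  have T9 := abs_sub_abs_le_abs_sub (∫ s in Ioc a b, H (X s, Y s) * W s)
    (∫ p, H p * fderiv ℝ χ p (1, 0))
  nlinarith

lemma rosLoop0 {X Y V W : ℝ → ℝ} {a b c B x0 x1 y0 y1 C : ℝ}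
    (hp : RosPath X Y V W a b c B x0 x1 y0 y1) (hx0 : 1 < x0) (hy0 : 1 < y0) (hC : 0 ≤ C)
    (f g H : ℝ × ℝ → ℝ) (hf : ContDiff ℝ 1 f) (hg : ContDiff ℝ 1 g) (hH : ContDiff ℝ 1 H)
    (hdiv : ∀ p : ℝ × ℝ, 1 < p.1 → 1 < p.2 → p.1 ≤ x1 + 1 → p.2 ≤ y1 + 1 →
      fderiv ℝ f p (1, 0) + fderiv ℝ g p (0, 1) ≤ 0 ∧
      |fderiv ℝ H p (1, 0)| ≤ C * (-(fderiv ℝ f p (1, 0) + fderiv ℝ g p (0, 1)))) :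
    |∫ s in Ioc a b, H (X s, Y s) * W s| ≤
      C * (∫ s in Ioc a b, |f (X s, Y s) * W s - g (X s, Y s) * V s|) := by
  refine le_of_forall_pos_le_add fun e he => ?_
  have hB : 0 ≤ B := (abs_nonneg _).trans (hp.bV 0)
  have hab := sub_nonneg.2 hp.hab
  set D := (1 + 2 * C) * B * (b - a) with hD
  have hD0 : 0 ≤ D := by positivity
  set F : ℝ × ℝ → ℝ × ℝ × ℝ := fun p => (H p, f p, g p) with hF
  have cF : Continuous F := hH.continuous.prodMk (hf.continuous.prodMk hg.continuous)
  have cR : IsCompact (Icc (x0 - 1) (x1 + 1) ×ˢ Icc (y0 - 1) (y1 + 1)) :=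
    isCompact_Icc.prod isCompact_Icc
  have uF := cR.uniformContinuousOn_of_continuous cF.continuousOn
  rw [Metric.uniformContinuousOn_iff] at uF
  have hη : 0 < e / (D + 1) := by positivity
  obtain ⟨δ, hδ, h⟩ := uF (e / (D + 1)) hη
  set ε := min (min δ 1) (min ((x0 - 1) / 2) ((y0 - 1) / 2)) with hε
  have hε0 : 0 < ε := by
    simp only [hε, lt_min_iff]; refine ⟨⟨hδ, one_pos⟩, ?_, ?_⟩ <;> linarith
  have e1 : ε ≤ δ := (min_le_left _ _).trans (min_le_left _ _)
  have e2 : ε ≤ 1 := (min_le_left _ _).trans (min_le_right _ _)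
  have e3 : ε ≤ (x0 - 1) / 2 := (min_le_right _ _).trans (min_le_left _ _)
  have e4 : ε ≤ (y0 - 1) / 2 := (min_le_right _ _).trans (min_le_right _ _)
  have key := rosLoop (η := e / (D + 1)) hp hε0 hC f g H hf hg hH ?_ ?_
  · refine key.trans ?_
    gcongr
    rw [div_mul_eq_mul_div, div_le_iff₀ (by positivity)]
    nlinarith
  · rintro p ⟨⟨h1, h2⟩, h3, h4⟩
    exact hdiv p (by linarith) (by linarith) (by linarith) (by linarith)
  · intro s p h1 h2
    have q1 := hp.rX s
    have q2 := hp.rY s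
    have h1' := abs_lt.1 h1
    have h2' := abs_lt.1 h2
    simp only [mem_Icc] at q1 q2
    have := h p ⟨by constructor <;> linarith, by constructor <;> linarith⟩ (X s, Y s)
      ⟨by constructor <;> simp only <;> linarith, by constructor <;> simp only <;> linarith⟩ (by
        rw [Prod.dist_eq, max_lt_iff, Real.dist_eq, Real.dist_eq]
        exact ⟨h1.trans_le e1, h2.trans_le e1⟩)
    rw [Prod.dist_eq, max_lt_iff, Prod.dist_eq, max_lt_iff, Real.dist_eq, Real.dist_eq,
      Real.dist_eq] at this
    exact ⟨this.1.le, this.2.1.le, this.2.2.le⟩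

structure RosSys (f g : ℝ × ℝ → ℝ) (x y : ℝ → ℝ) (M : ℝ) : Prop where
  hf : ContDiff ℝ 1 f
  hg : ContDiff ℝ 1 g
  fx : ∀ p : ℝ × ℝ, 1 < p.1 → fderiv ℝ f p (1, 0) < 0
  gy : ∀ p : ℝ × ℝ, 1 < p.2 → fderiv ℝ g p (0, 1) < 0
  bf : ∀ y, 0 ≤ f (1, y)
  bg : ∀ x, 0 ≤ g (x, 1)
  dx : ∀ t, 0 ≤ t → HasDerivAt x (f (x t, y t)) t
  dy : ∀ t, 0 ≤ t → HasDerivAt y (g (x t, y t)) t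
  x0 : 1 < x 0
  y0 : 1 < y 0
  bx : ∀ t, 0 ≤ t → |x t| ≤ M
  hby : ∀ t, 0 ≤ t → |y t| ≤ M

lemma RosSys.swap {f g : ℝ × ℝ → ℝ} {x y : ℝ → ℝ} {M : ℝ} (h : RosSys f g x y M) :
    RosSys (fun p => g (p.2, p.1)) (fun p => f (p.2, p.1)) y x M := by
  have key : ∀ F : ℝ × ℝ → ℝ, ContDiff ℝ 1 F → ∀ p v : ℝ × ℝ,
      fderiv ℝ (fun p : ℝ × ℝ => F (p.2, p.1)) p v = fderiv ℝ F (p.2, p.1) (v.2, v.1) := by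
    intro F hF p v
    have h1 : HasFDerivAt F (fderiv ℝ F (p.2, p.1)) (p.2, p.1) :=
      (hF.differentiable (by norm_num) _).hasFDerivAt
    have h2 : HasFDerivAt (fun p : ℝ × ℝ => (p.2, p.1))
      ((ContinuousLinearMap.snd ℝ ℝ ℝ).prod (ContinuousLinearMap.fst ℝ ℝ ℝ)) p :=
      hasFDerivAt_snd.prodMk hasFDerivAt_fst
    have h3 := (HasFDerivAt.comp p h1 h2).fderiv
    simp only [Function.comp_def] at h3
    rw [h3]; simp
  refine ⟨h.hg.comp (by fun_prop), h.hf.comp (by fun_prop), ?_, ?_, h.bg, h.bf, h.dy, h.dx,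
    h.y0, h.x0, h.hby, h.bx⟩
  · intro p hp; rw [key g h.hg]; exact h.gy _ hp
  · intro p hp; rw [key f h.hf]; exact h.fx _ hp

lemma RosSys.posx {f g : ℝ × ℝ → ℝ} {x y : ℝ → ℝ} {M : ℝ} (h : RosSys f g x y M) :
    ∀ t, 0 ≤ t → 1 < x t := by
  have hM : 1 < M := (h.x0.trans_le (le_abs_self _)).trans_le (h.bx 0 le_rfl)
  obtain ⟨L, hL⟩ := h.hf.contDiffOn.exists_lipschitzOnWith (s := Icc (-M) M ×ˢ Icc (-M) M)
    (by norm_num) ((convex_Icc _ _).prod (convex_Icc _ _)) (isCompact_Icc.prod isCompact_Icc)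
  by_contra! hcon
  obtain ⟨t, ht0, ht⟩ := hcon
  have cx : ContinuousOn x (Icc 0 t) := fun s hs => (h.dx s hs.1).continuousAt.continuousWithinAt
  -- first time
  obtain ⟨t0, ⟨ht0', hxt0⟩, hmin⟩ : ∃ t0, IsLeast (Icc 0 t ∩ {s | x s ≤ 1}) t0 := by
    apply IsCompact.exists_isLeast
    · refine isCompact_Icc.of_isClosed_subset ?_ inter_subset_left
      exact cx.preimage_isClosed_of_isClosed isClosed_Icc isClosed_Iic
    · exact ⟨t, ⟨ht0, le_rfl⟩, ht⟩
  have hlt : ∀ s, 0 ≤ s → s < t0 → 1 < x s := by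
    intro s hs hst
    by_contra! hc
    exact absurd (hmin ⟨⟨hs, hst.le.trans ht0'.2⟩, hc⟩) (not_le.2 hst)
  have hmono : MonotoneOn (fun s => (x s - 1) * Real.exp (L * s)) (Icc 0 t0) := by
    have hd : ∀ s, 0 ≤ s → HasDerivAt (fun s => (x s - 1) * Real.exp (L * s))
        (f (x s, y s) * Real.exp (L * s) + (x s - 1) * (Real.exp (L * s) * (L * 1))) s := by
      intro s hs
      exact ((h.dx s hs).sub_const 1).mul (((hasDerivAt_id s).const_mul (L : ℝ)).exp)
    refine monotoneOn_of_deriv_nonneg (convex_Icc _ _)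
      (fun s hs => (hd s hs.1).continuousAt.continuousWithinAt) ?_ ?_
    · intro s hs
      rw [interior_Icc] at hs
      exact (hd s hs.1.le).differentiableAt.differentiableWithinAt
    · intro s hs
      rw [interior_Icc] at hs
      rw [(hd s hs.1.le).deriv]
      have h1 := hlt s hs.1.le hs.2
      have h2 := h.bf (y s)
      have b1 := abs_le.1 (h.bx s hs.1.le)
      have b2 := abs_le.1 (h.hby s hs.1.le)
      have h3 := hL.dist_le_mul (x s, y s) ⟨b1, b2⟩ (1, y s) ⟨⟨by simp only; linarith, hM.le⟩, b2⟩
      rw [Real.dist_eq, Prod.dist_eq] at h3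
      simp only [dist_self, Real.dist_eq] at h3
      rw [max_eq_left (abs_nonneg _), abs_of_pos (by linarith : 0 < x s - 1)] at h3
      have h4 := (abs_le.1 h3).1
      have : 0 ≤ (f (x s, y s) + L * (x s - 1)) * Real.exp (L * s) :=
        mul_nonneg (by linarith) (Real.exp_pos _).le
      linarith
  have := hmono ⟨le_rfl, ht0'.1⟩ ⟨ht0'.1, le_rfl⟩ ht0'.1
  simp only [mul_zero, Real.exp_zero, mul_one] at this
  have h5 : (x t0 - 1) * Real.exp (L * t0) ≤ 0 :=
    mul_nonpos_of_nonpos_of_nonneg (sub_nonpos.2 hxt0) (Real.exp_pos _).le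
  linarith [h.x0]

lemma RosSys.posy {f g : ℝ × ℝ → ℝ} {x y : ℝ → ℝ} {M : ℝ} (h : RosSys f g x y M) :
    ∀ t, 0 ≤ t → 1 < y t := h.swap.posx

lemma RosSys.hM {f g : ℝ × ℝ → ℝ} {x y : ℝ → ℝ} {M : ℝ} (h : RosSys f g x y M) : 1 < M :=
  (h.x0.trans_le (le_abs_self _)).trans_le (h.bx 0 le_rfl)

lemma RosSys.cx {f g : ℝ × ℝ → ℝ} {x y : ℝ → ℝ} {M : ℝ} (h : RosSys f g x y M) :
    ContinuousOn x (Ici 0) := fun s hs => (h.dx s hs).continuousAt.continuousWithinAt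

lemma RosSys.cy {f g : ℝ × ℝ → ℝ} {x y : ℝ → ℝ} {M : ℝ} (h : RosSys f g x y M) :
    ContinuousOn y (Ici 0) := fun s hs => (h.dy s hs).continuousAt.continuousWithinAt

lemma RosSys.low {f g : ℝ × ℝ → ℝ} {x y : ℝ → ℝ} {M : ℝ} (h : RosSys f g x y M) {t : ℝ}
    (ht : 0 ≤ t) : ∃ l, 1 < l ∧ ∀ s ∈ Icc 0 t, l ≤ x s := by
  obtain ⟨s0, hs0, hmin⟩ := isCompact_Icc.exists_isMinOn ⟨0, ⟨le_rfl, ht⟩⟩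
    (h.cx.mono (fun s (hs : s ∈ Icc 0 t) => hs.1))
  exact ⟨x s0, h.posx s0 hs0.1, fun s hs => hmin hs⟩

/-- coordinates of the closed-up trajectory -/
noncomputable def rosX (x : ℝ → ℝ) (t s : ℝ) : ℝ :=
  x (max 0 (min t s)) + max 0 (min 1 (s - t)) * (x 0 - x t)

noncomputable def rosV (F : ℝ × ℝ → ℝ) (x y z : ℝ → ℝ) (t s : ℝ) : ℝ :=
  if s ≤ t then F (x (max 0 (min t s)), y (max 0 (min t s))) else z 0 - z t

lemma rosX_left {x : ℝ → ℝ} {t s : ℝ} (h : s ≤ t) : rosX x t s = x (max 0 s) := by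
  rw [rosX, min_eq_right h, min_eq_right (by linarith : s - t ≤ 1),
    max_eq_left (by linarith : s - t ≤ 0)]; simp

lemma rosX_right {x : ℝ → ℝ} {t s : ℝ} (ht : 0 ≤ t) (h : t ≤ s) :
    rosX x t s = x t + max 0 (min 1 (s - t)) * (x 0 - x t) := by
  rw [rosX, min_eq_left h, max_eq_right ht]

lemma rosX_cont {x : ℝ → ℝ} (cx : ContinuousOn x (Ici 0)) (t : ℝ) : Continuous (rosX x t) := by
  have : Continuous fun s => x (max 0 (min t s)) :=
    cx.comp_continuous (by fun_prop) fun s => mem_Ici.2 (le_max_left _ _)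
  exact this.add (by fun_prop)

lemma rosX_range {x : ℝ → ℝ} {t l M : ℝ} (ht : 0 ≤ t) (hx : ∀ s ∈ Icc 0 t, x s ∈ Icc l M) (s : ℝ) :
    rosX x t s ∈ Icc l M := by
  rcases le_total s t with h | h
  · rw [rosX_left h]; exact hx _ ⟨le_max_left _ _, max_le ht h⟩
  · rw [rosX_right ht h]
    have c0 : 0 ≤ max 0 (min 1 (s - t)) := le_max_left _ _
    have c1 : max 0 (min 1 (s - t)) ≤ 1 := max_le (by norm_num) (min_le_left _ _)
    set c := max 0 (min 1 (s - t))
    have h1 := hx 0 ⟨le_rfl, ht⟩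
    have h2 := hx t ⟨ht, le_rfl⟩
    simp only [mem_Icc] at *
    constructor <;> nlinarith

lemma rosX_deriv {F : ℝ × ℝ → ℝ} {x y z : ℝ → ℝ} {t s : ℝ} (ht : 0 ≤ t)
    (dz : ∀ t, 0 ≤ t → HasDerivAt z (F (x t, y t)) t) (hs : s ∈ Ioo 0 (t + 1)) (hst : s ≠ t) :
    HasDerivAt (rosX z t) (rosV F x y z t s) s := by
  rcases lt_or_gt_of_ne hst with h | h
  · rw [rosV, if_pos h.le, min_eq_right h.le, max_eq_right hs.1.le]
    refine (dz s hs.1.le).congr_of_eventuallyEq ?_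
    filter_upwards [Ioo_mem_nhds hs.1 h] with r hr
    rw [rosX_left hr.2.le, max_eq_right hr.1.le]
  · rw [rosV, if_neg (not_le.2 h)]
    have : HasDerivAt (fun s => z t + (s - t) * (z 0 - z t)) (1 * (z 0 - z t)) s :=
      (((hasDerivAt_id s).sub_const t).mul_const _).const_add _
    rw [one_mul] at this
    refine this.congr_of_eventuallyEq ?_
    filter_upwards [Ioo_mem_nhds h hs.2] with r hr
    rw [rosX_right ht hr.1.le, min_eq_right (by linarith [hr.2]),
      max_eq_right (by linarith [hr.1])]

lemma rosV_meas {F : ℝ × ℝ → ℝ} (cF : Continuous F) {x y : ℝ → ℝ} (cx : ContinuousOn x (Ici 0))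
    (cy : ContinuousOn y (Ici 0)) (z : ℝ → ℝ) (t : ℝ) : Measurable (rosV F x y z t) := by
  have h1 : Continuous fun s => x (max 0 (min t s)) :=
    cx.comp_continuous (by fun_prop) fun s => mem_Ici.2 (le_max_left _ _)
  have h2 : Continuous fun s => y (max 0 (min t s)) :=
    cy.comp_continuous (by fun_prop) fun s => mem_Ici.2 (le_max_left _ _)
  exact Measurable.ite measurableSet_Iic (cF.comp (h1.prodMk h2)).measurable measurable_const

lemma RosSys.intBound {f g : ℝ × ℝ → ℝ} {x y : ℝ → ℝ} {M : ℝ} (h : RosSys f g x y M)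
    {C : ℝ} (hC : 0 ≤ C) (H : ℝ × ℝ → ℝ) (hH : ContDiff ℝ 1 H)
    (hdiv : ∀ p : ℝ × ℝ, 1 < p.1 → 1 < p.2 → p.1 ≤ M + 1 → p.2 ≤ M + 1 →
      |fderiv ℝ H p (1, 0)| ≤ C * (-(fderiv ℝ f p (1, 0) + fderiv ℝ g p (0, 1)))) :
    ∃ K, ∀ t, 0 ≤ t → |∫ s in Ioc 0 t, H (x s, y s) * g (x s, y s)| ≤ K := by
  have cbox : IsCompact (Icc 1 M ×ˢ Icc 1 M) := isCompact_Icc.prod isCompact_Icc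
  obtain ⟨Kf, hKf⟩ := cbox.exists_bound_of_continuousOn h.hf.continuous.continuousOn
  obtain ⟨Kg, hKg⟩ := cbox.exists_bound_of_continuousOn h.hg.continuous.continuousOn
  obtain ⟨KH, hKH⟩ := cbox.exists_bound_of_continuousOn hH.continuous.continuousOn
  have hM := h.hM
  have h11 : ((1 : ℝ), (1 : ℝ)) ∈ Icc 1 M ×ˢ Icc 1 M := ⟨⟨le_rfl, hM.le⟩, ⟨le_rfl, hM.le⟩⟩
  have Kf0 : 0 ≤ Kf := (norm_nonneg _).trans (hKf _ h11)
  have Kg0 : 0 ≤ Kg := (norm_nonneg _).trans (hKg _ h11)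
  have KH0 : 0 ≤ KH := (norm_nonneg _).trans (hKH _ h11)
  refine ⟨C * (Kf * (2 * M) + Kg * (2 * M)) + KH * (2 * M), fun t ht => ?_⟩
  obtain ⟨lx, hlx, hlx'⟩ := h.low ht
  obtain ⟨ly, hly, hly'⟩ := h.swap.low ht
  have rx : ∀ s ∈ Icc 0 t, x s ∈ Icc lx M := fun s hs => ⟨hlx' s hs, (abs_le.1 (h.bx s hs.1)).2⟩
  have ry : ∀ s ∈ Icc 0 t, y s ∈ Icc ly M := fun s hs => ⟨hly' s hs, (abs_le.1 (h.hby s hs.1)).2⟩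
  have diff : ∀ z : ℝ → ℝ, (∀ t, 0 ≤ t → |z t| ≤ M) → |z 0 - z t| ≤ 2 * M := by
    intro z hz
    have := abs_le.1 (hz 0 le_rfl)
    have := abs_le.1 (hz t ht)
    rw [abs_le]; constructor <;> linarith
  have inbox : ∀ s, 0 ≤ s → (x s, y s) ∈ Icc 1 M ×ˢ Icc 1 M := fun s hs =>
    ⟨⟨(h.posx s hs).le, (abs_le.1 (h.bx s hs)).2⟩, ⟨(h.posy s hs).le, (abs_le.1 (h.hby s hs)).2⟩⟩
  set X := rosX x t with hX
  set Y := rosX y t with hY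
  set V := rosV f x y x t with hV
  set W := rosV g x y y t with hW
  set B := Kf + Kg + 2 * M with hB
  have hp : RosPath X Y V W 0 (t + 1) t B lx M ly M := by
    refine ⟨by linarith, rosX_cont h.cx t, rosX_cont h.cy t,
      rosV_meas h.hf.continuous h.cx h.cy x t, rosV_meas h.hg.continuous h.cx h.cy y t, ?_, ?_,
      fun s hs hst => rosX_deriv ht h.dx hs hst, fun s hs hst => rosX_deriv ht h.dy hs hst,
      ?_, ?_, rosX_range ht rx, rosX_range ht ry⟩
    · intro s
      simp only [hV, rosV]
      split_ifs
      · have := hKf _ (inbox (max 0 (min t s)) (le_max_left _ _))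
        rw [Real.norm_eq_abs] at this
        linarith
      · linarith [diff x h.bx]
    · intro s
      simp only [hW, rosV]
      split_ifs
      · have := hKg _ (inbox (max 0 (min t s)) (le_max_left _ _))
        rw [Real.norm_eq_abs] at this
        linarith
      · linarith [diff y h.hby]
    · rw [hX, rosX_left ht, rosX_right ht (by linarith)]; simp
    · rw [hY, rosX_left ht, rosX_right ht (by linarith)]; simp
  have XYbox : ∀ s, (X s, Y s) ∈ Icc 1 M ×ˢ Icc 1 M := fun s =>
    ⟨⟨hlx.le.trans (hp.rX s).1, (hp.rX s).2⟩, ⟨hly.le.trans (hp.rY s).1, (hp.rY s).2⟩⟩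
  have key := rosLoop0 hp hlx hly hC f g H h.hf h.hg hH (fun p h1 h2 h3 h4 =>
    ⟨by linarith [h.fx p h1, h.gy p h2], hdiv p h1 h2 h3 h4⟩)
  have mX := hp.cX.measurable
  have mY := hp.cY.measurable
  have mV := hp.mV
  have mW := hp.mW
  have mf := h.hf.continuous.measurable
  have mg := h.hg.continuous.measurable
  have mH := hH.continuous.measurable
  have hB0 : 0 ≤ B := by positivity
  have b1 : ∀ s, |H (X s, Y s) * W s| ≤ KH * B := fun s => by
    rw [abs_mul]; exact mul_le_mul (hKH _ (XYbox s)) (hp.bW s) (abs_nonneg _) KH0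
  have b2 : ∀ s, |(|f (X s, Y s) * W s - g (X s, Y s) * V s|)| ≤ Kf * B + Kg * B := fun s => by
    rw [abs_abs]
    refine (abs_sub _ _).trans ?_
    rw [abs_mul, abs_mul]
    exact add_le_add (mul_le_mul (hKf _ (XYbox s)) (hp.bW s) (abs_nonneg _) Kf0)
      (mul_le_mul (hKg _ (XYbox s)) (hp.bV s) (abs_nonneg _) Kg0)
  have hun : Ioc 0 (t + 1) = Ioc 0 t ∪ Ioc t (t + 1) :=
    (Ioc_union_Ioc_eq_Ioc ht (by linarith)).symm
  have hdis : Disjoint (Ioc 0 t) (Ioc t (t + 1)) := Ioc_disjoint_Ioc_of_le le_rfl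
  have m1 : Measurable fun s => H (X s, Y s) * W s := by fun_prop
  have m2 : Measurable fun s => |f (X s, Y s) * W s - g (X s, Y s) * V s| := by fun_prop
  rw [hun, setIntegral_union hdis measurableSet_Ioc (rosIntBdd m1 b1) (rosIntBdd m1 b1),
    setIntegral_union hdis measurableSet_Ioc (rosIntBdd m2 b2) (rosIntBdd m2 b2)] at key
  have lft : ∀ s ∈ Ioc 0 t, X s = x s ∧ Y s = y s ∧ V s = f (x s, y s) ∧ W s = g (x s, y s) := by
    intro s hs
    simp only [hX, hY, hV, hW]
    rw [rosX_left hs.2, rosX_left hs.2, rosV, rosV, if_pos hs.2, if_pos hs.2, min_eq_right hs.2,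
      max_eq_right hs.1.le]
    exact ⟨rfl, rfl, rfl, rfl⟩
  have I1 : ∫ s in Ioc 0 t, H (X s, Y s) * W s = ∫ s in Ioc 0 t, H (x s, y s) * g (x s, y s) := by
    refine setIntegral_congr_fun measurableSet_Ioc fun s hs => ?_
    obtain ⟨e1, e2, -, e4⟩ := lft s hs
    simp only [e1, e2, e4]
  have I2 : ∫ s in Ioc 0 t, |f (X s, Y s) * W s - g (X s, Y s) * V s| = 0 := by
    rw [setIntegral_congr_fun (g := fun _ => (0 : ℝ)) measurableSet_Ioc]
    · simp
    · intro s hs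
      obtain ⟨e1, e2, e3, e4⟩ := lft s hs
      simp only [e1, e2, e3, e4]
      rw [mul_comm (g _)]; simp
  have rgt : ∀ s ∈ Ioc t (t + 1), |V s| ≤ 2 * M ∧ |W s| ≤ 2 * M := by
    intro s hs
    simp only [hV, hW, rosV]
    rw [if_neg (not_le.2 hs.1), if_neg (not_le.2 hs.1)]
    exact ⟨diff x h.bx, diff y h.hby⟩
  have I3 : |∫ s in Ioc t (t + 1), H (X s, Y s) * W s| ≤ KH * (2 * M) := by
    have := norm_setIntegral_le_of_norm_le_const (μ := volume) (s := Ioc t (t + 1))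
      (f := fun s => H (X s, Y s) * W s) (C := KH * (2 * M)) (by simp) (fun s hs => by
        rw [norm_mul]
        exact mul_le_mul (hKH _ (XYbox s)) (rgt s hs).2 (abs_nonneg _) KH0)
    simpa [measureReal_def] using this
  have I4 : ∫ s in Ioc t (t + 1), |f (X s, Y s) * W s - g (X s, Y s) * V s| ≤
      Kf * (2 * M) + Kg * (2 * M) := by
    have := norm_setIntegral_le_of_norm_le_const (μ := volume) (s := Ioc t (t + 1))
      (f := fun s => |f (X s, Y s) * W s - g (X s, Y s) * V s|)
      (C := Kf * (2 * M) + Kg * (2 * M)) (by simp) (fun s hs => by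
        rw [Real.norm_eq_abs, abs_abs]
        refine (abs_sub _ _).trans ?_
        rw [abs_mul, abs_mul]
        exact add_le_add (mul_le_mul (hKf _ (XYbox s)) (rgt s hs).2 (abs_nonneg _) Kf0)
          (mul_le_mul (hKg _ (XYbox s)) (rgt s hs).1 (abs_nonneg _) Kg0))
    have h2 := (le_abs_self _).trans this
    simpa [measureReal_def] using h2
  rw [I1, I2, zero_add] at key
  have k2 := key.trans (mul_le_mul_of_nonneg_left I4 hC)
  have k3 := abs_sub_abs_le_abs_sub (∫ s in Ioc 0 t, H (x s, y s) * g (x s, y s))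
    (-∫ s in Ioc t (t + 1), H (X s, Y s) * W s)
  rw [sub_neg_eq_add, abs_neg] at k3
  linarith

lemma RosSys.inbox {f g : ℝ × ℝ → ℝ} {x y : ℝ → ℝ} {M : ℝ} (h : RosSys f g x y M) {s : ℝ}
    (hs : 0 ≤ s) : (x s, y s) ∈ Icc 1 M ×ˢ Icc 1 M :=
  ⟨⟨(h.posx s hs).le, (abs_le.1 (h.bx s hs)).2⟩, ⟨(h.posy s hs).le, (abs_le.1 (h.hby s hs)).2⟩⟩

lemma RosSys.lipx {f g : ℝ × ℝ → ℝ} {x y : ℝ → ℝ} {M : ℝ} (h : RosSys f g x y M) :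
    ∃ L, 0 ≤ L ∧ ∀ s t, 0 ≤ s → 0 ≤ t → |x t - x s| ≤ L * |t - s| := by
  have cbox : IsCompact (Icc 1 M ×ˢ Icc 1 M) := isCompact_Icc.prod isCompact_Icc
  obtain ⟨L, hL⟩ := cbox.exists_bound_of_continuousOn h.hf.continuous.continuousOn
  refine ⟨L, (norm_nonneg _).trans (hL _ (h.inbox le_rfl)), fun s t hs ht => ?_⟩
  exact (convex_Ici (0 : ℝ)).norm_image_sub_le_of_norm_hasDerivWithin_le
    (fun r hr => (h.dx r hr).hasDerivWithinAt) (fun r hr => hL _ (h.inbox hr)) hs ht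

lemma RosSys.clusterBox {f g : ℝ × ℝ → ℝ} {x y : ℝ → ℝ} {M : ℝ} (h : RosSys f g x y M) {q : ℝ × ℝ}
    (hq : MapClusterPt q atTop fun t => (x t, y t)) : q ∈ Icc 1 M ×ˢ Icc 1 M := by
  have cbox : IsClosed (Icc 1 M ×ˢ Icc 1 M) := isClosed_Icc.prod isClosed_Icc
  refine cbox.mem_of_mapClusterPt hq ?_
  filter_upwards [eventually_ge_atTop 0] with t ht using h.inbox ht

lemma rosBump (q : ℝ) (hq : 1 ≤ q) (r : ℝ) (hr : 0 < r) :
    ∃ (ρ : ℝ → ℝ) (r' δ : ℝ), 0 < r' ∧ 0 < δ ∧ ContDiff ℝ 1 ρ ∧ (∀ u, 0 ≤ ρ u) ∧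
      (∀ u, |u - q| ≤ r' → ρ u = 1) ∧ (∀ u, r ≤ |u - q| → ρ u = 0) ∧
      (∀ u, 1 < u → u < 1 + δ → deriv ρ u = 0) := by
  have main : ∀ R, 0 < R → R ≤ r → ∀ δ, 0 < δ → (q = 1 ∧ δ = R / 2 ∨ R + δ + 1 ≤ q) → 
    ∃ (ρ : ℝ → ℝ) (r' δ : ℝ), 0 < r' ∧ 0 < δ ∧ ContDiff ℝ 1 ρ ∧ (∀ u, 0 ≤ ρ u) ∧
      (∀ u, |u - q| ≤ r' → ρ u = 1) ∧ (∀ u, r ≤ |u - q| → ρ u = 0) ∧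
      (∀ u, 1 < u → u < 1 + δ → deriv ρ u = 0) := by
    intro R hR hRr δ hδ hor
    let b : ContDiffBump q := ⟨R / 2, R, by linarith, by linarith⟩
    refine ⟨b, R / 2, δ, by linarith, hδ, b.contDiff, fun u => b.nonneg, ?_, ?_, ?_⟩
    · intro u hu
      exact b.one_of_mem_closedBall (by rw [Metric.mem_closedBall, Real.dist_eq]; exact hu)
    · intro u hu
      exact b.zero_of_le_dist (by rw [Real.dist_eq]; exact hRr.trans hu)
    · intro u hu1 hu2
      rcases hor with ⟨h1, h2⟩ | h1
      · have : b =ᶠ[𝓝 u] fun _ => (1 : ℝ) := by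
          refine b.eventuallyEq_one_of_mem_ball ?_
          rw [Metric.mem_ball, Real.dist_eq, abs_lt]
          change _ ∧ _ < R / 2
          constructor
          · change -(R / 2) < _
            linarith
          · linarith
        rw [this.deriv_eq]; simp
      · have : b =ᶠ[𝓝 u] fun _ => (0 : ℝ) := by
          filter_upwards [Iio_mem_nhds hu2] with v hv
          refine b.zero_of_le_dist ?_
          rw [Real.dist_eq, abs_sub_comm]
          refine le_trans ?_ (le_abs_self _)
          change R ≤ _
          have : v < 1 + δ := hv
          linarith
        rw [this.deriv_eq]; simp
  rcases hq.eq_or_lt with h | h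
  · exact main r hr le_rfl (r / 2) (by linarith) (Or.inl ⟨h.symm, rfl⟩)
  · refine main (min r ((q - 1) / 2)) (lt_min hr (by linarith)) (min_le_left _ _) ((q - 1) / 2)
      (by linarith) (Or.inr ?_)
    linarith [min_le_right r ((q - 1) / 2)]

lemma rosFx {F : ℝ × ℝ → ℝ} (hF : ContDiff ℝ 1 F) (p : ℝ × ℝ) :
    HasDerivAt (fun u => F (u, p.2)) (fderiv ℝ F p (1, 0)) p.1 := by
  have h1 : HasFDerivAt F (fderiv ℝ F p) (p.1, p.2) :=
    (hF.differentiable (by norm_num) _).hasFDerivAt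
  exact h1.comp_hasDerivAt p.1 ((hasDerivAt_id p.1).prodMk (hasDerivAt_const p.1 p.2))

lemma RosSys.gzero {f g : ℝ × ℝ → ℝ} {x y : ℝ → ℝ} {M : ℝ} (h : RosSys f g x y M) {q : ℝ × ℝ}
    (hq : MapClusterPt q atTop fun t => (x t, y t)) : g q = 0 := by
  by_contra hne
  obtain ⟨⟨hq1, hq1'⟩, hq2, hq2'⟩ := h.clusterBox hq
  have hκ : 0 < g q * g q := mul_self_pos.2 hne
  have cg := h.hg.continuous
  obtain ⟨r, hr, hrg⟩ : ∃ r > 0, ∀ p : ℝ × ℝ, |p.1 - q.1| < r → |p.2 - q.2| < r →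
      g q * g q / 2 ≤ g q * g p := by
    have : ∀ᶠ p in 𝓝 q, g q * g q / 2 < g q * g p :=
      (continuous_const.mul cg).continuousAt.eventually_const_lt (by simp only [Pi.mul_apply]; linarith)
    obtain ⟨r, hr, hr'⟩ := Metric.eventually_nhds_iff.1 this
    refine ⟨r, hr, fun p h1 h2 => (hr' ?_).le⟩
    rw [Prod.dist_eq, max_lt_iff, Real.dist_eq, Real.dist_eq]; exact ⟨h1, h2⟩
  obtain ⟨ρ, r1, δ, hr1, hδ, sρ, ρ0, ρ1, ρz, ρd⟩ := rosBump q.1 hq1 r hr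
  obtain ⟨χ, r2, -, hr2, -, sχ, χ0, χ1, χz, -⟩ := rosBump q.2 hq2 r hr
  set H : ℝ × ℝ → ℝ := fun p => g q * (ρ p.1 * χ p.2) with hHdef
  have hH : ContDiff ℝ 1 H :=
    contDiff_const.mul ((sρ.comp contDiff_fst).mul (sχ.comp contDiff_snd))
  have Hnn : ∀ p, 0 ≤ H p * g p := by
    intro p
    have e : H p * g p = (ρ p.1 * χ p.2) * (g q * g p) := by simp only [hHdef]; ring
    rw [e]
    by_cases h1 : |p.1 - q.1| < r
    · by_cases h2 : |p.2 - q.2| < r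
      · exact mul_nonneg (mul_nonneg (ρ0 _) (χ0 _)) (by linarith [hrg p h1 h2])
      · rw [χz _ (not_lt.1 h2)]; simp
    · rw [ρz _ (not_lt.1 h1)]; simp
  have Hpos : ∀ p : ℝ × ℝ, |p.1 - q.1| < min r (min r1 r2) → |p.2 - q.2| < min r (min r1 r2) →
      g q * g q / 2 ≤ H p * g p := by
    intro p h1 h2
    simp only [lt_min_iff] at h1 h2
    have := hrg p h1.1 h2.1
    simp only [hHdef]
    rw [ρ1 _ h1.2.1.le, χ1 _ h2.2.2.le]
    linarith
  set R := min r (min r1 r2) with hR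
  have hR0 : 0 < R := lt_min hr (lt_min hr1 hr2)
  have cHx : Continuous fun p => fderiv ℝ H p (1, 0) :=
    (hH.continuous_fderiv (by norm_num)).clm_apply continuous_const
  have cfx : Continuous fun p => fderiv ℝ f p (1, 0) :=
    (h.hf.continuous_fderiv (by norm_num)).clm_apply continuous_const
  have cS : IsCompact (Icc (1 + δ) (M + 1) ×ˢ Icc 1 (M + 1)) := isCompact_Icc.prod isCompact_Icc
  obtain ⟨C, hC⟩ := cS.exists_bound_of_continuousOn
    (f := fun p => fderiv ℝ H p (1, 0) / fderiv ℝ f p (1, 0))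
    (cHx.continuousOn.div cfx.continuousOn fun p hp => (h.fx p (by linarith [hp.1.1])).ne)
  obtain ⟨K, hK⟩ := h.intBound (C := max C 0) (le_max_right _ _) H hH (by
    intro p h1 h2 h3 h4
    have hfx := h.fx p h1
    have hgy := h.gy p h2
    rcases lt_or_ge p.1 (1 + δ) with h5 | h5
    · have : fderiv ℝ H p (1, 0) = 0 := by
        have d1 := rosFx hH p
        have d2 : HasDerivAt (fun u => H (u, p.2)) (g q * (deriv ρ p.1 * χ p.2)) p.1 :=
          ((sρ.differentiable (by norm_num) p.1).hasDerivAt.mul_const (χ p.2)).const_mul (g q)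
        rw [d1.unique d2, ρd _ h1 h5]; simp
      rw [this, abs_zero]
      exact mul_nonneg (le_max_right _ _) (by linarith)
    · have := hC p ⟨⟨h5, h3⟩, h2.le, h4⟩
      rw [Real.norm_eq_abs, abs_div, div_le_iff₀ (abs_pos.2 hfx.ne), abs_of_neg hfx] at this
      refine this.trans ?_
      exact mul_le_mul (le_max_left _ _) (by linarith) (by linarith) (le_max_right _ _))
  obtain ⟨Lx, hLx0, hLx⟩ := h.lipx
  obtain ⟨Ly, hLy0, hLy⟩ := h.swap.lipx
  set φ : ℝ → ℝ := fun s => H (x s, y s) * g (x s, y s) with hφ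
  have cφ : ContinuousOn φ (Ici 0) :=
    (hH.continuous.comp_continuousOn (h.cx.prodMk h.cy)).mul
      (cg.comp_continuousOn (h.cx.prodMk h.cy))
  have iφ : ∀ T, IntegrableOn φ (Ioc 0 T) := fun T =>
    ((cφ.mono (fun s (hs : s ∈ Icc 0 T) => hs.1)).integrableOn_Icc).mono_set Ioc_subset_Icc_self
  set τ := R / (2 * (Lx + Ly + 1)) with hτ
  have hτ0 : 0 < τ := by positivity
  have hτL : (Lx + Ly + 1) * τ = R / 2 := by rw [hτ]; field_simp
  have step : ∀ n : ℕ, ∃ t, 0 ≤ t ∧ n * (τ * (g q * g q / 2)) ≤ ∫ s in Ioc 0 t, φ s := by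
    intro n
    induction n with
    | zero => exact ⟨0, le_rfl, by simp⟩
    | succ n ih =>
      obtain ⟨t, ht, hI⟩ := ih
      have hfr : ∃ᶠ t' in atTop, dist (x t', y t') q < R / 2 :=
        hq.frequently (Metric.ball_mem_nhds q (by linarith : 0 < R / 2))
      obtain ⟨t', hd, ht'⟩ := (hfr.and_eventually (eventually_ge_atTop t)).exists
      rw [Prod.dist_eq, max_lt_iff, Real.dist_eq, Real.dist_eq] at hd
      simp only at hd
      refine ⟨t' + τ, by linarith, ?_⟩
      have hdis : Disjoint (Ioc 0 t) (Ioc t' (t' + τ)) := Ioc_disjoint_Ioc_of_le ht'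
      have iφ' : IntegrableOn φ (Ioc t' (t' + τ)) :=
        (iφ (t' + τ)).mono_set (Ioc_subset_Ioc_left (ht.trans ht'))
      have h1 : ∫ s in Ioc 0 t ∪ Ioc t' (t' + τ), φ s ≤ ∫ s in Ioc 0 (t' + τ), φ s := by
        refine setIntegral_mono_set (iφ _) (Eventually.of_forall fun s => Hnn _) ?_
        refine (union_subset (Ioc_subset_Ioc_right (by linarith))
          (Ioc_subset_Ioc_left (by linarith))).eventuallyLE
      rw [setIntegral_union hdis measurableSet_Ioc (iφ t) iφ'] at h1
      have h2 : ∫ s in Ioc t' (t' + τ), (g q * g q / 2) ≤ ∫ s in Ioc t' (t' + τ), φ s := by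
        refine setIntegral_mono_on (by simp) iφ' measurableSet_Ioc fun s hs => ?_
        have l1 := hLx t' s (by linarith) (by linarith [hs.1])
        have l2 := hLy t' s (by linarith) (by linarith [hs.1])
        rw [abs_of_nonneg (by linarith [hs.1] : 0 ≤ s - t')] at l1 l2
        have hs2 : s - t' ≤ τ := by linarith [hs.2]
        have hs1 : 0 < s - t' := by linarith [hs.1]
        refine Hpos _ ?_ ?_
        · simp only
          have e : x s - q.1 = (x s - x t') + (x t' - q.1) := by ring
          rw [e]
          refine (abs_add_le _ _).trans_lt ?_
          nlinarith
        · simp only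
          have e : y s - q.2 = (y s - y t') + (y t' - q.2) := by ring
          rw [e]
          refine (abs_add_le _ _).trans_lt ?_
          nlinarith
      have h3 : ∫ s in Ioc t' (t' + τ), (g q * g q / 2) = τ * (g q * g q / 2) := by
        simp [measureReal_def, hτ0.le]
      push_cast
      linarith
  have hβ : 0 < τ * (g q * g q / 2) := by positivity
  obtain ⟨n, hn⟩ := exists_nat_gt (K / (τ * (g q * g q / 2)))
  obtain ⟨t, ht, hI⟩ := step n
  rw [div_lt_iff₀ hβ] at hn
  linarith [(le_abs_self _).trans (hK t ht)]

lemma RosSys.clusterSwap {x y : ℝ → ℝ} {q : ℝ × ℝ}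
    (hq : MapClusterPt q atTop fun t => (x t, y t)) :
    MapClusterPt (q.2, q.1) atTop fun t => (y t, x t) :=
  MapClusterPt.continuousAt_comp (f := fun p : ℝ × ℝ => (p.2, p.1)) (by fun_prop) hq

lemma RosSys.fzero {f g : ℝ × ℝ → ℝ} {x y : ℝ → ℝ} {M : ℝ} (h : RosSys f g x y M) {q : ℝ × ℝ}
    (hq : MapClusterPt q atTop fun t => (x t, y t)) : f q = 0 :=
  h.swap.gzero (RosSys.clusterSwap hq)

lemma RosSys.fanti {f g : ℝ × ℝ → ℝ} {x y : ℝ → ℝ} {M : ℝ} (h : RosSys f g x y M) (v : ℝ) :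
    StrictAntiOn (fun u => f (u, v)) (Ici 1) := by
  have cf := h.hf.continuous
  refine strictAntiOn_of_deriv_neg (convex_Ici 1) (by fun_prop) fun u hu => ?_
  rw [interior_Ici] at hu
  rw [(rosFx h.hf (u, v)).deriv]
  exact h.fx (u, v) hu

lemma RosSys.ganti {f g : ℝ × ℝ → ℝ} {x y : ℝ → ℝ} {M : ℝ} (h : RosSys f g x y M) (u : ℝ) :
    StrictAntiOn (fun v => g (u, v)) (Ici 1) := h.swap.fanti u

lemma RosSys.stuck {f g : ℝ × ℝ → ℝ} {x y : ℝ → ℝ} {M : ℝ} (h : RosSys f g x y M) {r t : ℝ}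
    (hr : 0 ≤ r) (hf : f (x r, y r) = 0) (hg : g (x r, y r) = 0) (hrt : r ≤ t) : x t = x r := by
  have hF : ContDiff ℝ 1 fun p => (f p, g p) := h.hf.prodMk h.hg
  obtain ⟨L, hL⟩ := hF.contDiffOn.exists_lipschitzOnWith (s := Icc 1 M ×ˢ Icc 1 M)
    (by norm_num) ((convex_Icc _ _).prod (convex_Icc _ _)) (isCompact_Icc.prod isCompact_Icc)
  have hd : ∀ s, 0 ≤ s → HasDerivAt (fun s => (x s, y s)) (f (x s, y s), g (x s, y s)) s :=
    fun s hs => (h.dx s hs).prodMk (h.dy s hs)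
  have := ODE_solution_unique_of_mem_Icc_right (v := fun _ p => (f p, g p))
    (s := fun _ => Icc 1 M ×ˢ Icc 1 M) (K := L) (f := fun s => (x s, y s))
    (g := fun _ => (x r, y r)) (a := r) (b := t) (fun _ _ => hL)
    (fun s hs => (hd s (hr.trans hs.1)).continuousAt.continuousWithinAt)
    (fun s hs => (hd s (hr.trans hs.1)).hasDerivWithinAt)
    (fun s hs => h.inbox (hr.trans hs.1)) continuousOn_const
    (fun s _ => by
      simp only [hf, hg]
      exact hasDerivWithinAt_const _ _ _)
    (fun s _ => h.inbox hr) rfl ⟨hrt, le_rfl⟩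
  exact congrArg Prod.fst this

lemma rosCross {x : ℝ → ℝ} {s t c1 c2 : ℝ} (hst : s ≤ t) (cx : ContinuousOn x (Icc s t))
    (hs : x s ≤ c1) (ht : c2 ≤ x t) (hc : c1 < c2) :
    ∃ t1 t2, s ≤ t1 ∧ t1 < t2 ∧ t2 ≤ t ∧ x t1 = c1 ∧ x t2 = c2 ∧
      ∀ r ∈ Icc t1 t2, x r ∈ Icc c1 c2 := by
  obtain ⟨t2, ⟨h2, hx2⟩, hmin⟩ : ∃ t2, IsLeast (Icc s t ∩ {r | c2 ≤ x r}) t2 := by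
    apply IsCompact.exists_isLeast
    · refine isCompact_Icc.of_isClosed_subset ?_ inter_subset_left
      exact cx.preimage_isClosed_of_isClosed isClosed_Icc isClosed_Ici
    · exact ⟨t, ⟨hst, le_rfl⟩, ht⟩
  have cx2 : ContinuousOn x (Icc s t2) := cx.mono (Icc_subset_Icc_right h2.2)
  obtain ⟨t1, ⟨h1, hx1⟩, hmax⟩ : ∃ t1, IsGreatest (Icc s t2 ∩ {r | x r ≤ c1}) t1 := by
    apply IsCompact.exists_isGreatest
    · refine isCompact_Icc.of_isClosed_subset ?_ inter_subset_left
      exact cx2.preimage_isClosed_of_isClosed isClosed_Icc isClosed_Iic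
    · exact ⟨s, ⟨le_rfl, h2.1⟩, hs⟩
  simp only [mem_ofPred_eq] at hx1 hx2
  have cx3 : ContinuousOn x (Icc t1 t2) := cx2.mono (Icc_subset_Icc_left h1.1)
  have e2 : x t2 = c2 := by
    obtain ⟨r, hr, hxr⟩ := intermediate_value_Icc h2.1 cx2
      (⟨by linarith, hx2⟩ : c2 ∈ Icc (x s) (x t2))
    have := hmin ⟨⟨hr.1, hr.2.trans h2.2⟩, hxr.ge⟩
    have : r = t2 := le_antisymm hr.2 this
    rw [← this, hxr]
  have e1 : x t1 = c1 := by
    obtain ⟨r, hr, hxr⟩ := intermediate_value_Icc h1.2 cx3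
      (⟨hx1, by linarith⟩ : c1 ∈ Icc (x t1) (x t2))
    have := hmax ⟨⟨h1.1.trans hr.1, hr.2⟩, hxr.le⟩
    have : r = t1 := le_antisymm this hr.1
    rw [← this, hxr]
  have hne : t1 ≠ t2 := by rintro rfl; linarith
  refine ⟨t1, t2, h1.1, lt_of_le_of_ne h1.2 hne, h2.2, e1, e2, fun r hr => ⟨?_, ?_⟩⟩
  · by_contra! hcon
    have := hmax ⟨⟨h1.1.trans hr.1, hr.2⟩, hcon.le⟩
    have : r = t1 := le_antisymm this hr.1
    rw [this] at hcon; linarith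
  · by_contra! hcon
    have := hmin ⟨⟨h1.1.trans hr.1, hr.2.trans h2.2⟩, hcon.le⟩
    have : r = t2 := le_antisymm hr.2 this
    rw [this] at hcon; linarith

lemma RosSys.evNot {f g : ℝ × ℝ → ℝ} {x y : ℝ → ℝ} {M : ℝ} (h : RosSys f g x y M)
    {S : Set (ℝ × ℝ)} (hS : IsClosed S)
    (hn : ∀ q ∈ S, ¬ MapClusterPt q atTop fun t => (x t, y t)) :
    ∀ᶠ t in atTop, (x t, y t) ∉ S := by
  by_contra hcon
  rw [not_eventually] at hcon
  have cbox : IsCompact (Icc 1 M ×ˢ Icc 1 M) := isCompact_Icc.prod isCompact_Icc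
  have : ∃ᶠ t in atTop, (x t, y t) ∈ (Icc 1 M ×ˢ Icc 1 M) ∩ S := by
    refine (hcon.and_eventually (eventually_ge_atTop 0)).mono fun t ht => ?_
    exact ⟨h.inbox ht.2, not_not.1 ht.1⟩
  obtain ⟨q, hq, hq'⟩ := (cbox.inter_right hS).exists_mapClusterPt_of_frequently this
  exact hn q hq.2 hq'

lemma RosSys.contra {f g : ℝ × ℝ → ℝ} {x y : ℝ → ℝ} {M : ℝ} (h : RosSys f g x y M) {a a' σ : ℝ}
    (haa : a < a') (b : ℝ → ℝ) (hσ : σ = 1 ∨ σ = -1) (cb : ContinuousOn b (Icc a a'))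
    (hcl : ∀ c ∈ Icc a a', MapClusterPt (c, b c) atTop fun t => (x t, y t))
    (hun : ∀ q : ℝ × ℝ, q.1 ∈ Icc a a' → (MapClusterPt q atTop fun t => (x t, y t)) → q.2 = b q.1)
    (hmono : StrictMonoOn (fun c => σ * b c) (Icc a a')) : False := by
  have cx := h.cx
  have cy := h.cy
  have cf := h.hf.continuous
  have cg := h.hg.continuous
  set c1 := a + (a' - a) / 3 with hc1
  set c2 := a + 2 * (a' - a) / 3 with hc2
  have a1 : a < c1 := by rw [hc1]; linarith
  have a2 : c1 < c2 := by rw [hc1, hc2]; linarith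
  have a3 : c2 < a' := by rw [hc2]; linarith
  have ma : a ∈ Icc a a' := ⟨le_rfl, haa.le⟩
  have ma' : a' ∈ Icc a a' := ⟨haa.le, le_rfl⟩
  have mc1 : c1 ∈ Icc a a' := ⟨a1.le, by linarith⟩
  have mc2 : c2 ∈ Icc a a' := ⟨by linarith, a3.le⟩
  have hlow : ∃ᶠ t in atTop, x t < c1 := by
    refine (hcl a ma).frequently (p := fun p : ℝ × ℝ => p.1 < c1) ?_
    exact continuous_fst.continuousAt.eventually_lt_const a1
  have hhigh : ∃ᶠ t in atTop, c2 < x t := by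
    refine (hcl a' ma').frequently (p := fun p : ℝ × ℝ => c2 < p.1) ?_
    exact continuous_fst.continuousAt.eventually_const_lt a3
  have hb1 : σ * b a < σ * b c1 := hmono ma mc1 a1
  have hb2 : σ * b c1 < σ * b c2 := hmono mc1 mc2 a2
  have hb3 : σ * b c2 < σ * b a' := hmono mc2 ma' a3
  set mid := (σ * b c1 + σ * b c2) / 2 with hmid
  have E0 : ∀ᶠ t in atTop, (x t, y t) ∉ ({p : ℝ × ℝ | c1 ≤ p.1} ∩ {p | p.1 ≤ c2}) ∩
      ({p | σ * p.2 ≤ σ * b a} ∪ {p | σ * b a' ≤ σ * p.2}) := by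
    refine h.evNot ?_ ?_
    · refine IsClosed.inter (IsClosed.inter ?_ ?_) (IsClosed.union ?_ ?_)
      · exact isClosed_le (by fun_prop) (by fun_prop)
      · exact isClosed_le (by fun_prop) (by fun_prop)
      · exact isClosed_le (by fun_prop) (by fun_prop)
      · exact isClosed_le (by fun_prop) (by fun_prop)
    · rintro q ⟨⟨h1, h2⟩, h3⟩ hq
      simp only [mem_union, mem_ofPred_eq] at h1 h2 h3
      have m1 : q.1 ∈ Icc a a' := ⟨by linarith, by linarith⟩
      rw [hun q m1 hq] at h3
      have k1 : σ * b a < σ * b q.1 := hmono ma m1 (by linarith)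
      have k2 : σ * b q.1 < σ * b a' := hmono m1 ma' (by linarith)
      rcases h3 with h3 | h3 <;> linarith
  have E1 : ∀ᶠ t in atTop, (x t, y t) ∉ {p : ℝ × ℝ | p.1 = c1} ∩ {p | mid ≤ σ * p.2} := by
    refine h.evNot ?_ ?_
    · exact (isClosed_eq (by fun_prop) (by fun_prop)).inter (isClosed_le (by fun_prop) (by fun_prop))
    · rintro q ⟨h1, h2⟩ hq
      simp only [mem_ofPred_eq] at h1 h2
      rw [hun q (by rw [h1]; exact mc1) hq, h1] at h2
      linarith
  have E2 : ∀ᶠ t in atTop, (x t, y t) ∉ {p : ℝ × ℝ | p.1 = c2} ∩ {p | σ * p.2 ≤ mid} := by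
    refine h.evNot ?_ ?_
    · exact (isClosed_eq (by fun_prop) (by fun_prop)).inter (isClosed_le (by fun_prop) (by fun_prop))
    · rintro q ⟨h1, h2⟩ hq
      simp only [mem_ofPred_eq] at h1 h2
      rw [hun q (by rw [h1]; exact mc2) hq, h1] at h2
      linarith
  obtain ⟨T, hT⟩ := eventually_atTop.1 (((E0.and E1).and E2).and (eventually_ge_atTop 0))
  obtain ⟨s, hxs, hs⟩ := (hlow.and_eventually (eventually_ge_atTop T)).exists
  obtain ⟨t, hxt, ht⟩ := (hhigh.and_eventually (eventually_ge_atTop s)).exists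
  have hs0 : 0 ≤ s := (hT s hs).2
  obtain ⟨t1, t2, ht1, h12, ht2, ex1, ex2, hbt⟩ := rosCross ht
    (cx.mono fun r hr => hs0.trans hr.1) hxs.le hxt.le a2
  have pos : ∀ r ∈ Icc t1 t2, 0 ≤ r := fun r hr => (hs0.trans ht1).trans hr.1
  have F1 : ∀ r ∈ Icc t1 t2, ∃ c ∈ Icc a a', b c = y r := by
    intro r hr
    have hr0 := (hT r (hs.trans (ht1.trans hr.1))).1.1.1
    have hx := hbt r hr
    simp only [mem_inter_iff, mem_union, mem_ofPred_eq, not_and, not_or, not_le] at hr0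
    obtain ⟨k1, k2⟩ := hr0 hx
    obtain ⟨c, hc, hc'⟩ := intermediate_value_Icc haa.le (f := fun c => σ * b c)
      (continuousOn_const.mul cb) (⟨k1.le, k2.le⟩ : σ * y r ∈ Icc (σ * b a) (σ * b a'))
    refine ⟨c, hc, ?_⟩
    simp only at hc'
    rcases hσ with rfl | rfl <;> linarith
  have bpt : ∀ c ∈ Icc a a', 1 ≤ c ∧ 1 ≤ b c ∧ f (c, b c) = 0 ∧ g (c, b c) = 0 := fun c hc =>
    ⟨(h.clusterBox (hcl c hc)).1.1, (h.clusterBox (hcl c hc)).2.1, h.fzero (hcl c hc),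
      h.gzero (hcl c hc)⟩
  have xin : ∀ r ∈ Icc t1 t2, x r ∈ Icc a a' := fun r hr =>
    ⟨by linarith [(hbt r hr).1], by linarith [(hbt r hr).2]⟩
  -- f does not vanish on the crossing
  have F2 : ∀ r ∈ Icc t1 t2, f (x r, y r) ≠ 0 := by
    intro r hr hf0
    have r0 := pos r hr
    obtain ⟨c, hc, hcy⟩ := F1 r hr
    obtain ⟨k1, k2, k3, k4⟩ := bpt c hc
    rw [hcy] at k3 k4
    have : x r = c := (h.fanti (y r)).injOn (h.posx r r0).le k1 (hf0.trans k3.symm)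
    have hg0 : g (x r, y r) = 0 := by rw [this]; exact k4
    obtain ⟨u, hu, hu'⟩ := (hlow.and_eventually (eventually_ge_atTop r)).exists
    obtain ⟨v, hv, hv'⟩ := (hhigh.and_eventually (eventually_ge_atTop r)).exists
    rw [h.stuck r0 hf0 hg0 hu'] at hu
    rw [h.stuck r0 hf0 hg0 hv'] at hv
    linarith
  have cxy : ContinuousOn (fun r => f (x r, y r)) (Icc t1 t2) :=
    cf.comp_continuousOn ((cx.mono pos).prodMk (cy.mono pos))
  have F3 : ∀ r ∈ Icc t1 t2, 0 < f (x r, y r) := by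
    obtain ⟨r0, hr0, hs0⟩ := exists_hasDerivAt_eq_slope x (fun r => f (x r, y r)) h12
      (cx.mono pos) (fun r hr => h.dx r (pos r ⟨hr.1.le, hr.2.le⟩))
    have p0 : 0 < f (x r0, y r0) := by
      rw [hs0, ex1, ex2]; exact div_pos (by linarith) (by linarith)
    intro r hr
    by_contra! hcon
    obtain ⟨r', hr', hz⟩ := isPreconnected_Icc.intermediate_value hr ⟨hr0.1.le, hr0.2.le⟩ cxy
      (⟨hcon, p0.le⟩ : (0 : ℝ) ∈ Icc (f (x r, y r)) (f (x r0, y r0)))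
    exact F2 r' hr' hz
  have F4 : ∀ r ∈ Icc t1 t2, σ * g (x r, y r) < 0 := by
    intro r hr
    have r0 := pos r hr
    obtain ⟨c, hc, hcy⟩ := F1 r hr
    obtain ⟨k1, k2, k3, k4⟩ := bpt c hc
    have hf0 := F3 r hr
    have hxc : x r < c := by
      by_contra! hcon
      have := (h.fanti (y r)).antitoneOn k1 (h.posx r r0).le hcon
      rw [hcy] at k3
      linarith
    have hb : σ * b (x r) < σ * b c := hmono (xin r hr) hc hxc
    rw [hcy] at hb
    obtain ⟨l1, l2, l3, l4⟩ := bpt (x r) (xin r hr)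
    have yr := (h.posy r r0).le
    rcases hσ with rfl | rfl
    · have := h.ganti (x r) l2 yr (by linarith : b (x r) < y r)
      simp only at this
      linarith
    · have := h.ganti (x r) yr l2 (by linarith : y r < b (x r))
      simp only at this
      linarith
  obtain ⟨r, hr, hsl⟩ := exists_hasDerivAt_eq_slope y (fun r => g (x r, y r)) h12
    (cy.mono pos) (fun r hr => h.dy r (pos r ⟨hr.1.le, hr.2.le⟩))
  have hneg := F4 r ⟨hr.1.le, hr.2.le⟩
  rw [hsl, ← mul_div_assoc, div_lt_iff₀ (by linarith), zero_mul] at hneg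
  have q1 := (hT t1 (hs.trans ht1)).1.1.2
  have q2 := (hT t2 (hs.trans (ht1.trans h12.le))).1.2
  simp only [mem_inter_iff, mem_union, mem_ofPred_eq, not_and, not_le] at q1 q2
  have q1 := q1 ex1
  have q2 := q2 ex2
  linarith

lemma RosSys.clusterX {f g : ℝ × ℝ → ℝ} {x y : ℝ → ℝ} {M : ℝ} (h : RosSys f g x y M)
    {q q' : ℝ × ℝ} (hq : MapClusterPt q atTop fun t => (x t, y t))
    (hq' : MapClusterPt q' atTop fun t => (x t, y t)) (hlt : q.1 < q'.1) : False := by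
  have cg := h.hg.continuous
  have ex : ∀ c ∈ Icc q.1 q'.1, ∃ v, MapClusterPt (c, v) atTop fun t => (x t, y t) := by
    intro c hc
    rcases hc.1.eq_or_lt with h1 | h1
    · exact ⟨q.2, by rw [← h1]; exact hq⟩
    rcases hc.2.eq_or_lt with h2 | h2
    · exact ⟨q'.2, by rw [h2]; exact hq'⟩
    have hlow : ∃ᶠ t in atTop, x t < c := by
      refine hq.frequently (p := fun p : ℝ × ℝ => p.1 < c) ?_
      exact continuous_fst.continuousAt.eventually_lt_const h1
    have hhigh : ∃ᶠ t in atTop, c < x t := by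
      refine hq'.frequently (p := fun p : ℝ × ℝ => c < p.1) ?_
      exact continuous_fst.continuousAt.eventually_const_lt h2
    by_contra! hcon
    have hev := h.evNot (S := {p | p.1 = c}) (isClosed_eq (by fun_prop) (by fun_prop)) (by
      rintro ⟨u, v⟩ (hu : u = c)
      rw [hu]; exact hcon v)
    obtain ⟨T, hT⟩ := eventually_atTop.1 (hev.and (eventually_ge_atTop 0))
    obtain ⟨s, hxs, hs⟩ := (hlow.and_eventually (eventually_ge_atTop T)).exists
    obtain ⟨t, hxt, ht⟩ := (hhigh.and_eventually (eventually_ge_atTop s)).exists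
    obtain ⟨r, hr, hxr⟩ := intermediate_value_Icc ht
      (h.cx.mono fun r hr => (hT s hs).2.trans hr.1) (⟨hxs.le, hxt.le⟩ : c ∈ Icc (x s) (x t))
    exact (hT r (hs.trans hr.1)).1 hxr
  have : ∀ c, ∃ v, c ∈ Icc q.1 q'.1 → MapClusterPt (c, v) atTop fun t => (x t, y t) := by
    intro c
    by_cases hc : c ∈ Icc q.1 q'.1
    · obtain ⟨v, hv⟩ := ex c hc; exact ⟨v, fun _ => hv⟩
    · exact ⟨0, fun h => absurd h hc⟩
  choose b hb using this
  have hun : ∀ p : ℝ × ℝ, p.1 ∈ Icc q.1 q'.1 → (MapClusterPt p atTop fun t => (x t, y t)) →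
      p.2 = b p.1 := by
    intro p hp hpc
    have k1 := hb p.1 hp
    exact (h.ganti p.1).injOn (h.clusterBox hpc).2.1 (h.clusterBox k1).2.1
      ((h.gzero hpc).trans (h.gzero k1).symm)
  have hinj : InjOn b (Icc q.1 q'.1) := by
    intro c hc d hd hcd
    have k1 := hb c hc
    have k2 := hb d hd
    rw [← hcd] at k2
    exact (h.fanti (b c)).injOn (h.clusterBox k1).1.1 (h.clusterBox k2).1.1
      ((h.fzero k1).trans (h.fzero k2).symm)
  have cb : ContinuousOn b (Icc q.1 q'.1) := by
    intro c0 hc0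
    have k0 := hb c0 hc0
    have z0 := h.gzero k0
    have o0 := (h.clusterBox k0).2.1
    simp only at o0
    refine tendsto_order.2 ⟨fun v hv => ?_, fun v hv => ?_⟩
    · rcases lt_or_ge v 1 with h1 | h1
      · filter_upwards [self_mem_nhdsWithin] with c hc
        exact h1.trans_le (h.clusterBox (hb c hc)).2.1
      · have : 0 < g (c0, v) := by rw [← z0]; exact h.ganti c0 h1 o0 hv
        have ev : ∀ᶠ c in 𝓝 c0, 0 < g (c, v) :=
          (by fun_prop : Continuous fun c => g (c, v)).continuousAt.eventually_const_lt this
        filter_upwards [self_mem_nhdsWithin, nhdsWithin_le_nhds ev] with c hc hcv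
        by_contra! hcon
        have := (h.ganti c).antitoneOn (h.clusterBox (hb c hc)).2.1 h1 hcon
        simp only at this
        rw [h.gzero (hb c hc)] at this
        linarith
    · have h1 : 1 ≤ v := by linarith
      have : g (c0, v) < 0 := by rw [← z0]; exact h.ganti c0 o0 h1 hv
      have ev : ∀ᶠ c in 𝓝 c0, g (c, v) < 0 :=
        (by fun_prop : Continuous fun c => g (c, v)).continuousAt.eventually_lt_const this
      filter_upwards [self_mem_nhdsWithin, nhdsWithin_le_nhds ev] with c hc hcv
      by_contra! hcon
      have := (h.ganti c).antitoneOn h1 (h.clusterBox (hb c hc)).2.1 hcon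
      simp only at this
      rw [h.gzero (hb c hc)] at this
      linarith
  rcases cb.strictMonoOn_of_injOn_Icc' hlt.le hinj with hm | hm
  · exact h.contra hlt b (Or.inl rfl) cb hb hun (fun c hc d hd hcd => by
      simp only [one_mul]; exact hm hc hd hcd)
  · exact h.contra hlt b (Or.inr rfl) cb hb hun (fun c hc d hd hcd => by
      have := hm hc hd hcd
      simp only; linarith)

lemma RosSys.conv {f g : ℝ × ℝ → ℝ} {x y : ℝ → ℝ} {M : ℝ} (h : RosSys f g x y M) :
    ∃ q : ℝ × ℝ, 1 ≤ q.1 ∧ 1 ≤ q.2 ∧ f q = 0 ∧ g q = 0 ∧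
      Tendsto (fun t => (x t, y t)) atTop (𝓝 q) := by
  have cbox : IsCompact (Icc 1 M ×ˢ Icc 1 M) := isCompact_Icc.prod isCompact_Icc
  have hev : ∀ᶠ t in atTop, (x t, y t) ∈ Icc 1 M ×ˢ Icc 1 M := by
    filter_upwards [eventually_ge_atTop 0] with t ht using h.inbox ht
  obtain ⟨q, -, hq⟩ := cbox.exists_mapClusterPt_of_frequently hev.frequently
  refine ⟨q, (h.clusterBox hq).1.1, (h.clusterBox hq).2.1, h.fzero hq, h.gzero hq, ?_⟩
  refine cbox.tendsto_nhds_of_unique_mapClusterPt hev fun p _ hp => ?_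
  have e1 : p.1 = q.1 := by
    rcases lt_trichotomy p.1 q.1 with h1 | h1 | h1
    · exact (h.clusterX hp hq h1).elim
    · exact h1
    · exact (h.clusterX hq hp h1).elim
  refine Prod.ext e1 ?_
  have z := h.gzero hp
  have e : p = (q.1, p.2) := Prod.ext e1 rfl
  rw [e] at z
  exact (h.ganti q.1).injOn (h.clusterBox hp).2.1 (h.clusterBox hq).2.1 (z.trans (h.gzero hq).symm)

lemma rosMain
    (U : (Fin 2 → ℝ) → (Fin 2 → ℝ)) (hU : ContDiff ℝ 1 U)
    (hpartial : ∀ (i : Fin 2) (m : Fin 2 → ℝ), 1 < m i → fderiv ℝ U m (Pi.single i 1) i < 0)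
    (hbd : ∀ (m : Fin 2 → ℝ) (i : Fin 2), m i = 1 → 0 ≤ U m i)
    (m : ℝ → (Fin 2 → ℝ)) (hm : ∀ t : ℝ, 0 ≤ t → HasDerivAt m (U (m t)) t)
    (h0 : ∀ i, 1 < m 0 i) (hbdd : Bornology.IsBounded (m '' Set.Ici (0 : ℝ))) :
    ∃ p : Fin 2 → ℝ, (∀ i, 1 ≤ p i) ∧ U p = 0 ∧ Filter.Tendsto m Filter.atTop (nhds p) := by
  let A : ℝ × ℝ →L[ℝ] (Fin 2 → ℝ) :=
    ContinuousLinearMap.pi ![ContinuousLinearMap.fst ℝ ℝ ℝ, ContinuousLinearMap.snd ℝ ℝ ℝ]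
  have A0 : ∀ p, A p 0 = p.1 := fun p => rfl
  have A1 : ∀ p, A p 1 = p.2 := fun p => rfl
  have Am : ∀ v : Fin 2 → ℝ, A (v 0, v 1) = v := by
    intro v; ext i; fin_cases i <;> rfl
  have Ae0 : A (1, 0) = Pi.single 0 1 := by
    ext i; fin_cases i
    · exact (A0 _).trans (by simp)
    · exact (A1 _).trans (by simp)
  have Ae1 : A (0, 1) = Pi.single 1 1 := by
    ext i; fin_cases i
    · exact (A0 _).trans (by simp)
    · exact (A1 _).trans (by simp)
  have hc : ∀ i, ContDiff ℝ 1 fun p => U (A p) i := fun i =>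
    (contDiff_pi.1 hU i).comp A.contDiff
  have hd : ∀ i p v, fderiv ℝ (fun p => U (A p) i) p v = fderiv ℝ U (A p) (A v) i := by
    intro i p v
    have h1 : HasFDerivAt U (fderiv ℝ U (A p)) (A p) :=
      (hU.differentiable (by norm_num) _).hasFDerivAt
    have h2 := hasFDerivAt_pi'.1 (h1.comp p A.hasFDerivAt) i
    have h3 := h2.fderiv
    simp only [Function.comp_def] at h3
    rw [h3]; rfl
  obtain ⟨M, hM⟩ := hbdd.exists_norm_le
  have hMt : ∀ t, 0 ≤ t → ∀ i, |m t i| ≤ M := fun t ht i =>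
    (norm_le_pi_norm (m t) i).trans (hM _ ⟨t, ht, rfl⟩)
  have hdt : ∀ i t, 0 ≤ t → HasDerivAt (fun t => m t i) (U (A (m t 0, m t 1)) i) t := by
    intro i t ht
    rw [Am]; exact hasDerivAt_pi.1 (hm t ht) i
  have sys : RosSys (fun p => U (A p) 0) (fun p => U (A p) 1) (fun t => m t 0) (fun t => m t 1) M := by
    refine ⟨hc 0, hc 1, ?_, ?_, fun y => hbd _ 0 (A0 _), fun y => hbd _ 1 (A1 _), hdt 0, hdt 1,
      h0 0, h0 1, fun t ht => hMt t ht 0, fun t ht => hMt t ht 1⟩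
    · intro p hp
      rw [hd, Ae0]; exact hpartial 0 (A p) hp
    · intro p hp
      rw [hd, Ae1]; exact hpartial 1 (A p) hp
  obtain ⟨q, q1, q2, hf, hg, ht⟩ := sys.conv
  refine ⟨A q, ?_, ?_, ?_⟩
  · intro i; fin_cases i
    · exact q1
    · exact q2
  · ext i; fin_cases i
    · exact hf
    · exact hg
  · have := (A.continuous.tendsto q).comp ht
    refine this.congr fun t => ?_
    exact Am (m t)

end RosHelpers

/-- Two-bidder ROS convergence: if `U : ℝ² → ℝ²` is C¹ with
`∂Uᵢ/∂mᵢ(m) < 0` whenever `mᵢ > 1` and `Uᵢ(m) ≥ 0` whenever `mᵢ = 1`,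
then every solution of `m' = U m` starting in `(1,∞)²` with bounded forward
orbit converges to an equilibrium `p ∈ [1,∞)²`. -/
theorem two_bidder_ros_convergence
    (U : (Fin 2 → ℝ) → (Fin 2 → ℝ))
    (hU : ContDiff ℝ 1 U)
    (hpartial : ∀ (i : Fin 2) (m : Fin 2 → ℝ), 1 < m i →
      fderiv ℝ U m (Pi.single i 1) i < 0)
    (hbd : ∀ (m : Fin 2 → ℝ) (i : Fin 2), m i = 1 → 0 ≤ U m i)
    (m : ℝ → (Fin 2 → ℝ))
    (hm : ∀ t : ℝ, 0 ≤ t → HasDerivAt m (U (m t)) t)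
    (h0 : ∀ i, 1 < m 0 i)
    (hbdd : Bornology.IsBounded (m '' Set.Ici (0 : ℝ))) :
    ∃ p : Fin 2 → ℝ, (∀ i, 1 ≤ p i) ∧ U p = 0 ∧
      Filter.Tendsto m Filter.atTop (nhds p) := by
  exact rosMain U hU hpartial hbd m hm h0 hbdd
end

section
/- Let S be a finite multiset of pairs (λ, d) with λ ∈ ℂ and d ≥ 1 an integer. Then there exists a purely competitive real matrix B (of some size m × m) such that for every λ ∈ ℂ and d ≥ 1, writing N := (complexification of B) − λ·I, the quantity rank(N^{d−1}) + rank(N^{d+1}) − 2·rank(N^{d}) is at least the multiplicity of (λ, d) in S. (Equivalently, the Jordan decomposition of B over ℂ contains the given multiset of Jordan blocks.) -/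
open Matrix

namespace CompJordan

/-- The number of blocks, from ranks. -/
noncomputable def q {ι : Type} [Fintype ι] [DecidableEq ι] (N : Matrix ι ι ℂ) (k : ℕ) : ℤ :=
  ((N ^ k).rank : ℤ) + ((N ^ (k + 2)).rank : ℤ) - 2 * ((N ^ (k + 1)).rank : ℤ)

lemma rank_step {ι : Type} [Fintype ι] [DecidableEq ι] (N : Matrix ι ι ℂ) (k : ℕ) :
    (N ^ k).rank = (N ^ (k + 1)).rank +
      Module.finrank ℂ ↥(LinearMap.ker N.mulVecLin ⊓ LinearMap.range (N ^ k).mulVecLin) := by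
  have h := LinearMap.finrank_range_add_finrank_ker
    (N.mulVecLin.domRestrict (LinearMap.range (N ^ k).mulVecLin))
  have h1 : LinearMap.range (N.mulVecLin.domRestrict (LinearMap.range (N ^ k).mulVecLin))
      = LinearMap.range (N ^ (k + 1)).mulVecLin := by
    rw [pow_succ', Matrix.mulVecLin_mul, LinearMap.range_comp, LinearMap.range_domRestrict]
  have h2 : Module.finrank ℂ
      ↥(LinearMap.ker (N.mulVecLin.domRestrict (LinearMap.range (N ^ k).mulVecLin)))
      = Module.finrank ℂ ↥(LinearMap.ker N.mulVecLin ⊓ LinearMap.range (N ^ k).mulVecLin) := by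
    rw [LinearMap.ker_domRestrict, inf_comm, ← Submodule.map_comap_subtype]
    exact (Submodule.equivMapOfInjective _ (Submodule.subtype_injective _) _).finrank_eq
  rw [h1, h2] at h
  exact h.symm

lemma q_eq {ι : Type} [Fintype ι] [DecidableEq ι] (N : Matrix ι ι ℂ) (k : ℕ) :
    q N k = (Module.finrank ℂ ↥(LinearMap.ker N.mulVecLin ⊓ LinearMap.range (N ^ k).mulVecLin) : ℤ)
     - Module.finrank ℂ ↥(LinearMap.ker N.mulVecLin ⊓ LinearMap.range (N ^ (k + 1)).mulVecLin) := by
  have h1 := rank_step N k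
  have h2 := rank_step N (k + 1)
  unfold q
  rw [show k + 1 + 1 = k + 2 from rfl] at h2
  omega

lemma le_aux {ι : Type} [Fintype ι] [DecidableEq ι] (N : Matrix ι ι ℂ) (k : ℕ) :
    LinearMap.ker N.mulVecLin ⊓ LinearMap.range (N ^ (k + 1)).mulVecLin ≤
    LinearMap.ker N.mulVecLin ⊓ LinearMap.range (N ^ k).mulVecLin := by
  refine inf_le_inf_left _ ?_
  rw [pow_succ, Matrix.mulVecLin_mul]
  exact LinearMap.range_comp_le_range _ _

lemma q_nonneg {ι : Type} [Fintype ι] [DecidableEq ι] (N : Matrix ι ι ℂ) (k : ℕ) :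
    0 ≤ q N k := by
  rw [q_eq]
  have := Submodule.finrank_mono (le_aux N k)
  omega

lemma q_pos {ι : Type} [Fintype ι] [DecidableEq ι] (N : Matrix ι ι ℂ) (k : ℕ)
    (v w : ι → ℂ) (hv : (N ^ (k + 1)) *ᵥ v = 0) (hw : w ᵥ* (N ^ (k + 1)) = 0)
    (hwv : w ⬝ᵥ ((N ^ k) *ᵥ v) ≠ 0) : 1 ≤ q N k := by
  rw [q_eq]
  have hlt : LinearMap.ker N.mulVecLin ⊓ LinearMap.range (N ^ (k + 1)).mulVecLin <
    LinearMap.ker N.mulVecLin ⊓ LinearMap.range (N ^ k).mulVecLin := by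
    refine lt_of_le_of_ne (le_aux N k) fun h => ?_
    have hm : (N ^ k) *ᵥ v ∈
        LinearMap.ker N.mulVecLin ⊓ LinearMap.range (N ^ k).mulVecLin := by
      refine ⟨?_, ⟨v, rfl⟩⟩
      simp only [SetLike.mem_coe, LinearMap.mem_ker, Matrix.mulVecLin_apply, Matrix.mulVec_mulVec, ← pow_succ']
      exact hv
    rw [← h] at hm
    obtain ⟨-, x, hx⟩ := hm
    rw [← hx, Matrix.mulVecLin_apply, Matrix.dotProduct_mulVec, hw] at hwv
    simp at hwv
  have := Submodule.finrank_lt_finrank_of_lt hlt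
  omega

/-- scalar seed -/
lemma seed (lam : ℂ) : ∃ (C : Matrix (Fin 4 ⊕ Fin 4) (Fin 4 ⊕ Fin 4) ℝ) (u y : Fin 4 ⊕ Fin 4 → ℂ),
    (∀ i j, C i j ≤ 0) ∧ (∀ i, C i i = 0) ∧ (C.map Complex.ofReal) *ᵥ u = lam • u ∧
    y ᵥ* (C.map Complex.ofReal) = lam • y ∧ y ⬝ᵥ u ≠ 0 := by
  obtain ⟨p, p', hp, hp', hpe⟩ : ∃ p p' : ℝ, p ≤ 0 ∧ p' ≤ 0 ∧ lam.re = p - p' :=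
    ⟨min lam.re 0, min (-lam.re) 0, min_le_right _ _, min_le_right _ _, by
      rcases le_total lam.re 0 with h | h <;> simp [h]⟩
  obtain ⟨r, r', hr, hr', hre⟩ : ∃ p p' : ℝ, p ≤ 0 ∧ p' ≤ 0 ∧ lam.im = p - p' :=
    ⟨min lam.im 0, min (-lam.im) 0, min_le_right _ _, min_le_right _ _, by
      rcases le_total lam.im 0 with h | h <;> simp [h]⟩
  have hl : lam = p - p' + (r - r') * Complex.I := by
    apply Complex.ext <;> simp [hpe, hre]
  let M : Matrix (Fin 4) (Fin 4) ℝ := !![p, r, p', r'; r', p, r, p'; p', r', p, r; r, p', r', p]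
  let u : Fin 4 → ℂ := ![1, Complex.I, -1, -Complex.I]
  let y : Fin 4 → ℂ := ![1, -Complex.I, -1, Complex.I]
  have hM : ∀ i j, M i j ≤ 0 := by
    intro i j
    fin_cases i <;> fin_cases j <;> simp [M, *]
  have hu : (M.map Complex.ofReal) *ᵥ u = lam • u := by
    rw [hl]
    ext i
    fin_cases i <;> simp [M, u, Matrix.mulVec, dotProduct, Fin.sum_univ_four] <;>
      ring_nf <;> simp [Complex.I_sq] <;> ring
  have hy : y ᵥ* (M.map Complex.ofReal) = lam • y := by
    rw [hl]
    ext i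
    fin_cases i <;> simp [M, y, Matrix.vecMul, dotProduct, Fin.sum_univ_four] <;>
      ring_nf <;> simp [Complex.I_sq] <;> ring
  have hyu : y ⬝ᵥ u = 4 := by
    simp [y, u, dotProduct, Fin.sum_univ_four]; norm_num
  refine ⟨fromBlocks 0 M M 0, Sum.elim u u, Sum.elim y y, ?_, ?_, ?_, ?_, ?_⟩
  · rintro (i | i) (j | j) <;> simp [hM]
  · rintro (i | i) <;> simp
  · rw [Matrix.fromBlocks_map, Matrix.fromBlocks_mulVec]
    ext (i | i) <;> simp [hu, Matrix.map_zero]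
  · rw [Matrix.fromBlocks_map, Matrix.vecMul_fromBlocks]
    ext (i | i) <;> simp [hy, Matrix.map_zero]
  · rw [sumElim_dotProduct_sumElim, hyu]; norm_num

lemma single (lam : ℂ) (k : ℕ) : ∃ B : Matrix (Fin (k + 1) × (Fin 4 ⊕ Fin 4))
      (Fin (k + 1) × (Fin 4 ⊕ Fin 4)) ℝ,
    (∀ i j, B i j ≤ 0) ∧ (∀ i, B i i = 0) ∧ 1 ≤ q (B.map Complex.ofReal - lam • 1) k := by
  obtain ⟨C, u, y, hC, hC0, hu, hy, hyu⟩ := seed lam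
  let T : Matrix (Fin (k + 1)) (Fin (k + 1)) ℝ := Matrix.of fun i j => if (i : ℕ) + 1 = j then -1 else 0
  let B : Matrix (Fin (k + 1) × (Fin 4 ⊕ Fin 4)) (Fin (k + 1) × (Fin 4 ⊕ Fin 4)) ℝ :=
    Matrix.of fun a b => (if a.1 = b.1 then C a.2 b.2 else 0) + (if a.2 = b.2 then T a.1 b.1 else 0)
  set N := B.map Complex.ofReal - lam • (1 : Matrix _ _ ℂ) with hN
  have hu' : ∀ g, ∑ h, (C g h : ℂ) * u h = lam * u g := fun g => by
    simpa [Matrix.mulVec, dotProduct] using congrFun hu g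
  have hy' : ∀ h, ∑ g, y g * (C g h : ℂ) = lam * y h := fun g => by
    simpa [Matrix.vecMul, dotProduct] using congrFun hy g
  have key : ∀ e : Fin (k + 1) → ℂ, N *ᵥ (fun a => e a.1 * u a.2) =
      fun a => ((T.map Complex.ofReal) *ᵥ e) a.1 * u a.2 := by
    intro e
    ext ⟨i, g⟩
    rw [hN, Matrix.sub_mulVec, Matrix.smul_mulVec, Matrix.one_mulVec]
    simp only [Pi.sub_apply, Pi.smul_apply, smul_eq_mul, Matrix.mulVec, dotProduct,
      Fintype.sum_prod_type, B, Matrix.map_apply, Matrix.of_apply, Complex.ofReal_add, add_mul,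
      Finset.sum_add_distrib]
    have h1 : ∑ j, ∑ h, ((if i = j then C g h else 0 : ℝ) : ℂ) * (e j * u h) = lam * (e i * u g) := by
      rw [Finset.sum_eq_single i]
      · simp only [if_true]
        calc _ = e i * ∑ h, (C g h : ℂ) * u h := by
              rw [Finset.mul_sum]; exact Finset.sum_congr rfl fun _ _ => by ring
          _ = _ := by rw [hu']; ring
      · intro j _ hj; simp [Ne.symm hj]
      · simp
    have h2 : ∑ j, ∑ h, ((if g = h then T i j else 0 : ℝ) : ℂ) * (e j * u h) =
        (∑ j, (T i j : ℂ) * e j) * u g := by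
      rw [Finset.sum_mul]
      refine Finset.sum_congr rfl fun j _ => ?_
      rw [Finset.sum_eq_single g]
      · simp only [if_true]; ring
      · intro j _ hj; simp [Ne.symm hj]
      · simp
    rw [h1, h2]; ring
  have key' : ∀ e : Fin (k + 1) → ℂ, (fun a => e a.1 * y a.2) ᵥ* N =
      fun a => (e ᵥ* (T.map Complex.ofReal)) a.1 * y a.2 := by
    intro e
    ext ⟨i, g⟩
    rw [hN, Matrix.vecMul_sub, Matrix.vecMul_smul, Matrix.vecMul_one]
    simp only [Pi.sub_apply, Pi.smul_apply, smul_eq_mul, Matrix.vecMul, dotProduct,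
      Fintype.sum_prod_type, B, Matrix.map_apply, Matrix.of_apply, Complex.ofReal_add, mul_add,
      Finset.sum_add_distrib]
    have h1 : ∑ j, ∑ h, (e j * y h) * ((if j = i then C h g else 0 : ℝ) : ℂ) = lam * (e i * y g) := by
      rw [Finset.sum_eq_single i]
      · simp only [if_true]
        calc _ = e i * ∑ h, y h * (C h g : ℂ) := by
              rw [Finset.mul_sum]; exact Finset.sum_congr rfl fun _ _ => by ring
          _ = _ := by rw [hy']; ring
      · intro j _ hj; simp [hj]
      · simp
    have h2 : ∑ j, ∑ h, (e j * y h) * ((if h = g then T j i else 0 : ℝ) : ℂ) =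
        (∑ j, e j * (T j i : ℂ)) * y g := by
      rw [Finset.sum_mul]
      refine Finset.sum_congr rfl fun j _ => ?_
      rw [Finset.sum_eq_single g]
      · simp only [if_true]; ring
      · intro j _ hj; simp [hj]
      · simp
    rw [h1, h2]; ring
  let ev : ℕ → Fin (k + 1) → ℂ := fun m i => if (i : ℕ) + m = k then (-1) ^ m else 0
  let ew : ℕ → Fin (k + 1) → ℂ := fun m i => if (i : ℕ) = m then (-1) ^ m else 0
  have hTv : ∀ m, (T.map Complex.ofReal) *ᵥ ev m = ev (m + 1) := by
    intro m
    ext i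
    simp only [Matrix.mulVec, dotProduct, T, ev, Matrix.map_apply, Matrix.of_apply]
    by_cases h : (i : ℕ) + 1 < k + 1
    · rw [Finset.sum_eq_single ⟨i + 1, h⟩]
      · simp only [if_true, add_right_comm, ← add_assoc, pow_succ]
        split_ifs <;> simp
      · intro j _ hj
        rw [if_neg (fun hh => hj (Fin.ext hh.symm))]; simp
      · simp
    · rw [if_neg (by omega)]
      refine Finset.sum_eq_zero fun j _ => ?_
      rw [if_neg (by omega)]; simp
  have hTw : ∀ m, ew m ᵥ* (T.map Complex.ofReal) = ew (m + 1) := by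
    intro m
    ext i
    simp only [Matrix.vecMul, dotProduct, T, ew, Matrix.map_apply, Matrix.of_apply]
    by_cases h : m < k + 1
    · rw [Finset.sum_eq_single ⟨m, h⟩]
      · simp only [if_true, pow_succ, eq_comm (a := m + 1)]
        split_ifs <;> simp
      · intro j _ hj
        rw [if_neg (fun hh => hj (Fin.ext hh))]; simp
      · simp
    · rw [if_neg (by omega)]
      refine Finset.sum_eq_zero fun j _ => ?_
      rw [if_neg (by omega)]; simp
  have hNv : ∀ m, (N ^ m) *ᵥ (fun a => ev 0 a.1 * u a.2) = fun a => ev m a.1 * u a.2 := by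
    intro m
    induction m with
    | zero => simp
    | succ m ih => rw [pow_succ', ← Matrix.mulVec_mulVec, ih, key, hTv]
  have hNw : ∀ m, (fun a => ew 0 a.1 * y a.2) ᵥ* (N ^ m) = fun a => ew m a.1 * y a.2 := by
    intro m
    induction m with
    | zero => simp
    | succ m ih => rw [pow_succ, ← Matrix.vecMul_vecMul, ih, key', hTw]
  refine ⟨B, ?_, ?_, q_pos N k (fun a => ev 0 a.1 * u a.2) (fun a => ew 0 a.1 * y a.2) ?_ ?_ ?_⟩
  · rintro ⟨i, g⟩ ⟨j, h⟩
    simp only [B, T, Matrix.of_apply]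
    have := hC g h
    split_ifs <;> linarith
  · rintro ⟨i, g⟩
    simp [B, T, hC0]
  · rw [hNv]
    ext ⟨i, g⟩
    simp only [ev]
    rw [if_neg (by omega)]; simp
  · rw [hNw]
    ext ⟨i, g⟩
    simp only [ew]
    rw [if_neg (by omega)]; simp
  · rw [hNv]
    have : (fun a : Fin (k + 1) × (Fin 4 ⊕ Fin 4) => ew 0 a.1 * y a.2) ⬝ᵥ (fun a => ev k a.1 * u a.2)
        = (-1) ^ k * (y ⬝ᵥ u) := by
      simp only [dotProduct, Fintype.sum_prod_type, ew, ev]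
      rw [Finset.sum_eq_single 0]
      · rw [Finset.mul_sum]
        refine Finset.sum_congr rfl fun _ _ => ?_
        simp; ring
      · intro j _ hj
        have : (j : ℕ) ≠ 0 := fun h => hj (Fin.ext h)
        simp [this]
      · simp
    rw [this]
    exact mul_ne_zero (by simp) hyu

lemma rank_blocks {ι κ : Type} [Fintype ι] [DecidableEq ι] [Fintype κ] [DecidableEq κ]
    (A : Matrix ι ι ℂ) (D : Matrix κ κ ℂ) : (fromBlocks A 0 0 D).rank = A.rank + D.rank := by
  let e := LinearEquiv.sumArrowLequivProdArrow ι κ ℂ ℂ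
  have h : Submodule.map (e : (ι ⊕ κ → ℂ) →ₗ[ℂ] _) (LinearMap.range (fromBlocks A 0 0 D).mulVecLin)
      = (LinearMap.range A.mulVecLin).prod (LinearMap.range D.mulVecLin) := by
    ext ⟨x, y⟩
    constructor
    · rintro ⟨_, ⟨v, rfl⟩, hv⟩
      simp only [Matrix.mulVecLin_apply, Matrix.fromBlocks_mulVec] at hv
      rw [← hv]
      refine ⟨⟨v ∘ Sum.inl, ?_⟩, ⟨v ∘ Sum.inr, ?_⟩⟩ <;> ext i <;> simp [e]
    · rintro ⟨⟨a, ha⟩, ⟨b, hb⟩⟩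
      refine ⟨_, ⟨Sum.elim a b, rfl⟩, ?_⟩
      simp only [Matrix.mulVecLin_apply] at ha hb
      subst ha hb
      ext i <;> simp [e, Matrix.fromBlocks_mulVec]
  let g : ↥((LinearMap.range A.mulVecLin).prod (LinearMap.range D.mulVecLin)) ≃ₗ[ℂ]
      ↥(LinearMap.range A.mulVecLin) × ↥(LinearMap.range D.mulVecLin) :=
    { toFun := fun x => (⟨x.1.1, x.2.1⟩, ⟨x.1.2, x.2.2⟩)
      invFun := fun x => ⟨(x.1.1, x.2.1), ⟨x.1.2, x.2.2⟩⟩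
      map_add' := fun _ _ => rfl
      map_smul' := fun _ _ => rfl
      left_inv := fun _ => rfl
      right_inv := fun _ => rfl }
  unfold Matrix.rank
  rw [← LinearEquiv.finrank_map_eq e, h, g.finrank_eq, Module.finrank_prod]

lemma q_blocks {ι κ : Type} [Fintype ι] [DecidableEq ι] [Fintype κ] [DecidableEq κ]
    (A : Matrix ι ι ℂ) (D : Matrix κ κ ℂ) (k : ℕ) : q (fromBlocks A 0 0 D) k = q A k + q D k := by
  simp only [q, Matrix.fromBlocks_diagonal_pow, rank_blocks]
  push_cast; ring

lemma main (S : Multiset (ℂ × ℕ)) (hS : ∀ p ∈ S, 1 ≤ p.2) :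
    ∃ (ι : Type) (_ : Fintype ι) (_ : DecidableEq ι) (B : Matrix ι ι ℝ),
      (∀ i j, B i j ≤ 0) ∧ (∀ i, B i i = 0) ∧
      ∀ (lam : ℂ) (k : ℕ), (S.count (lam, k + 1) : ℤ) ≤ q (B.map Complex.ofReal - lam • 1) k := by
  induction S using Multiset.induction_on with
  | empty => exact ⟨Empty, inferInstance, inferInstance, 0, by simp, by simp, by simp [q_nonneg]⟩
  | cons p S ih =>
    obtain ⟨ι, _, _, B, h1, h2, h3⟩ := ih fun p hp => hS p (Multiset.mem_cons_of_mem hp)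
    obtain ⟨mu, d⟩ := p
    obtain ⟨n, rfl⟩ : ∃ n, d = n + 1 := ⟨d - 1, by have := hS _ (Multiset.mem_cons_self _ S); simp at this; omega⟩
    obtain ⟨B', h1', h2', h3'⟩ := single mu n
    refine ⟨ι ⊕ _, inferInstance, inferInstance, fromBlocks B 0 0 B', ?_, ?_, ?_⟩
    · rintro (i | i) (j | j) <;> simp [h1, h1']
    · rintro (i | i) <;> simp [h2, h2']
    · intro lam k
      have e : (fromBlocks B 0 0 B').map Complex.ofReal - lam • (1 : Matrix _ _ ℂ) =
        fromBlocks (B.map Complex.ofReal - lam • 1) 0 0 (B'.map Complex.ofReal - lam • 1) := by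
        rw [← Matrix.fromBlocks_one, Matrix.fromBlocks_map, Matrix.fromBlocks_smul]
        ext (i | i) (j | j) <;> simp
      rw [e, q_blocks, Multiset.count_cons]
      have a := h3 lam k
      have b := q_nonneg (B'.map Complex.ofReal - lam • 1) k
      split_ifs with h
      · simp only [Prod.mk.injEq, add_left_inj] at h
        obtain ⟨rfl, rfl⟩ := h
        push_cast; omega
      · push_cast; omega

end CompJordan

theorem exists_purely_competitive_with_jordan_blocks
    (S : Multiset (ℂ × ℕ)) (hS : ∀ p ∈ S, 1 ≤ p.2) :
    ∃ (m : ℕ) (B : Matrix (Fin m) (Fin m) ℝ),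
      (∀ i j : Fin m, i ≠ j → B i j ≤ 0) ∧
      (∀ i : Fin m, B i i = 0) ∧
      ∀ (lam : ℂ) (d : ℕ), 1 ≤ d →
        (let N : Matrix (Fin m) (Fin m) ℂ :=
          B.map (Complex.ofReal) - lam • (1 : Matrix (Fin m) (Fin m) ℂ)
        (S.count (lam, d) : ℤ) ≤
          ((N ^ (d - 1)).rank : ℤ) + ((N ^ (d + 1)).rank : ℤ)
            - 2 * ((N ^ d).rank : ℤ)) := by
  obtain ⟨ι, _, _, B, h1, h2, h3⟩ := CompJordan.main S hS
  let e := Fintype.equivFin ι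
  refine ⟨Fintype.card ι, Matrix.reindex e e B, fun i j _ => h1 _ _, fun i => h2 _, ?_⟩
  intro lam d hd
  obtain ⟨k, rfl⟩ : ∃ k, d = k + 1 := ⟨d - 1, by omega⟩
  intro N
  have hN : N = Matrix.reindexAlgEquiv ℂ ℂ e (B.map Complex.ofReal - lam • 1) := by
    rw [map_sub, map_smul, map_one]
    rfl
  have hr : ∀ m, (N ^ m).rank = ((B.map Complex.ofReal - lam • (1 : Matrix ι ι ℂ)) ^ m).rank := by
    intro m
    rw [hN, ← map_pow, Matrix.coe_reindexAlgEquiv, Matrix.rank_reindex]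
  rw [hr, hr, hr]
  exact h3 lam k
end
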